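/- arXiv:2201.01345 — 4 statements merged into one kernel-verified Lean document; each statement's English description precedes it below -/
import Mathlib

section
/- (Corollary 2, vector version of the Real Nullstellensatz) Let R = ℝ[x₁, …, x_d], considered with the trivial involution. For any g₁, …, g_m, f ∈ R^n the following are equivalent: (1) for every a ∈ ℝ^d and every v ∈ ℝ^n such that Σ_{j=1}^n g_{i,j}(a) v_j = 0 for all i = 1, …, m, one has Σ_{j=1}^n f_j(a) v_j = 0; (2) f belongs to every real submodule of R^n that contains g₁, …, g_m. -/
open MvPolynomial

/-- A submodule `N` of `R^n` (trivial involution on the commutative ring `R`) is *real* if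
whenever `f 0, …, f (m-1) ∈ R^n` satisfy `∑ i, f i j • f i ∈ N` for every coordinate `j`,
each `f i` lies in `N`. -/
def Submodule.IsRealSubmodule {R : Type*} [CommRing R] {n : ℕ}
    (N : Submodule R (Fin n → R)) : Prop :=
  ∀ (m : ℕ) (f : Fin m → (Fin n → R)),
    (∀ j, (∑ i, f i j • f i) ∈ N) → ∀ i, f i ∈ N

open MvPolynomial
namespace Polynomial.VRN
open SignType

/-- Intermediate value property for polynomials. -/
def PIVT (L : Type*) [Field L] [LinearOrder L] [IsStrictOrderedRing L] : Prop :=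
  ∀ (P : L[X]) (a b : L), a < b → P.eval a * P.eval b < 0 → ∃ c, a < c ∧ c < b ∧ P.eval c = 0

section A
variable {L : Type*} [Field L] [LinearOrder L] [IsStrictOrderedRing L]

lemma sign_eq_of_mul_pos {x y : L} (h : 0 < x * y) : sign x = sign y := by
  rcases mul_pos_iff.1 h with ⟨a, b⟩ | ⟨a, b⟩
  · rw [sign_pos a, sign_pos b]
  · rw [sign_neg a, sign_neg b]

lemma mul_neg_of_sign_ne {x y : L} (hx : x ≠ 0) (hy : y ≠ 0) (h : sign x ≠ sign y) : x * y < 0 := by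
  by_contra h'
  exact h (sign_eq_of_mul_pos (lt_of_le_of_ne (not_lt.1 h') (mul_ne_zero hx hy).symm))

lemma same_sign (hL : PIVT L) (P : L[X]) {a b : L} (hab : a < b) (ha : P.eval a ≠ 0)
    (hb : P.eval b ≠ 0) (h : ∀ c, a < c → c < b → P.eval c ≠ 0) :
    sign (P.eval a) = sign (P.eval b) := by
  by_contra h'
  obtain ⟨c, h1, h2, h3⟩ := hL P a b hab (mul_neg_of_sign_ne ha hb h')
  exact h c h1 h2 h3

lemma rolle_adj (hL : PIVT L) (P : L[X]) (hP : P ≠ 0) {a b : L} (hab : a < b) (ha : P.eval a = 0)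
    (hb : P.eval b = 0) (hno : ∀ c, a < c → c < b → P.eval c ≠ 0) :
    ∃ c, a < c ∧ c < b ∧ (derivative P).eval c = 0 := by
  obtain ⟨A, hA, hA'⟩ := exists_eq_pow_rootMultiplicity_mul_and_not_dvd P hP a
  have hA0 : A ≠ 0 := by rintro rfl; simp at hA'
  have hbA : A.eval b = 0 := by
    rw [hA] at hb
    simp only [eval_mul, eval_pow, eval_sub, eval_X, eval_C, mul_eq_zero] at hb
    rcases hb with h | h
    · exact absurd ((pow_eq_zero_iff (rootMultiplicity_pos hP |>.2 ha).ne').1 h) (by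
        intro h; linarith)
    · exact h
  obtain ⟨B, hB, hB'⟩ := exists_eq_pow_rootMultiplicity_mul_and_not_dvd A hA0 b
  have hm : 0 < rootMultiplicity a P := rootMultiplicity_pos hP |>.2 ha
  have hn : 0 < rootMultiplicity b A := rootMultiplicity_pos hA0 |>.2 hbA
  generalize rootMultiplicity a P = m at *
  generalize rootMultiplicity b A = n at *
  obtain ⟨m, rfl⟩ := Nat.exists_eq_succ_of_ne_zero hm.ne'
  obtain ⟨n, rfl⟩ := Nat.exists_eq_succ_of_ne_zero hn.ne'
  have hPf : P = (X - C a)^(m+1) * ((X - C b)^(n+1) * B) := by rw [hA]; congr 1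
  have hBb : B.eval b ≠ 0 := fun h => hB' (dvd_iff_isRoot.2 h)
  have hBa : B.eval a ≠ 0 := by
    intro h
    apply hA'
    rw [hB]
    exact Dvd.dvd.mul_left (dvd_iff_isRoot.2 h) _
  have hBs := same_sign hL B hab hBa hBb (by
    intro c h1 h2 h3
    apply hno c h1 h2
    rw [hPf]; simp [h3])
  set H : L[X] := C ((m:L)+1) * (X - C b) * B + C ((n:L)+1) * (X - C a) * B
    + (X - C a) * (X - C b) * derivative B with hH
  have hd : derivative P = (X - C a)^m * (X - C b)^n * H := by
    rw [hPf, hH]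
    simp only [derivative_mul, derivative_pow, derivative_sub, derivative_X, derivative_C]
    push_cast
    simp only [map_add, map_natCast, map_one, Nat.add_sub_cancel]
    ring
  have hneg : H.eval a * H.eval b < 0 := by
    have e : H.eval a * H.eval b =
       - (((m:L)+1) * ((n:L)+1) * (b - a)^2 * (B.eval a * B.eval b)) := by
      simp [hH]; ring
    rw [e]
    have : 0 < B.eval a * B.eval b := by
      by_contra h
      have h := lt_of_le_of_ne (not_lt.1 h) (mul_ne_zero hBa hBb)
      rcases mul_neg_iff.1 h with ⟨h1, h2⟩ | ⟨h1, h2⟩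
      · rw [sign_pos h1, sign_neg h2] at hBs; exact absurd hBs (by decide)
      · rw [sign_pos h2, sign_neg h1] at hBs; exact absurd hBs (by decide)
    have h2 : 0 < b - a := by linarith
    have h3 : (0:L) < (m:L)+1 := by positivity
    have h4 : (0:L) < (n:L)+1 := by positivity
    have := mul_pos (mul_pos (mul_pos h3 h4) (pow_pos h2 2)) this
    linarith
  obtain ⟨c, h1, h2, h3⟩ := hL H a b hab hneg
  exact ⟨c, h1, h2, by rw [hd]; simp [h3]⟩

lemma rolle (hL : PIVT L) (P : L[X]) (hP : P ≠ 0) {a b : L} (hab : a < b) (ha : P.eval a = 0)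
    (hb : P.eval b = 0) :
    ∃ c, a < c ∧ c < b ∧ (derivative P).eval c = 0 := by
  classical
  let S := P.roots.toFinset.filter (fun c => a < c)
  have hS : ∀ c, c ∈ S ↔ P.eval c = 0 ∧ a < c := by
    intro c; simp [S, hP, IsRoot]
  have hne : S.Nonempty := ⟨b, (hS b).2 ⟨hb, hab⟩⟩
  obtain ⟨h1, h2⟩ := (hS _).1 (S.min'_mem hne)
  obtain ⟨c, h3, h4, h5⟩ := rolle_adj hL P hP h2 ha h1 (by
    intro c hc1 hc2 hc3
    exact absurd (S.min'_le c ((hS c).2 ⟨hc3, hc1⟩)) (not_le.2 hc2))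
  exact ⟨c, h3, h4.trans_le (S.min'_le b ((hS b).2 ⟨hb, hab⟩)), h5⟩

lemma mvt (hL : PIVT L) (P : L[X]) {a b : L} (hab : a < b) :
    ∃ c, a < c ∧ c < b ∧ P.eval b - P.eval a = (derivative P).eval c * (b - a) := by
  have hba : b - a ≠ 0 := by intro h; linarith
  set s := (P.eval b - P.eval a) / (b - a) with hs
  have hs' : s * (b - a) = P.eval b - P.eval a := div_mul_cancel₀ _ hba
  set Q := P - C (P.eval a) - C s * (X - C a) with hQ
  have hQa : Q.eval a = 0 := by simp [hQ]
  have hQb : Q.eval b = 0 := by simp [hQ, hs']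
  have hdQ : derivative Q = derivative P - C s := by simp [hQ]
  by_cases h0 : Q = 0
  · obtain ⟨c, h1, h2⟩ := exists_between hab
    refine ⟨c, h1, h2, ?_⟩
    rw [h0, derivative_zero] at hdQ
    rw [sub_eq_zero.1 hdQ.symm]
    simp [hs']
  · obtain ⟨c, h1, h2, h3⟩ := rolle hL Q h0 hab hQa hQb
    refine ⟨c, h1, h2, ?_⟩
    rw [hdQ] at h3
    simp at h3
    rw [sub_eq_zero.1 h3, hs']

lemma mono_of_deriv (hL : PIVT L) (P : L[X]) {a b : L} (hab : a ≤ b)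
    (h : ∀ c, a ≤ c → c ≤ b → 0 ≤ (derivative P).eval c) : P.eval a ≤ P.eval b := by
  rcases hab.eq_or_lt with rfl | hab
  · exact le_rfl
  · obtain ⟨c, h1, h2, h3⟩ := mvt hL P hab
    have := mul_nonneg (h c h1.le h2.le) (sub_nonneg.2 hab.le)
    linarith

lemma anti_of_deriv (hL : PIVT L) (P : L[X]) {a b : L} (hab : a ≤ b)
    (h : ∀ c, a ≤ c → c ≤ b → (derivative P).eval c ≤ 0) : P.eval b ≤ P.eval a := by
  have := mono_of_deriv hL (-P) hab (by intro c h1 h2; simpa using h c h1 h2)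
  simpa using this

lemma top_pos (n : ℕ) : ∀ (P : L[X]), P.natDegree = n → 0 < P.leadingCoeff →
    ∃ ε B : L, 0 < ε ∧ ∀ x, B ≤ x → ε ≤ P.eval x := by
  induction n with
  | zero =>
    intro P h0 hP
    refine ⟨P.leadingCoeff, 0, hP, fun x _ => ?_⟩
    rw [eq_C_of_natDegree_eq_zero h0]; simp
  | succ n ih =>
    intro P h0 hP
    have hd : P.divX.natDegree = n := by rw [natDegree_divX_eq_natDegree_tsub_one, h0]; rfl
    obtain ⟨ε, B, hε, hB⟩ := ih P.divX hd (by
      rw [leadingCoeff, hd, coeff_divX, ← h0]; exact hP)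
    refine ⟨1, max B (max 0 ((1 - P.coeff 0)/ε)), one_pos, fun x hx => ?_⟩
    have h1 : B ≤ x := (le_max_left _ _).trans hx
    have h2 : 0 ≤ x := (le_max_left _ _).trans ((le_max_right _ _).trans hx)
    have h3 : (1 - P.coeff 0)/ε ≤ x := (le_max_right _ _).trans ((le_max_right _ _).trans hx)
    rw [div_le_iff₀ hε] at h3
    have h4 : P.eval x = P.divX.eval x * x + P.coeff 0 := by
      conv_lhs => rw [← divX_mul_X_add P]
      simp
    rw [h4]
    have := mul_le_mul_of_nonneg_right (hB x h1) h2
    linarith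

lemma top_sign (P : L[X]) : ∃ B : L, ∀ x, B ≤ x → sign (P.eval x) = sign P.leadingCoeff := by
  rcases lt_trichotomy P.leadingCoeff 0 with h | h | h
  · obtain ⟨ε, B, hε, hB⟩ := top_pos _ (-P) rfl (by simpa using h)
    refine ⟨B, fun x hx => ?_⟩
    have := hB x hx
    rw [eval_neg] at this
    rw [sign_neg h, sign_neg (by linarith)]
  · exact ⟨0, fun x _ => by rw [leadingCoeff_eq_zero.1 h]; simp⟩
  · obtain ⟨ε, B, hε, hB⟩ := top_pos _ P rfl h
    exact ⟨B, fun x hx => by rw [sign_pos h, sign_pos (hε.trans_le (hB x hx))]⟩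

lemma bot_sign (P : L[X]) : ∃ B : L, ∀ x, x ≤ B →
    sign (P.eval x) = sign ((-1)^P.natDegree * P.leadingCoeff) := by
  obtain ⟨B, hB⟩ := top_sign (P.comp (-X))
  refine ⟨-B, fun x hx => ?_⟩
  have := hB (-x) (by linarith)
  rw [eval_comp] at this
  simp only [eval_neg, eval_X, neg_neg] at this
  rw [this]
  rw [leadingCoeff_comp (by simp)]
  simp [mul_comm]
end A
end Polynomial.VRN

open MvPolynomial
namespace Polynomial.VRN
open SignType

section B
variable {R : Type*} [CommRing R]

/-- A choice of pseudo-remainder. -/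
lemma prem_exists (P Q : R[X]) : ∃ T : R[X], (Q = 0 → T = 0) ∧
    (Q ≠ 0 → T.degree < Q.degree) ∧
    (P.degree < Q.degree → T = P) ∧
    (Q ≠ 0 → ∃ (e : ℕ) (S : R[X]), C (Q.leadingCoeff ^ e) * P = S * Q + T) := by
  by_cases hQ : Q = 0
  · exact ⟨0, by simp, by simp [hQ], by simp [hQ], by simp [hQ]⟩
  by_cases hd : P.degree < Q.degree
  · exact ⟨P, fun h => absurd h hQ, fun _ => hd, fun _ => rfl, fun _ => ⟨0, 0, by simp⟩⟩
  have key : ∀ (n : ℕ) (P : R[X]), P.natDegree < n → ∃ (T : R[X]) (e : ℕ) (S : R[X]),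
      T.degree < Q.degree ∧ C (Q.leadingCoeff ^ e) * P = S * Q + T := by
    intro n
    induction n with
    | zero => intro P h; omega
    | succ n ih =>
      intro P hP
      by_cases hd : P.degree < Q.degree
      · exact ⟨P, 0, 0, hd, by simp⟩
      have hd' := not_lt.1 hd
      have hP0 : P ≠ 0 := by
        rintro rfl
        simp at hd'
        exact hQ hd'
      have hnd : Q.natDegree ≤ P.natDegree := natDegree_le_natDegree hd'
      set M : R[X] := C P.leadingCoeff * X ^ (P.natDegree - Q.natDegree) with hM
      set P1 := C Q.leadingCoeff * P - M * Q with hP1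
      have hlt : P1.degree < P.degree := by
        by_cases h0 : P1 = 0
        · rw [h0, degree_zero]; exact bot_lt_iff_ne_bot.2 (by simpa using hP0)
        rw [degree_eq_natDegree hP0, degree_lt_iff_coeff_zero]
        intro m hm
        rw [hP1, hM, coeff_sub, coeff_C_mul, mul_assoc, coeff_C_mul, coeff_X_pow_mul']
        rw [if_pos (by omega)]
        rcases hm.eq_or_lt with rfl | hm
        · rw [Nat.sub_sub_self hnd]
          simp only [leadingCoeff]; ring
        · rw [coeff_eq_zero_of_natDegree_lt hm, coeff_eq_zero_of_natDegree_lt (p := Q) (by omega)]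
          simp
      by_cases h0 : P1 = 0
      · refine ⟨0, 1, M, ?_, ?_⟩
        · rw [degree_zero]; exact bot_lt_iff_ne_bot.2 (by simpa using hQ)
        · rw [pow_one, add_zero]; exact sub_eq_zero.1 h0
      · obtain ⟨T, e, S, h1, h2⟩ := ih P1 (by
          have := natDegree_lt_natDegree h0 hlt
          omega)
        refine ⟨T, e + 1, S + C (Q.leadingCoeff ^ e) * M, h1, ?_⟩
        rw [hP1] at h2
        rw [pow_succ, C_mul]
        linear_combination h2
  obtain ⟨T, e, S, h1, h2⟩ := key _ P (Nat.lt_succ_self _)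
  exact ⟨T, fun h => absurd h hQ, fun _ => h1, fun h => absurd h hd, fun _ => ⟨e, S, h2⟩⟩

/-- pseudo-remainder -/
noncomputable def prem (P Q : R[X]) : R[X] := (prem_exists P Q).choose

lemma prem_degree (P : R[X]) {Q : R[X]} (h : Q ≠ 0) : (prem P Q).degree < Q.degree :=
  (prem_exists P Q).choose_spec.2.1 h
lemma prem_zero (P : R[X]) : prem P 0 = 0 := (prem_exists P 0).choose_spec.1 rfl
lemma prem_of_lt {P Q : R[X]} (h : P.degree < Q.degree) : prem P Q = P :=
  (prem_exists P Q).choose_spec.2.2.1 h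
lemma prem_spec (P : R[X]) {Q : R[X]} (h : Q ≠ 0) : ∃ (e : ℕ) (S : R[X]),
    C (Q.leadingCoeff ^ e) * P = S * Q + prem P Q :=
  (prem_exists P Q).choose_spec.2.2.2 h

/-- closed family -/
structure Closed (F : Finset R[X]) : Prop where
  der : ∀ P ∈ F, derivative P ∈ F
  era : ∀ P ∈ F, P.eraseLead ∈ F
  rem : ∀ P ∈ F, ∀ Q ∈ F, Q ≠ 0 → prem P Q ∈ F

open Classical in
/-- one step of closure -/
noncomputable def stp (F : Finset R[X]) : Finset R[X] :=
  F ∪ F.image (fun P => derivative P) ∪ F.image (fun P => P.eraseLead) ∪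
    (F ×ˢ F).image (fun p => prem p.1 p.2)

lemma mem_stp {F : Finset R[X]} {P : R[X]} : P ∈ stp F ↔ P ∈ F ∨ (∃ Q ∈ F, derivative Q = P) ∨
    (∃ Q ∈ F, Q.eraseLead = P) ∨ ∃ S ∈ F, ∃ Q ∈ F, prem S Q = P := by
  classical
  simp only [stp, Finset.mem_union, Finset.mem_image, Finset.mem_product, Prod.exists, or_assoc]
  constructor
  · rintro (h | h | h | ⟨a, b, ⟨h1, h2⟩, h3⟩)
    · exact .inl h
    · exact .inr (.inl h)
    · exact .inr (.inr (.inl h))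
    · exact .inr (.inr (.inr ⟨a, h1, b, h2, h3⟩))
  · rintro (h | h | h | ⟨a, h1, b, h2, h3⟩)
    · exact .inl h
    · exact .inr (.inl h)
    · exact .inr (.inr (.inl h))
    · exact .inr (.inr (.inr ⟨a, b, ⟨h1, h2⟩, h3⟩))

lemma deg_aux {P Q : R[X]} {n : ℕ} (h1 : P.degree < Q.degree) (h2 : Q.degree < (n : WithBot ℕ)) :
    P.degree < ((n - 1 : ℕ) : WithBot ℕ) := by
  by_cases hP : P = 0
  · rw [hP, degree_zero]; exact WithBot.bot_lt_coe _
  have hQ : Q ≠ 0 := by rintro rfl; simp at h1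
  rw [degree_eq_natDegree hP, degree_eq_natDegree hQ] at h1
  rw [degree_eq_natDegree hQ] at h2
  rw [degree_eq_natDegree hP]
  norm_cast at *
  omega

lemma newdeg {F' F : Finset R[X]} {n : ℕ} (h0 : 0 ∈ F) (hsub : stp F' ⊆ F)
    (hb : ∀ P ∈ F, P ∉ F' → P.degree < (n : WithBot ℕ)) :
    ∀ P ∈ stp F, P ∉ F → P.degree < ((n - 1 : ℕ) : WithBot ℕ) := by
  intro P hP hnew
  rcases mem_stp.1 hP with h | ⟨Q, hQ, rfl⟩ | ⟨Q, hQ, rfl⟩ | ⟨S, hS, Q, hQ, rfl⟩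
  · exact absurd h hnew
  · have hQ0 : Q ≠ 0 := by rintro rfl; exact hnew (by simpa using h0)
    have hQ' : Q ∉ F' := fun h => hnew (hsub (mem_stp.2 (.inr (.inl ⟨Q, h, rfl⟩))))
    exact deg_aux (degree_derivative_lt hQ0) (hb Q hQ hQ')
  · have hQ0 : Q ≠ 0 := by rintro rfl; exact hnew (by simpa using h0)
    have hQ' : Q ∉ F' := fun h => hnew (hsub (mem_stp.2 (.inr (.inr (.inl ⟨Q, h, rfl⟩)))))
    exact deg_aux (degree_eraseLead_lt hQ0) (hb Q hQ hQ')
  · have hQ0 : Q ≠ 0 := by rintro rfl; exact hnew (by rw [prem_zero]; exact h0)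
    have hlt : Q.degree ≤ S.degree := by
      by_contra h
      rw [prem_of_lt (not_le.1 h)] at hnew; exact hnew hS
    by_cases hQ' : Q ∈ F'
    · have hS' : S ∉ F' := fun h =>
        hnew (hsub (mem_stp.2 (.inr (.inr (.inr ⟨S, h, Q, hQ', rfl⟩)))))
      exact deg_aux (prem_degree S hQ0) (hlt.trans_lt (hb S hS hS'))
    · exact deg_aux (prem_degree S hQ0) (hb Q hQ hQ')

lemma closure_aux (n : ℕ) : ∀ {F' F : Finset R[X]} (_ : 0 ∈ F) (_ : stp F' ⊆ F)
    (_ : ∀ P ∈ F, P ∉ F' → P.degree < (n : WithBot ℕ)), ∃ G, F ⊆ G ∧ stp G ⊆ G := by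
  induction n with
  | zero =>
    intro F' F h0 hsub hb
    refine ⟨F, subset_rfl, fun P hP => ?_⟩
    by_contra hnew
    have := newdeg h0 hsub hb P hP hnew
    have : P = 0 := by
      by_contra hP0
      rw [degree_eq_natDegree hP0] at this
      norm_cast at this
    exact hnew (this ▸ h0)
  | succ n ih =>
    intro F' F h0 hsub hb
    have hF : F ⊆ stp F := fun P hP => mem_stp.2 (.inl hP)
    obtain ⟨G, h1, h2⟩ := ih (F' := F) (F := stp F) (hF h0) subset_rfl (newdeg h0 hsub hb)
    exact ⟨G, hF.trans h1, h2⟩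

lemma closure_exists (F0 : Finset R[X]) : ∃ F : Finset R[X], F0 ⊆ F ∧ Closed F := by
  classical
  obtain ⟨G, h1, h2⟩ := closure_aux ((insert 0 F0).sup natDegree + 1) (F' := ∅)
    (F := insert 0 F0) (by simp) (by
      intro P hP
      rcases mem_stp.1 hP with h | ⟨Q, hQ, rfl⟩ | ⟨Q, hQ, rfl⟩ | ⟨S, hS, Q, hQ, rfl⟩ <;>
      simp_all) (by
      intro P hP _
      have : P.natDegree ≤ (insert 0 F0).sup natDegree := Finset.le_sup (f := natDegree) hP
      refine degree_le_natDegree.trans_lt ?_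
      norm_cast; omega)
  refine ⟨G, (Finset.subset_insert _ _).trans h1, ⟨?_, ?_, ?_⟩⟩
  · exact fun P hP => h2 (mem_stp.2 (.inr (.inl ⟨P, hP, rfl⟩)))
  · exact fun P hP => h2 (mem_stp.2 (.inr (.inr (.inl ⟨P, hP, rfl⟩))))
  · exact fun P hP Q hQ _ => h2 (mem_stp.2 (.inr (.inr (.inr ⟨P, hP, Q, hQ, rfl⟩))))
end B
end Polynomial.VRN

open MvPolynomial
namespace Polynomial.VRN
open SignType

section M
set_option linter.unusedSectionVars false
variable {R : Type*} [CommRing R]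
variable {L₁ : Type*} [Field L₁] [LinearOrder L₁] [IsStrictOrderedRing L₁]
variable {L₂ : Type*} [Field L₂] [LinearOrder L₂] [IsStrictOrderedRing L₂]

/-- closed family with matching signs of leading coefficients -/
structure Good (φ₁ : R →+* L₁) (φ₂ : R →+* L₂) (F : Finset R[X]) : Prop where
  cl : Closed F
  sg : ∀ P ∈ F, sign (φ₁ P.leadingCoeff) = sign (φ₂ P.leadingCoeff)

/-- same type -/
def Ty (φ₁ : R →+* L₁) (φ₂ : R →+* L₂) (F : Finset R[X]) (y₁ : L₁) (y₂ : L₂) : Prop :=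
  ∀ P ∈ F, sign ((P.map φ₁).eval y₁) = sign ((P.map φ₂).eval y₂)

/-- root of a member of level at most `k` -/
def Rt (φ₁ : R →+* L₁) (F : Finset R[X]) (k : ℕ) (y : L₁) : Prop :=
  ∃ Q ∈ F, Q.natDegree ≤ k ∧ Q.map φ₁ ≠ 0 ∧ (Q.map φ₁).eval y = 0

variable {φ₁ : R →+* L₁} {φ₂ : R →+* L₂} {F : Finset R[X]}

lemma Good.symm (h : Good φ₁ φ₂ F) : Good φ₂ φ₁ F := ⟨h.cl, fun P hP => (h.sg P hP).symm⟩
lemma Ty.symm {y₁ : L₁} {y₂ : L₂} (h : Ty φ₁ φ₂ F y₁ y₂) : Ty φ₂ φ₁ F y₂ y₁ :=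
  fun P hP => (h P hP).symm

lemma sign_zero_iff {x : L₁} {y : L₂} (h : sign x = sign y) : x = 0 ↔ y = 0 := by
  rw [← sign_eq_zero_iff, h, sign_eq_zero_iff]

lemma normalize (h : Good φ₁ φ₂ F) : ∀ (n : ℕ) (P : R[X]), P.support.card ≤ n → P ∈ F →
    P.map φ₁ ≠ 0 →
    ∃ Q ∈ F, Q.natDegree ≤ P.natDegree ∧ φ₁ Q.leadingCoeff ≠ 0 ∧ φ₂ Q.leadingCoeff ≠ 0 ∧
      Q.map φ₁ = P.map φ₁ ∧ Q.map φ₂ = P.map φ₂ := by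
  intro n
  induction n with
  | zero =>
    intro P hn hP h0
    have : P = 0 := by simpa using hn
    simp [this] at h0
  | succ n ih =>
    intro P hn hP h0
    have hz := sign_zero_iff (h.sg P hP)
    by_cases hl : φ₁ P.leadingCoeff = 0
    · have hP0 : P ≠ 0 := by rintro rfl; simp at h0
      have e1 : P.eraseLead.map φ₁ = P.map φ₁ := by
        conv_rhs => rw [← eraseLead_add_monomial_natDegree_leadingCoeff P]
        rw [Polynomial.map_add, map_monomial, hl, monomial_zero_right, add_zero]
      have e2 : P.eraseLead.map φ₂ = P.map φ₂ := by
        conv_rhs => rw [← eraseLead_add_monomial_natDegree_leadingCoeff P]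
        rw [Polynomial.map_add, map_monomial, hz.1 hl, monomial_zero_right, add_zero]
      obtain ⟨Q, h1, h2, h3, h4, h5, h6⟩ := ih P.eraseLead (by
        have := eraseLead_support_card_lt hP0; omega) (h.cl.era P hP) (by rw [e1]; exact h0)
      exact ⟨Q, h1, h2.trans ((eraseLead_natDegree_le P).trans (Nat.sub_le _ _)), h3, h4,
        h5.trans e1, h6.trans e2⟩
    · exact ⟨P, hP, le_rfl, hl, fun h => hl (hz.2 h), rfl, rfl⟩

lemma norm' (h : Good φ₁ φ₂ F) {P : R[X]} (hP : P ∈ F) (h0 : P.map φ₁ ≠ 0) :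
    ∃ Q ∈ F, Q.natDegree ≤ P.natDegree ∧ φ₁ Q.leadingCoeff ≠ 0 ∧ φ₂ Q.leadingCoeff ≠ 0 ∧
      Q.map φ₁ = P.map φ₁ ∧ Q.map φ₂ = P.map φ₂ := normalize h _ P le_rfl hP h0

lemma map_ne_of_lc {Q : R[X]} (h : φ₁ Q.leadingCoeff ≠ 0) : Q.map φ₁ ≠ 0 := by
  intro h0
  apply h
  rw [leadingCoeff, ← coeff_map, h0, coeff_zero]

lemma zero_iff (h : Good φ₁ φ₂ F) {P : R[X]} (hP : P ∈ F) : P.map φ₁ ≠ 0 ↔ P.map φ₂ ≠ 0 := by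
  constructor
  · intro h0
    obtain ⟨Q, _, _, _, h4, _, h6⟩ := norm' h hP h0
    rw [← h6]; exact map_ne_of_lc h4
  · intro h0
    obtain ⟨Q, _, _, _, h4, _, h6⟩ := norm' h.symm hP h0
    rw [← h6]; exact map_ne_of_lc h4

lemma Rt.match (h : Good φ₁ φ₂ F) {k : ℕ} {y₁ : L₁} {y₂ : L₂} (ht : Ty φ₁ φ₂ F y₁ y₂)
    (hr : Rt φ₁ F k y₁) : Rt φ₂ F k y₂ := by
  obtain ⟨Q, h1, h2, h3, h4⟩ := hr
  exact ⟨Q, h1, h2, (zero_iff h h1).1 h3, (sign_zero_iff (ht Q h1)).1 h4⟩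

lemma root_transfer (h : Good φ₁ φ₂ F) {Q : R[X]} (hQ : Q ∈ F) (hl₁ : φ₁ Q.leadingCoeff ≠ 0)
    (hl₂ : φ₂ Q.leadingCoeff ≠ 0) {z₁ : L₁} {z₂ : L₂} (hz₁ : (Q.map φ₁).eval z₁ = 0)
    (hz₂ : (Q.map φ₂).eval z₂ = 0)
    (ht : ∀ P ∈ F, P.natDegree < Q.natDegree →
      sign ((P.map φ₁).eval z₁) = sign ((P.map φ₂).eval z₂)) : Ty φ₁ φ₂ F z₁ z₂ := by
  intro P hP
  have hQ0 : Q ≠ 0 := by rintro rfl; simp at hl₁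
  have hdeg : 0 < Q.natDegree := by
    rw [Nat.pos_iff_ne_zero]
    intro h0
    rw [eq_C_of_natDegree_eq_zero h0] at hz₁
    simp at hz₁
    rw [leadingCoeff, h0] at hl₁
    exact hl₁ hz₁
  have hlt : (prem P Q).natDegree < Q.natDegree := by
    by_cases h0 : prem P Q = 0
    · rw [h0]; simpa using hdeg
    · exact natDegree_lt_natDegree h0 (prem_degree P hQ0)
  have hs := ht _ (h.cl.rem P hP Q hQ hQ0) hlt
  obtain ⟨e, S, hS⟩ := prem_spec P hQ0
  have e1 : φ₁ Q.leadingCoeff ^ e * (P.map φ₁).eval z₁ = ((prem P Q).map φ₁).eval z₁ := by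
    have := congrArg (fun T => (T.map φ₁).eval z₁) hS
    simpa [hz₁] using this
  have e2 : φ₂ Q.leadingCoeff ^ e * (P.map φ₂).eval z₂ = ((prem P Q).map φ₂).eval z₂ := by
    have := congrArg (fun T => (T.map φ₂).eval z₂) hS
    simpa [hz₂] using this
  rw [← e1, ← e2, sign_mul, sign_mul, sign_pow, sign_pow, h.sg Q hQ] at hs
  have hne : sign (φ₂ Q.leadingCoeff) ^ e ≠ 0 := pow_ne_zero _ (by simpa using hl₂)
  exact mul_left_cancel₀ hne hs

lemma thom (hL₁ : PIVT L₁) (hL₂ : PIVT L₂) (h : Good φ₁ φ₂ F) {x₁ z₁ : L₁} {x₂ z₂ : L₂}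
    (hx : Ty φ₁ φ₂ F x₁ x₂) (hz : Ty φ₁ φ₂ F z₁ z₂) (h1 : x₁ ≤ z₁) (h2 : z₂ ≤ x₂) :
    ∀ (n : ℕ) (P : R[X]), P.natDegree ≤ n → P ∈ F →
      (∀ c, x₁ ≤ c → c ≤ z₁ → sign ((P.map φ₁).eval c) = sign ((P.map φ₁).eval x₁)) ∧
      (∀ c, z₂ ≤ c → c ≤ x₂ → sign ((P.map φ₂).eval c) = sign ((P.map φ₂).eval x₂)) := by
  intro n
  induction n with
  | zero =>
    intro P hn hP
    rw [eq_C_of_natDegree_le_zero hn]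
    simp
  | succ n ih =>
    intro P hn hP
    obtain ⟨i1, i2⟩ := ih (derivative P) (by have := natDegree_derivative_le P; omega)
      (h.cl.der P hP)
    have hs := hx _ (h.cl.der P hP)
    have hPx := hx P hP
    have hPz := hz P hP
    rcases le_total 0 (((derivative P).map φ₁).eval x₁) with hp | hp
    · have d1 : ∀ c, x₁ ≤ c → c ≤ z₁ → 0 ≤ (derivative (P.map φ₁)).eval c := by
        intro c a b
        rw [derivative_map]
        rw [← sign_nonneg_iff, i1 c a b, sign_nonneg_iff]; exact hp
      have d2 : ∀ c, z₂ ≤ c → c ≤ x₂ → 0 ≤ (derivative (P.map φ₂)).eval c := by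
        intro c a b
        rw [derivative_map]
        rw [← sign_nonneg_iff, i2 c a b, ← hs, sign_nonneg_iff]; exact hp
      have m1 : ∀ a b, x₁ ≤ a → a ≤ b → b ≤ z₁ →
          sign ((P.map φ₁).eval a) ≤ sign ((P.map φ₁).eval b) := fun a b ha hab hb =>
        sign.monotone (mono_of_deriv hL₁ _ hab
          (fun c h1 h2 => d1 c (ha.trans h1) (h2.trans hb)))
      have m2 : ∀ a b, z₂ ≤ a → a ≤ b → b ≤ x₂ →
          sign ((P.map φ₂).eval a) ≤ sign ((P.map φ₂).eval b) := fun a b ha hab hb =>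
        sign.monotone (mono_of_deriv hL₂ _ hab
          (fun c h1 h2 => d2 c (ha.trans h1) (h2.trans hb)))
      have M1 := m1 _ _ le_rfl h1 le_rfl
      have M2 := m2 _ _ le_rfl h2 le_rfl
      rw [hPx, hPz] at M1
      have E := le_antisymm M1 M2
      constructor
      · intro c a b
        refine le_antisymm ((m1 _ _ a b le_rfl).trans_eq ?_) (m1 _ _ le_rfl a b)
        rw [hPz, hPx, E]
      · intro c a b
        exact le_antisymm (m2 _ _ a b le_rfl) (E.trans_le (m2 _ _ le_rfl a b))
    · have d1 : ∀ c, x₁ ≤ c → c ≤ z₁ → (derivative (P.map φ₁)).eval c ≤ 0 := by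
        intro c a b
        rw [derivative_map]
        rw [← sign_nonpos_iff, i1 c a b, sign_nonpos_iff]; exact hp
      have d2 : ∀ c, z₂ ≤ c → c ≤ x₂ → (derivative (P.map φ₂)).eval c ≤ 0 := by
        intro c a b
        rw [derivative_map]
        rw [← sign_nonpos_iff, i2 c a b, ← hs, sign_nonpos_iff]; exact hp
      have m1 : ∀ a b, x₁ ≤ a → a ≤ b → b ≤ z₁ →
          sign ((P.map φ₁).eval b) ≤ sign ((P.map φ₁).eval a) := fun a b ha hab hb =>
        sign.monotone (anti_of_deriv hL₁ _ hab
          (fun c h1 h2 => d1 c (ha.trans h1) (h2.trans hb)))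
      have m2 : ∀ a b, z₂ ≤ a → a ≤ b → b ≤ x₂ →
          sign ((P.map φ₂).eval b) ≤ sign ((P.map φ₂).eval a) := fun a b ha hab hb =>
        sign.monotone (anti_of_deriv hL₂ _ hab
          (fun c h1 h2 => d2 c (ha.trans h1) (h2.trans hb)))
      have M1 := m1 _ _ le_rfl h1 le_rfl
      have M2 := m2 _ _ le_rfl h2 le_rfl
      rw [hPx, hPz] at M1
      have E := le_antisymm M1 M2
      constructor
      · intro c a b
        refine le_antisymm (m1 _ _ le_rfl a b) (le_trans (le_of_eq ?_) (m1 _ _ a b le_rfl))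
        rw [hPz, hPx, E]
      · intro c a b
        exact le_antisymm ((m2 _ _ le_rfl a b).trans_eq E) (m2 _ _ a b le_rfl)

lemma poly_zero_of_Icc {P : L₁[X]} {a b : L₁} (hab : a < b)
    (h : ∀ c, a ≤ c → c ≤ b → P.eval c = 0) : P = 0 := by
  apply eq_zero_of_infinite_isRoot
  exact (Set.Icc_infinite hab).mono (fun c hc => h c hc.1 hc.2)

lemma thom_order (hL₁ : PIVT L₁) (hL₂ : PIVT L₂) (h : Good φ₁ φ₂ F) {k : ℕ} {x₁ z₁ : L₁}
    {x₂ z₂ : L₂}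
    (hx : Ty φ₁ φ₂ F x₁ x₂) (hz : Ty φ₁ φ₂ F z₁ z₂) (h1 : x₁ < z₁)
    (hr : Rt φ₁ F k x₁ ∨ Rt φ₁ F k z₁) : x₂ < z₂ := by
  by_contra h2
  have h2 := not_lt.1 h2
  have key : ∀ Q ∈ F, ∀ w, x₁ ≤ w → w ≤ z₁ → (Q.map φ₁).eval w = 0 → Q.map φ₁ = 0 := by
    intro Q hQ w hw1 hw2 hw
    have H := (thom hL₁ hL₂ h hx hz h1.le h2 _ Q le_rfl hQ).1
    have Hx : (Q.map φ₁).eval x₁ = 0 := by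
      have := H w hw1 hw2
      rw [hw, sign_zero] at this
      exact sign_eq_zero_iff.1 this.symm
    apply poly_zero_of_Icc h1
    intro c a b
    have := H c a b
    rw [Hx, sign_zero] at this
    exact sign_eq_zero_iff.1 this
  rcases hr with ⟨Q, q1, q2, q3, q4⟩ | ⟨Q, q1, q2, q3, q4⟩
  · exact q3 (key Q q1 x₁ le_rfl h1.le q4)
  · exact q3 (key Q q1 z₁ h1.le le_rfl q4)

/-- gap lemma -/
lemma gap (hL₁ : PIVT L₁) (hL₂ : PIVT L₂) (h : Good φ₁ φ₂ F) {k : ℕ} {u₁ w₁ x₁ : L₁}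
    {u₂ w₂ x₂ : L₂} (hu : Ty φ₁ φ₂ F u₁ u₂) (hw : Ty φ₁ φ₂ F w₁ w₂)
    (n1 : ∀ c, u₁ < c → c < w₁ → ¬ Rt φ₁ F k c) (n2 : ∀ c, u₂ < c → c < w₂ → ¬ Rt φ₂ F k c)
    (a1 : u₁ < x₁) (b1 : x₁ < w₁) (a2 : u₂ < x₂) (b2 : x₂ < w₂) :
    ∀ P ∈ F, P.natDegree ≤ k → sign ((P.map φ₁).eval x₁) = sign ((P.map φ₂).eval x₂) := by
  intro P hP hk
  by_cases h0 : P.map φ₁ = 0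
  · have h0' : P.map φ₂ = 0 := by
      by_contra h'
      exact (zero_iff h hP).2 h' h0
    rw [h0, h0']; simp
  have h0' := (zero_iff h hP).1 h0
  have r1 : ∀ c, u₁ < c → c < w₁ → (P.map φ₁).eval c ≠ 0 :=
    fun c p q r => n1 c p q ⟨P, hP, hk, h0, r⟩
  have r2 : ∀ c, u₂ < c → c < w₂ → (P.map φ₂).eval c ≠ 0 :=
    fun c p q r => n2 c p q ⟨P, hP, hk, h0', r⟩
  by_cases hu0 : (P.map φ₁).eval u₁ = 0
  · by_cases hw0 : (P.map φ₁).eval w₁ = 0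
    · exfalso
      obtain ⟨c, c1, c2, c3⟩ := rolle hL₁ _ h0 (a1.trans b1) hu0 hw0
      refine n1 c c1 c2 ⟨derivative P, h.cl.der P hP, ?_, ?_, ?_⟩
      · have := natDegree_derivative_le P; omega
      · rw [← derivative_map]
        intro hd
        have := derivative_eq_zero.1 hd
        rw [eq_C_of_natDegree_eq_zero this] at hu0 h0
        simp at hu0
        rw [coeff_map, hu0] at h0; simp at h0
      · rw [← derivative_map]; exact c3
    · have hw0' : (P.map φ₂).eval w₂ ≠ 0 := fun h' => hw0 ((sign_zero_iff (hw P hP)).2 h')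
      rw [same_sign hL₁ _ b1 (r1 _ a1 b1) hw0 (fun c p q => r1 c (a1.trans p) q),
        same_sign hL₂ _ b2 (r2 _ a2 b2) hw0' (fun c p q => r2 c (a2.trans p) q)]
      exact hw P hP
  · have hu0' : (P.map φ₂).eval u₂ ≠ 0 := fun h' => hu0 ((sign_zero_iff (hu P hP)).2 h')
    rw [← same_sign hL₁ _ a1 hu0 (r1 _ a1 b1) (fun c p q => r1 c p (q.trans b1)),
        ← same_sign hL₂ _ a2 hu0' (r2 _ a2 b2) (fun c p q => r2 c p (q.trans b2))]
    exact hu P hP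

open Classical in
lemma Rt_finite (φ₁ : R →+* L₁) (F : Finset R[X]) (k : ℕ) :
    ∃ Z : Finset L₁, ∀ y, Rt φ₁ F k y → y ∈ Z := by
  refine ⟨F.biUnion (fun Q => (Q.map φ₁).roots.toFinset), ?_⟩
  rintro y ⟨Q, h1, h2, h3, h4⟩
  simp only [Finset.mem_biUnion]
  exact ⟨Q, h1, by simp [h3, IsRoot, h4]⟩

lemma fin_ge {α : Type*} [LinearOrder α] [Nonempty α] (s : Finset α) : ∃ B, ∀ x ∈ s, B ≤ x := by
  obtain ⟨B, hB⟩ := s.finite_toSet.bddBelow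
  exact ⟨B, fun x hx => hB hx⟩

lemma exists_bot (h : Good φ₁ φ₂ F) : ∃ (B₁ : L₁) (B₂ : L₂), ∀ x₁ x₂, x₁ ≤ B₁ → x₂ ≤ B₂ →
    Ty φ₁ φ₂ F x₁ x₂ ∧ (∀ k, ¬ Rt φ₁ F k x₁) := by
  choose b₁ hb₁ using fun P : R[X] => bot_sign (P.map φ₁)
  choose b₂ hb₂ using fun P : R[X] => bot_sign (P.map φ₂)
  obtain ⟨B₁, h1⟩ := fin_ge (F.image b₁)
  obtain ⟨B₂, h2⟩ := fin_ge (F.image b₂)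
  refine ⟨B₁, B₂, fun x₁ x₂ hx₁ hx₂ => ⟨?_, ?_⟩⟩
  · intro P hP
    have l1 := hb₁ P x₁ (hx₁.trans (h1 _ (Finset.mem_image_of_mem _ hP)))
    have l2 := hb₂ P x₂ (hx₂.trans (h2 _ (Finset.mem_image_of_mem _ hP)))
    rw [l1, l2]
    by_cases h0 : P.map φ₁ = 0
    · have h0' : P.map φ₂ = 0 := by
        by_contra h'
        exact (zero_iff h hP).2 h' h0
      rw [h0, h0']; simp
    · obtain ⟨Q, q1, q2, q3, q4, q5, q6⟩ := norm' h hP h0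
      rw [← q5, ← q6, natDegree_map_of_leadingCoeff_ne_zero _ q3,
        natDegree_map_of_leadingCoeff_ne_zero _ q4, leadingCoeff_map_of_leadingCoeff_ne_zero _ q3,
        leadingCoeff_map_of_leadingCoeff_ne_zero _ q4, sign_mul, sign_mul, h.sg Q q1]
      congr 1
      rw [sign_pow, sign_pow]; simp
  · rintro k ⟨P, hP, p2, p3, p4⟩
    have l1 := hb₁ P x₁ (hx₁.trans (h1 _ (Finset.mem_image_of_mem _ hP)))
    rw [p4, sign_zero] at l1
    have := sign_eq_zero_iff.1 l1.symm
    simp at this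
    exact p3 this

lemma exists_top (h : Good φ₁ φ₂ F) : ∃ (B₁ : L₁) (B₂ : L₂), ∀ x₁ x₂, B₁ ≤ x₁ → B₂ ≤ x₂ →
    Ty φ₁ φ₂ F x₁ x₂ ∧ (∀ k, ¬ Rt φ₁ F k x₁) := by
  choose b₁ hb₁ using fun P : R[X] => top_sign (P.map φ₁)
  choose b₂ hb₂ using fun P : R[X] => top_sign (P.map φ₂)
  obtain ⟨B₁, h1⟩ := (F.image b₁).exists_le
  obtain ⟨B₂, h2⟩ := (F.image b₂).exists_le
  refine ⟨B₁, B₂, fun x₁ x₂ hx₁ hx₂ => ⟨?_, ?_⟩⟩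
  · intro P hP
    have l1 := hb₁ P x₁ (le_trans (h1 _ (Finset.mem_image_of_mem _ hP)) hx₁)
    have l2 := hb₂ P x₂ (le_trans (h2 _ (Finset.mem_image_of_mem _ hP)) hx₂)
    rw [l1, l2]
    by_cases h0 : P.map φ₁ = 0
    · have h0' : P.map φ₂ = 0 := by
        by_contra h'
        exact (zero_iff h hP).2 h' h0
      rw [h0, h0']; simp
    · obtain ⟨Q, q1, q2, q3, q4, q5, q6⟩ := norm' h hP h0
      rw [← q5, ← q6, leadingCoeff_map_of_leadingCoeff_ne_zero _ q3,
        leadingCoeff_map_of_leadingCoeff_ne_zero _ q4, h.sg Q q1]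
  · rintro k ⟨P, hP, p2, p3, p4⟩
    have l1 := hb₁ P x₁ (le_trans (h1 _ (Finset.mem_image_of_mem _ hP)) hx₁)
    rw [p4, sign_zero] at l1
    have := sign_eq_zero_iff.1 l1.symm
    simp at this
    exact p3 this

lemma left_pt (hL₁ : PIVT L₁) (hL₂ : PIVT L₂) (h : Good φ₁ φ₂ F) {k : ℕ}
    (rm : ∀ z₁, Rt φ₁ F k z₁ → ∃ z₂, Ty φ₁ φ₂ F z₁ z₂) (y₁ : L₁) :
    ∃ u₁ u₂, u₁ < y₁ ∧ Ty φ₁ φ₂ F u₁ u₂ ∧ (∀ c, u₁ < c → c < y₁ → ¬ Rt φ₁ F k c) ∧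
      ∀ z₁ z₂, Ty φ₁ φ₂ F z₁ z₂ → Rt φ₁ F k z₁ → u₂ < z₂ → u₁ < z₁ := by
  classical
  obtain ⟨Z, hZ⟩ := Rt_finite φ₁ F k
  let S := Z.filter (fun c => Rt φ₁ F k c ∧ c < y₁)
  have hS : ∀ c, c ∈ S ↔ Rt φ₁ F k c ∧ c < y₁ := by
    intro c
    simp only [S, Finset.mem_filter]
    exact ⟨fun h => h.2, fun h => ⟨hZ c h.1, h⟩⟩
  by_cases hne : S.Nonempty
  · obtain ⟨m1, m2⟩ := (hS _).1 (S.max'_mem hne)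
    obtain ⟨u₂, hu⟩ := rm _ m1
    refine ⟨S.max' hne, u₂, m2, hu, ?_, ?_⟩
    · intro c c1 c2 c3
      exact absurd (S.le_max' c ((hS c).2 ⟨c3, c2⟩)) (not_le.2 c1)
    · intro z₁ z₂ hz hr hlt
      exact thom_order hL₂ hL₁ h.symm hu.symm hz.symm hlt (.inl (m1.match h hu))
  · obtain ⟨B₁, B₂, hB⟩ := exists_bot h
    have hno : ∀ c, c < y₁ → ¬ Rt φ₁ F k c := fun c c1 c2 => hne ⟨c, (hS c).2 ⟨c2, c1⟩⟩
    refine ⟨min B₁ (y₁ - 1), B₂, (min_le_right _ _).trans_lt (by linarith),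
      (hB _ _ (min_le_left _ _) le_rfl).1, fun c _ c2 => hno c c2, ?_⟩
    intro z₁ z₂ hz hr hlt
    have : ¬ z₁ < y₁ := fun h' => hno z₁ h' hr
    exact (min_le_right _ _).trans_lt (by linarith [not_lt.1 this])

lemma right_pt (hL₁ : PIVT L₁) (hL₂ : PIVT L₂) (h : Good φ₁ φ₂ F) {k : ℕ}
    (rm : ∀ z₁, Rt φ₁ F k z₁ → ∃ z₂, Ty φ₁ φ₂ F z₁ z₂) (y₁ t₁ : L₁) (t₂ : L₂)
    (ht : Ty φ₁ φ₂ F t₁ t₂) (hty : t₁ < y₁) :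
    ∃ w₁ w₂, y₁ < w₁ ∧ t₂ < w₂ ∧ Ty φ₁ φ₂ F w₁ w₂ ∧ (∀ c, y₁ < c → c < w₁ → ¬ Rt φ₁ F k c) ∧
      ∀ z₁ z₂, Ty φ₁ φ₂ F z₁ z₂ → Rt φ₁ F k z₁ → z₂ < w₂ → z₁ < w₁ := by
  classical
  obtain ⟨Z, hZ⟩ := Rt_finite φ₁ F k
  let S := Z.filter (fun c => Rt φ₁ F k c ∧ y₁ < c)
  have hS : ∀ c, c ∈ S ↔ Rt φ₁ F k c ∧ y₁ < c := by
    intro c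
    simp only [S, Finset.mem_filter]
    exact ⟨fun h => h.2, fun h => ⟨hZ c h.1, h⟩⟩
  by_cases hne : S.Nonempty
  · obtain ⟨m1, m2⟩ := (hS _).1 (S.min'_mem hne)
    obtain ⟨w₂, hw⟩ := rm _ m1
    refine ⟨S.min' hne, w₂, m2, thom_order hL₁ hL₂ h ht hw (hty.trans m2) (.inr m1), hw, ?_, ?_⟩
    · intro c c1 c2 c3
      exact absurd (S.min'_le c ((hS c).2 ⟨c3, c1⟩)) (not_le.2 c2)
    · intro z₁ z₂ hz hr hlt
      exact thom_order hL₂ hL₁ h.symm hz.symm hw.symm hlt (.inr (m1.match h hw))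
  · obtain ⟨B₁, B₂, hB⟩ := exists_top h
    have hno : ∀ c, y₁ < c → ¬ Rt φ₁ F k c := fun c c1 c2 => hne ⟨c, (hS c).2 ⟨c2, c1⟩⟩
    refine ⟨max B₁ (y₁ + 1), max B₂ (t₂ + 1), lt_max_of_lt_right (by linarith),
      lt_max_of_lt_right (by linarith),
      (hB _ _ (le_max_left _ _) (le_max_left _ _)).1, fun c c1 _ => hno c c1, ?_⟩
    intro z₁ z₂ hz hr hlt
    have : ¬ y₁ < z₁ := fun h' => hno z₁ h' hr
    exact lt_max_of_lt_right (by linarith [not_lt.1 this])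

lemma gap_exists (hL₁ : PIVT L₁) (hL₂ : PIVT L₂) (h : Good φ₁ φ₂ F) {k : ℕ}
    (rm : ∀ z₁, Rt φ₁ F k z₁ → ∃ z₂, Ty φ₁ φ₂ F z₁ z₂)
    (rm' : ∀ z₂, Rt φ₂ F k z₂ → ∃ z₁, Ty φ₁ φ₂ F z₁ z₂) (y₁ : L₁) (hy : ¬ Rt φ₁ F k y₁) :
    ∃ u₁ w₁ u₂ w₂, u₁ < y₁ ∧ y₁ < w₁ ∧ u₂ < w₂ ∧ Ty φ₁ φ₂ F u₁ u₂ ∧ Ty φ₁ φ₂ F w₁ w₂ ∧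
      (∀ c, u₁ < c → c < w₁ → ¬ Rt φ₁ F k c) ∧ (∀ c, u₂ < c → c < w₂ → ¬ Rt φ₂ F k c) := by
  obtain ⟨u₁, u₂, a1, a2, a3, a4⟩ := left_pt hL₁ hL₂ h rm y₁
  obtain ⟨w₁, w₂, b1, b2, b3, b4, b5⟩ := right_pt hL₁ hL₂ h rm y₁ u₁ u₂ a2 a1
  have n1 : ∀ c, u₁ < c → c < w₁ → ¬ Rt φ₁ F k c := by
    intro c c1 c2 c3
    rcases lt_trichotomy c y₁ with h' | h' | h'
    · exact a3 c c1 h' c3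
    · exact hy (h' ▸ c3)
    · exact b4 c h' c2 c3
  refine ⟨u₁, w₁, u₂, w₂, a1, b1, b2, a2, b3, n1, ?_⟩
  intro c c1 c2 c3
  obtain ⟨z₁, hz⟩ := rm' c c3
  have hr : Rt φ₁ F k z₁ := c3.match h.symm hz.symm
  exact n1 z₁ (a4 z₁ c hz hr c1) (b5 z₁ c hz hr c2) hr

lemma rm_step (hL₁ : PIVT L₁) (hL₂ : PIVT L₂) (h : Good φ₁ φ₂ F) {k : ℕ}
    (rm : ∀ z₁, Rt φ₁ F k z₁ → ∃ z₂, Ty φ₁ φ₂ F z₁ z₂)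
    (rm' : ∀ z₂, Rt φ₂ F k z₂ → ∃ z₁, Ty φ₁ φ₂ F z₁ z₂) :
    ∀ z₁, Rt φ₁ F (k+1) z₁ → ∃ z₂, Ty φ₁ φ₂ F z₁ z₂ := by
  intro y₁ hy
  by_cases hyk : Rt φ₁ F k y₁
  · exact rm y₁ hyk
  obtain ⟨P, p1, p2, p3, p4⟩ := hy
  obtain ⟨Q, q1, q2, q3, q4, q5, q6⟩ := norm' h p1 p3
  rw [← q5] at p3 p4
  have hdeg : Q.natDegree = k + 1 := by
    by_contra hne
    exact hyk ⟨Q, q1, by omega, p3, p4⟩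
  obtain ⟨u₁, w₁, u₂, w₂, a1, b1, c2, tu, tw, n1, n2⟩ := gap_exists hL₁ hL₂ h rm rm' y₁ hyk
  have hd0 : derivative (Q.map φ₁) ≠ 0 := by
    intro hd
    have := derivative_eq_zero.1 hd
    rw [natDegree_map_of_leadingCoeff_ne_zero _ q3] at this
    omega
  have nd : ∀ c, u₁ < c → c < w₁ → (derivative (Q.map φ₁)).eval c ≠ 0 := by
    intro c c1 c2 c3
    rw [derivative_map] at c3 hd0
    exact n1 c c1 c2 ⟨derivative Q, h.cl.der Q q1, by have := natDegree_derivative_le Q; omega,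
      hd0, c3⟩
  have hu0 : (Q.map φ₁).eval u₁ ≠ 0 := by
    intro h0
    obtain ⟨c, c1, c2, c3⟩ := rolle hL₁ _ p3 a1 h0 p4
    exact nd c c1 (c2.trans b1) c3
  have hw0 : (Q.map φ₁).eval w₁ ≠ 0 := by
    intro h0
    obtain ⟨c, c1, c2, c3⟩ := rolle hL₁ _ p3 b1 p4 h0
    exact nd c (a1.trans c1) c2 c3
  have hne : sign ((Q.map φ₁).eval u₁) ≠ sign ((Q.map φ₁).eval w₁) := by
    intro hs
    obtain ⟨c, x1, x2, x3⟩ := mvt hL₁ (Q.map φ₁) a1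
    obtain ⟨d, y1, y2, y3⟩ := mvt hL₁ (Q.map φ₁) b1
    rw [p4] at x3 y3
    have hcd := same_sign hL₁ (derivative (Q.map φ₁)) (x2.trans y1) (nd c x1 (x2.trans b1))
      (nd d (a1.trans y1) y2) (fun e e1 e2 => nd e (x1.trans e1) (e2.trans y2))
    have s1 : sign (-(Q.map φ₁).eval u₁) = sign ((derivative (Q.map φ₁)).eval c) := by
      rw [← zero_sub, x3, sign_mul, sign_pos (sub_pos.2 a1), mul_one]
    have s2 : sign ((Q.map φ₁).eval w₁) = sign ((derivative (Q.map φ₁)).eval d) := by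
      rw [← sub_zero (eval w₁ _), y3, sign_mul, sign_pos (sub_pos.2 b1), mul_one]
    have s3 : sign (-(Q.map φ₁).eval u₁) = sign ((Q.map φ₁).eval u₁) := by
      rw [s1, hcd, ← s2, hs]
    rw [Left.sign_neg] at s3
    rcases lt_or_gt_of_ne hu0 with h' | h'
    · rw [sign_neg h'] at s3; exact absurd s3 (by decide)
    · rw [sign_pos h'] at s3; exact absurd s3 (by decide)
  have hu0' : (Q.map φ₂).eval u₂ ≠ 0 := fun h' => hu0 ((sign_zero_iff (tu Q q1)).2 h')
  have hw0' : (Q.map φ₂).eval w₂ ≠ 0 := fun h' => hw0 ((sign_zero_iff (tw Q q1)).2 h')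
  rw [tu Q q1, tw Q q1] at hne
  obtain ⟨y₂, d1, d2, d3⟩ := hL₂ (Q.map φ₂) u₂ w₂ c2 (mul_neg_of_sign_ne hu0' hw0' hne)
  refine ⟨y₂, root_transfer h q1 q3 q4 p4 d3 ?_⟩
  intro P hP hlt
  exact gap hL₁ hL₂ h tu tw n1 n2 a1 b1 d1 d2 P hP (by omega)

lemma rm_all (hL₁ : PIVT L₁) (hL₂ : PIVT L₂) (h : Good φ₁ φ₂ F) (k : ℕ) :
    (∀ z₁, Rt φ₁ F k z₁ → ∃ z₂, Ty φ₁ φ₂ F z₁ z₂) ∧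
    (∀ z₂, Rt φ₂ F k z₂ → ∃ z₁, Ty φ₁ φ₂ F z₁ z₂) := by
  induction k with
  | zero =>
    constructor
    · rintro z ⟨Q, q1, q2, q3, q4⟩
      rw [eq_C_of_natDegree_le_zero q2] at q3 q4
      simp at q3 q4
      exact absurd q4 q3
    · rintro z ⟨Q, q1, q2, q3, q4⟩
      rw [eq_C_of_natDegree_le_zero q2] at q3 q4
      simp at q3 q4
      exact absurd q4 q3
  | succ k ih =>
    refine ⟨rm_step hL₁ hL₂ h ih.1 ih.2, fun z₂ hz => ?_⟩
    obtain ⟨z₁, hz₁⟩ := rm_step hL₂ hL₁ h.symm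
      (fun z hz => by obtain ⟨w, hw⟩ := ih.2 z hz; exact ⟨w, hw.symm⟩)
      (fun z hz => by obtain ⟨w, hw⟩ := ih.1 z hz; exact ⟨w, hw.symm⟩) z₂ hz
    exact ⟨z₁, hz₁.symm⟩

theorem main_step (hL₁ : PIVT L₁) (hL₂ : PIVT L₂) (h : Good φ₁ φ₂ F) (y₁ : L₁) :
    ∃ y₂, Ty φ₁ φ₂ F y₁ y₂ := by
  obtain ⟨r1, r2⟩ := rm_all hL₁ hL₂ h (F.sup natDegree)
  by_cases hy : Rt φ₁ F (F.sup natDegree) y₁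
  · exact r1 y₁ hy
  obtain ⟨u₁, w₁, u₂, w₂, a1, b1, c2, tu, tw, n1, n2⟩ := gap_exists hL₁ hL₂ h r1 r2 y₁ hy
  obtain ⟨y₂, d1, d2⟩ := exists_between c2
  exact ⟨y₂, fun P hP => gap hL₁ hL₂ h tu tw n1 n2 a1 b1 d1 d2 P hP
    (Finset.le_sup (f := natDegree) hP)⟩

lemma pivt_real : PIVT ℝ := by
  intro P a b hab h
  have hc : ContinuousOn (fun x => P.eval x) (Set.Icc a b) := P.continuous.continuousOn
  rcases mul_neg_iff.1 h with ⟨h1, h2⟩ | ⟨h1, h2⟩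
  · obtain ⟨c, hc1, hc2⟩ := intermediate_value_Ioo' hab.le hc ⟨h2, h1⟩
    exact ⟨c, hc1.1, hc1.2, hc2⟩
  · obtain ⟨c, hc1, hc2⟩ := intermediate_value_Ioo hab.le hc ⟨h1, h2⟩
    exact ⟨c, hc1.1, hc1.2, hc2⟩

/-- Transfer of finitely many sign conditions to the reals. -/
theorem transfer (hL₁ : PIVT L₁) (ι : ℝ →+* L₁) : ∀ (d : ℕ) (F : Finset (MvPolynomial (Fin d) ℝ))
    (ξ : Fin d → L₁), ∃ a : Fin d → ℝ, ∀ P ∈ F,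
      sign (MvPolynomial.eval₂ ι ξ P) = sign (MvPolynomial.eval a P) := by
  classical
  intro d
  induction d with
  | zero =>
    intro F ξ
    refine ⟨Fin.elim0, fun P _ => ?_⟩
    obtain ⟨c, rfl⟩ := MvPolynomial.C_surjective (Fin 0) P
    rw [MvPolynomial.eval₂_C, MvPolynomial.eval_C]
    have hpos : ∀ x : ℝ, 0 < x → 0 < ι x := by
      intro x hx
      obtain ⟨y, hy⟩ := (Real.isSquare_iff (x := x)).2 hx.le
      have hne : ι y ≠ 0 := by
        intro h0
        have : y = 0 := by simpa using h0
        rw [hy, this] at hx; simp at hx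
      rw [hy, map_mul]
      exact mul_self_pos.2 hne
    rcases lt_trichotomy c 0 with h | h | h
    · have := hpos (-c) (by linarith)
      rw [map_neg] at this
      rw [sign_neg h, sign_neg (by linarith)]
    · rw [h]; simp
    · rw [sign_pos h, sign_pos (hpos c h)]
  | succ d ih =>
    intro F ξ
    obtain ⟨G, hG, hcl⟩ := closure_exists (F.image (MvPolynomial.finSuccEquiv ℝ d))
    obtain ⟨a, ha⟩ := ih (G.image leadingCoeff) (fun i => ξ i.succ)
    have good : Good (MvPolynomial.eval₂Hom ι (fun i : Fin d => ξ i.succ)) (MvPolynomial.eval a)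
        G := ⟨hcl, fun P hP => ha _ (Finset.mem_image_of_mem _ hP)⟩
    obtain ⟨y, hy⟩ := main_step hL₁ pivt_real good (ξ 0)
    refine ⟨Fin.cons y a, fun P hP => ?_⟩
    have := hy _ (hG (Finset.mem_image_of_mem _ hP))
    rw [MvPolynomial.eval_eq_eval_mv_eval', ← this]
    congr 1
    rw [eval_map]
    have key : MvPolynomial.eval₂Hom ι ξ =
        (eval₂RingHom (MvPolynomial.eval₂Hom ι (fun i : Fin d => ξ i.succ)) (ξ 0)).comp
          (MvPolynomial.finSuccEquiv ℝ d).toRingEquiv.toRingHom := by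
      apply MvPolynomial.ringHom_ext
      · intro r
        simp [MvPolynomial.finSuccEquiv_apply]
      · intro i
        refine Fin.cases ?_ (fun i => ?_) i
        · simp [MvPolynomial.finSuccEquiv_X_zero]
        · simp [MvPolynomial.finSuccEquiv_X_succ]
    exact congrArg (fun f => f P) key
end M
end Polynomial.VRN

open MvPolynomial
namespace Polynomial.VRN
section partD

universe u

/-- Sums of squares of elements of a subfield. -/
def sosIn {Ω : Type*} [Field Ω] (F : Subfield Ω) : AddSubmonoid Ω :=
  AddSubmonoid.closure {y | ∃ a ∈ F, y = a * a}

lemma sosIn_lift {Ω K : Type*} [Field Ω] [Field K] (σ : K →+* Ω) {x : Ω}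
    (hx : x ∈ sosIn σ.fieldRange) : ∃ y, IsSumSq y ∧ σ y = x := by
  refine AddSubmonoid.closure_induction ?_ ?_ ?_ hx
  · rintro y ⟨a, ⟨b, rfl⟩, rfl⟩
    exact ⟨b * b, .mul_self b, map_mul _ _ _⟩
  · exact ⟨0, .zero, map_zero _⟩
  · rintro _ _ _ _ ⟨a, ha, rfl⟩ ⟨b, hb, rfl⟩
    exact ⟨a + b, ha.add hb, map_add _ _ _⟩

lemma sosIn_neg_one {Ω K : Type*} [Field Ω] [Field K] (σ : K →+* Ω)
    (hx : -1 ∈ sosIn σ.fieldRange) : IsSumSq (-1 : K) := by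
  obtain ⟨y, hy, h⟩ := sosIn_lift σ hx
  have : y = -1 := σ.injective (by rw [h]; simp)
  exact this ▸ hy

lemma sosIn_of {Ω K : Type*} [Field Ω] [Field K] (σ : K →+* Ω) {x : K}
    (hx : IsSumSq x) : σ x ∈ sosIn σ.fieldRange := by
  induction hx with
  | zero => rw [map_zero]; exact zero_mem _
  | sq_add a hs ih =>
    rw [map_add, map_mul]
    exact add_mem (AddSubmonoid.subset_closure ⟨σ a, ⟨a, rfl⟩, rfl⟩) ih

lemma sosIn_mono {Ω : Type*} [Field Ω] {F G : Subfield Ω} (h : F ≤ G) : sosIn F ≤ sosIn G :=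
  AddSubmonoid.closure_mono (fun _ ⟨a, ha, e⟩ => ⟨a, h ha, e⟩)

/-- Maximally formally real. -/
structure MaxReal (L : Type*) [Field L] : Prop where
  real : ¬ IsSumSq (-1 : L)
  max : ∀ Q : L[X], Irreducible Q → 2 ≤ Q.natDegree → IsSumSq (-1 : AdjoinRoot Q)

theorem exists_maxReal (K : Type u) [Field K] (hK : ¬ IsSumSq (-1 : K)) :
    ∃ (L : Type u) (_ : Field L) (_ : K →+* L), MaxReal L := by
  let Ω := AlgebraicClosure K
  let i : K →+* Ω := algebraMap K Ω
  obtain ⟨F, hKF, hF⟩ := zorn_le_nonempty₀ {F : Subfield Ω | -1 ∉ sosIn F} (by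
    intro c hc hch y hy
    refine ⟨sSup c, ?_, fun z hz => le_sSup hz⟩
    intro hmem
    have key : ∀ x ∈ sosIn (sSup c), ∃ F ∈ c, x ∈ sosIn F := by
      intro x hx
      refine AddSubmonoid.closure_induction ?_ ?_ ?_ hx
      · rintro _ ⟨a, ha, rfl⟩
        rw [Subfield.mem_sSup_of_directedOn ⟨y, hy⟩ hch.directedOn] at ha
        obtain ⟨F, hF, haF⟩ := ha
        exact ⟨F, hF, AddSubmonoid.subset_closure ⟨a, haF, rfl⟩⟩
      · exact ⟨y, hy, zero_mem _⟩
      · rintro a b _ _ ⟨F, hF, haF⟩ ⟨G, hG, hbG⟩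
        rcases hch.total hF hG with h | h
        · exact ⟨G, hG, add_mem (sosIn_mono h haF) hbG⟩
        · exact ⟨F, hF, add_mem haF (sosIn_mono h hbG)⟩
    obtain ⟨F, hF, h⟩ := key _ hmem
    exact hc hF h) i.fieldRange (fun h => hK (sosIn_neg_one i h))
  refine ⟨F, inferInstance, i.codRestrict F (fun x => hKF ⟨x, rfl⟩), ?_, ?_⟩
  · intro h
    have := sosIn_of F.subtype h
    rw [Subfield.fieldRange_subtype, map_neg, map_one] at this
    exact hF.1 this
  · intro Q hQ hd
    have : Fact (Irreducible Q) := ⟨hQ⟩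
    have hdeg : (Q.degree) ≠ 0 := by
      rw [degree_eq_natDegree hQ.ne_zero]; norm_cast; omega
    obtain ⟨α, hα⟩ := IsAlgClosed.exists_eval₂_eq_zero F.subtype Q hdeg
    let σ : AdjoinRoot Q →+* Ω := AdjoinRoot.lift F.subtype α hα
    apply sosIn_neg_one σ
    by_contra hcon
    have hle : F ≤ σ.fieldRange := by
      intro x hx
      exact ⟨AdjoinRoot.of Q ⟨x, hx⟩, by simp [σ]⟩
    have hle' : σ.fieldRange ≤ F := hF.2 hcon hle
    have hαF : α ∈ F := hle' ⟨AdjoinRoot.root Q, by simp [σ]⟩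
    have hroot : Q.IsRoot ⟨α, hαF⟩ := by
      apply F.subtype.injective
      rw [map_zero, ← hα, eval₂_eq_eval_map, ← eval_map_apply]
      rfl
    have := degree_eq_one_of_irreducible_of_root hQ hroot
    rw [degree_eq_natDegree hQ.ne_zero] at this
    norm_cast at this
    omega

/-- Sums of squares of polynomials of bounded degree. -/
noncomputable def BS {L : Type*} [Field L] (n : ℕ) : AddSubmonoid L[X] :=
  AddSubmonoid.closure {q | ∃ p : L[X], p.natDegree ≤ n ∧ q = p * p}

variable {L : Type u} [Field L]

lemma BS_degree {n : ℕ} {h : L[X]} (hh : h ∈ BS n) : h.natDegree ≤ n + n := by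
  refine AddSubmonoid.closure_induction ?_ ?_ ?_ hh
  · rintro _ ⟨p, hp, rfl⟩
    exact natDegree_mul_le_of_le hp hp
  · simp
  · intro x y _ _ hx hy
    exact natDegree_add_le_of_degree_le hx hy

lemma BS_coeff {n : ℕ} {h : L[X]} (hh : h ∈ BS n) : IsSumSq (h.coeff (n + n)) := by
  refine AddSubmonoid.closure_induction ?_ ?_ ?_ hh
  · rintro _ ⟨p, hp, rfl⟩
    rw [coeff_mul_add_eq_of_natDegree_le hp hp]
    exact .mul_self _
  · simp
  · intro x y _ _ hx hy
    rw [coeff_add]; exact hx.add hy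

lemma BS_eval {n : ℕ} {h : L[X]} (hh : h ∈ BS n) (c : L) : IsSumSq (h.eval c) := by
  refine AddSubmonoid.closure_induction ?_ ?_ ?_ hh
  · rintro _ ⟨p, hp, rfl⟩
    rw [eval_mul]
    exact .mul_self _
  · simp
  · intro x y _ _ hx hy
    rw [eval_add]; exact hx.add hy

lemma MaxReal.lemU (hL : MaxReal L) {Q : L[X]} (hQ : Irreducible Q) (hd : 2 ≤ Q.natDegree) :
    ∃ h ∈ BS (Q.natDegree - 1), Q ∣ 1 + h := by
  have key : ∀ z : AdjoinRoot Q, IsSumSq z → ∃ h ∈ BS (Q.natDegree - 1), AdjoinRoot.mk Q h = z := by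
    intro z hz
    induction hz with
    | zero => exact ⟨0, zero_mem _, map_zero _⟩
    | sq_add a hs ih =>
      obtain ⟨h, hh, rfl⟩ := ih
      obtain ⟨p, rfl⟩ := AdjoinRoot.mk_surjective a
      have e : AdjoinRoot.mk Q (p % Q) = AdjoinRoot.mk Q p := by
        rw [AdjoinRoot.mk_eq_mk]
        exact ⟨-(p / Q), by linear_combination EuclideanDomain.mod_add_div p Q⟩
      refine ⟨(p % Q) * (p % Q) + h, add_mem (AddSubmonoid.subset_closure ⟨p % Q, ?_, rfl⟩) hh, ?_⟩
      · have := natDegree_mod_lt p (q := Q) (by omega)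
        omega
      · rw [map_add, map_mul, e]
  obtain ⟨h, hh, e⟩ := key _ (hL.max Q hQ hd)
  refine ⟨h, hh, ?_⟩
  rw [← AdjoinRoot.mk_eq_zero, map_add, e, map_one]; ring

lemma MaxReal.total (hL : MaxReal L) (x : L) : IsSumSq x ∨ IsSumSq (-x) := by
  by_cases hx : IsSquare x
  · exact .inl hx.isSumSq
  right
  have hd : (X ^ 2 - C x : L[X]).natDegree = 2 := natDegree_X_pow_sub_C
  have hirr : Irreducible (X ^ 2 - C x : L[X]) := by
    rw [irreducible_iff_roots_eq_zero_of_degree_le_three (by omega) (by omega)]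
    rw [Multiset.eq_zero_iff_forall_notMem]
    intro y hy
    have := isRoot_of_mem_roots hy
    apply hx
    refine ⟨y, ?_⟩
    simp [IsRoot] at this
    linear_combination -this
  obtain ⟨h, hh, G, hG⟩ := hL.lemU hirr (by omega)
  rw [hd] at hh
  have hdh := BS_degree hh
  have hc2 := BS_coeff hh
  have he0 := BS_eval hh 0
  norm_num at hdh hc2
  have hne : (1 + h) ≠ 0 := by
    intro h0
    apply hL.real
    have : h.eval 0 = -1 := by
      have := congrArg (eval 0) h0
      simp at this
      linear_combination this
    exact this ▸ he0
  have hG0 : G ≠ 0 := by rintro rfl; simp at hG; exact hne hG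
  have hdG : G.natDegree = 0 := by
    have h1 : (1 + h).natDegree ≤ 2 :=
      natDegree_add_le_of_degree_le (by simp) hdh
    rw [hG, natDegree_mul hirr.ne_zero hG0, hd] at h1
    omega
  obtain ⟨g, rfl⟩ := natDegree_eq_zero.1 hdG
  have hg0 : g ≠ 0 := by rintro rfl; simp at hG0
  have e2 : h.coeff 2 = g := by
    have := congrArg (fun p => coeff p 2) hG
    simpa [coeff_one, coeff_C] using this
  have e0 : 1 + h.eval 0 = - x * g := by
    have := congrArg (eval 0) hG
    simpa using this
  rw [e2] at hc2
  have : -x = (1 + h.eval 0) * g * (g⁻¹ * g⁻¹) := by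
    rw [e0]; field_simp
  rw [this]
  exact ((IsSumSq.one.add he0).mul hc2).mul (.mul_self _)

lemma MaxReal.anti (hL : MaxReal L) {x : L} (h1 : IsSumSq x) (h2 : IsSumSq (-x)) : x = 0 := by
  by_contra h
  apply hL.real
  have : (-1 : L) = x * (-x) * (x⁻¹ * x⁻¹) := by field_simp
  rw [this]
  exact (h1.mul h2).mul (.mul_self _)

open Classical in
lemma MaxReal.order (hL : MaxReal L) : ∃ (_ : LinearOrder L), IsStrictOrderedRing L ∧
    ∀ x : L, IsSumSq x → 0 ≤ x := by
  let S : RingCone L := { Subsemiring.sumSq L with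
    eq_zero_of_mem_of_neg_mem' := fun {a} h1 h2 =>
      hL.anti (Subsemiring.mem_sumSq.1 h1) (Subsemiring.mem_sumSq.1 h2) }
  have hS : ∀ x, x ∈ S ↔ IsSumSq x := fun x => Subsemiring.mem_sumSq
  have : HasMemOrNegMem S := ⟨fun x => by rw [hS, hS]; exact hL.total x⟩
  let o : LinearOrder L := LinearOrder.mkOfAddGroupCone S
  have : IsOrderedRing L := IsOrderedRing.mkOfCone S
  refine ⟨o, IsOrderedRing.toIsStrictOrderedRing L, fun x hx => ?_⟩
  change x - 0 ∈ S
  rw [sub_zero, hS]; exact hx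

lemma MaxReal.pivt [LinearOrder L] [IsStrictOrderedRing L] (hL : MaxReal L) : PIVT L := by
  suffices ∀ (n : ℕ) (P : L[X]) (a b : L), P.natDegree = n → a < b → P.eval a * P.eval b < 0 →
      ∃ c, a < c ∧ c < b ∧ P.eval c = 0 from fun P a b => this _ P a b rfl
  intro n
  induction n using Nat.strong_induction_on with
  | _ n ih =>
  intro P a b hn hab hP
  have hP0 : P ≠ 0 := by rintro rfl; simp at hP
  have hn0 : n ≠ 0 := by
    rintro rfl
    obtain ⟨c, rfl⟩ := natDegree_eq_zero.1 hn
    simp at hP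
    exact absurd hP (not_lt.2 (mul_self_nonneg c))
  by_cases hirr : Irreducible P
  · by_cases h1 : n = 1
    · obtain ⟨u, v, rfl⟩ := exists_eq_X_add_C_of_natDegree_le_one (hn.trans h1).le
      simp at hP
      have hu : u ≠ 0 := by
        rintro rfl
        simp at hP
        exact absurd hP (not_lt.2 (mul_self_nonneg v))
      refine ⟨-v / u, ?_, ?_, by simp; field_simp; ring⟩
      · by_contra! h
        have e : v = -(-v / u) * u := by field_simp
        generalize -v / u = t at *
        subst e
        have : (u * a + -t * u) * (u * b + -t * u) = u * u * ((a - t) * (b - t)) := by ring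
        rw [this] at hP
        exact absurd hP (not_lt.2 (mul_nonneg (mul_self_nonneg u)
          (mul_nonneg (by linarith) (by linarith))))
      · by_contra! h
        have e : v = -(-v / u) * u := by field_simp
        generalize -v / u = t at *
        subst e
        have : (u * a + -t * u) * (u * b + -t * u) = u * u * ((t - a) * (t - b)) := by ring
        rw [this] at hP
        exact absurd hP (not_lt.2 (mul_nonneg (mul_self_nonneg u)
          (mul_nonneg (by linarith) (by linarith))))
    · obtain ⟨h, hh, G, hG⟩ := hL.lemU hirr (by omega)
      have hpos : ∀ c, 0 < P.eval c * G.eval c := by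
        intro c
        rw [← eval_mul, ← hG, eval_add, eval_one]
        have := (BS_eval hh c).nonneg
        linarith
      have hG0 : G ≠ 0 := by rintro rfl; simpa using hpos a
      have hdeg : G.natDegree < n := by
        have h1 : (1 + h).natDegree ≤ (n - 1) + (n - 1) :=
          natDegree_add_le_of_degree_le (by simp) (hn ▸ BS_degree hh)
        rw [hG, natDegree_mul hP0 hG0] at h1
        omega
      have hsign : G.eval a * G.eval b < 0 := by
        have := mul_pos (hpos a) (hpos b)
        by_contra! h
        have h3 := mul_nonpos_of_nonpos_of_nonneg hP.le h
        nlinarith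
      obtain ⟨c, _, _, hc⟩ := ih _ hdeg G a b rfl hab hsign
      have := hpos c
      rw [hc] at this
      simp at this
  · have hu : ¬ IsUnit P := fun hu => hn0 (hn ▸ natDegree_eq_zero_of_isUnit hu)
    rw [irreducible_iff] at hirr
    push Not at hirr
    obtain ⟨A, B, rfl, hA, hB⟩ := hirr hu
    have hA0 : A ≠ 0 := left_ne_zero_of_mul hP0
    have hB0 : B ≠ 0 := right_ne_zero_of_mul hP0
    rw [natDegree_mul hA0 hB0] at hn
    have dA : A.natDegree ≠ 0 := fun h => hA (isUnit_iff_degree_eq_zero.2 (by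
      rw [degree_eq_natDegree hA0, h]; rfl))
    have dB : B.natDegree ≠ 0 := fun h => hB (isUnit_iff_degree_eq_zero.2 (by
      rw [degree_eq_natDegree hB0, h]; rfl))
    simp only [eval_mul] at hP ⊢
    by_cases hs : A.eval a * A.eval b < 0
    · obtain ⟨c, h1, h2, h3⟩ := ih _ (by omega) A a b rfl hab hs
      exact ⟨c, h1, h2, by simp [h3]⟩
    · have hs' : B.eval a * B.eval b < 0 := by
        by_contra! h
        push Not at hs
        have := mul_nonneg hs h
        nlinarith
      obtain ⟨c, h1, h2, h3⟩ := ih _ (by omega) B a b rfl hab hs'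
      exact ⟨c, h1, h2, by simp [h3]⟩

theorem exists_pivt (K : Type u) [Field K] (hK : ¬ IsSumSq (-1 : K)) :
    ∃ (L : Type u) (_ : Field L) (_ : LinearOrder L) (_ : IsStrictOrderedRing L) (_ : K →+* L),
      PIVT L := by
  obtain ⟨L, hf, i, hL⟩ := exists_maxReal K hK
  obtain ⟨o, h, -⟩ := hL.order
  exact ⟨L, hf, o, h, i, hL.pivt⟩

end partD
end Polynomial.VRN

namespace Polynomial.VRN
section partE

universe u

lemma isSumSq_fin {R : Type*} [CommRing R] {t : R} (ht : IsSumSq t) :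
    ∃ (m : ℕ) (r : Fin m → R), t = ∑ i, r i * r i := by
  induction ht with
  | zero => exact ⟨0, Fin.elim0, by simp⟩
  | sq_add a hs ih =>
    obtain ⟨m, r, rfl⟩ := ih
    exact ⟨m + 1, Fin.cons a r, by simp [Fin.sum_univ_succ]⟩

lemma clear_sos {R K : Type*} [CommRing R] [Field K] (ψ : R →+* K)
    (hψ : ∀ c : K, ∃ b e : R, ψ b ≠ 0 ∧ ψ b * c = ψ e) {s : K} (hs : IsSumSq s) :
    ∃ b t : R, ψ b ≠ 0 ∧ IsSumSq t ∧ ψ (b * b) * s = ψ t := by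
  induction hs with
  | zero => exact ⟨1, 0, by simp, .zero, by simp⟩
  | sq_add a hs ih =>
    obtain ⟨b, t, hb, ht, e⟩ := ih
    obtain ⟨c, x, hc, hx⟩ := hψ a
    refine ⟨b * c, (b * x) * (b * x) + (c * c) * t, by simp [hb, hc], ?_, ?_⟩
    · exact .sq_add _ ((IsSumSq.mul_self c).mul ht)
    · simp only [map_add, map_mul] at *
      rw [← e, ← hx]; ring

theorem module_part {R : Type u} [CommRing R] [IsNoetherianRing R] {n : ℕ}
    (N₀ : Submodule R (Fin n → R)) (hN₀ : N₀.IsRealSubmodule) (f : Fin n → R) (hf₀ : f ∉ N₀) :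
    ∃ (K : Type u) (_ : Field K) (ψ : R →+* K) (v : Fin n → R), ¬ IsSumSq (-1 : K) ∧
      (∀ h ∈ N₀, ψ (∑ j, h j * v j) = 0) ∧ ψ (∑ j, f j * v j) ≠ 0 := by
  classical
  obtain ⟨N, ⟨hle, hN, hf⟩, hmax⟩ := WellFounded.has_min
    (wellFounded_gt : WellFounded (α := Submodule R (Fin n → R)) (· > ·))
    {N | N₀ ≤ N ∧ N.IsRealSubmodule ∧ f ∉ N} ⟨N₀, le_rfl, hN₀, hf₀⟩
  have colon : ∀ (r s : R), r • f ∉ N → (r * s) • f ∈ N → s • f ∈ N := by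
    intro r s hr hrs
    let M : Submodule R (Fin n → R) := N.comap (LinearMap.lsmul R (Fin n → R) r)
    have hM : ∀ h, h ∈ M ↔ r • h ∈ N := fun h => Iff.rfl
    have hNM : N ≤ M := fun h hh => (hM h).2 (N.smul_mem r hh)
    have hMr : M.IsRealSubmodule := by
      intro m F hF i
      refine (hM _).2 (hN m (fun i => r • F i) (fun j => ?_) i)
      have := N.smul_mem r ((hM _).1 (hF j))
      convert this using 1
      rw [Finset.smul_sum, Finset.smul_sum]
      refine Finset.sum_congr rfl fun i _ => ?_
      simp only [Pi.smul_apply, smul_smul, smul_eq_mul]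
      congr 1; ring
    have hnot := hmax M ⟨hle.trans hNM, hMr, hr⟩
    have : M ≤ N := by
      by_contra h
      exact hnot (lt_of_le_not_ge hNM h)
    apply this
    rw [hM, smul_smul]; exact hrs
  let p : Ideal R := N.comap (LinearMap.toSpanSingleton R _ f)
  have hp : ∀ r, r ∈ p ↔ r • f ∈ N := fun r => Iff.rfl
  have hprime : p.IsPrime := by
    refine ⟨?_, ?_⟩
    · rw [Ideal.ne_top_iff_one, hp, one_smul]; exact hf
    · intro r s hrs
      rw [hp] at hrs
      rw [hp, hp]
      by_cases h : r • f ∈ N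
      · exact .inl h
      · exact .inr (colon r s h hrs)
  have preal : ∀ (m : ℕ) (r : Fin m → R), ∑ i, r i * r i ∈ p → ∀ i, r i ∈ p := by
    intro m r hr i
    refine hN m (fun i => r i • f) (fun j => ?_) i
    have := N.smul_mem (f j) ((hp _).1 hr)
    convert this using 1
    rw [Finset.sum_smul, Finset.smul_sum]
    refine Finset.sum_congr rfl fun i _ => ?_
    simp only [Pi.smul_apply, smul_smul, smul_eq_mul]
    congr 1; ring
  let K := FractionRing (R ⧸ p)
  let ψ : R →+* K := (algebraMap (R ⧸ p) K).comp (Ideal.Quotient.mk p)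
  have hψ0 : ∀ r, ψ r = 0 ↔ r ∈ p := by
    intro r
    rw [← Ideal.Quotient.eq_zero_iff_mem]
    exact map_eq_zero_iff _ (IsFractionRing.injective (R ⧸ p) K)
  have hψ : ∀ c : K, ∃ b e : R, ψ b ≠ 0 ∧ ψ b * c = ψ e := by
    intro c
    obtain ⟨x, y, hy, rfl⟩ := IsFractionRing.div_surjective (A := R ⧸ p) c
    obtain ⟨x, rfl⟩ := Ideal.Quotient.mk_surjective x
    obtain ⟨y, rfl⟩ := Ideal.Quotient.mk_surjective y
    have hy0 : ψ y ≠ 0 := by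
      intro h
      rw [hψ0, ← Ideal.Quotient.eq_zero_iff_mem] at h
      exact nonZeroDivisors.ne_zero hy h
    exact ⟨y, x, hy0, mul_div_cancel₀ _ hy0⟩
  have hK : ¬ IsSumSq (-1 : K) := by
    intro h
    obtain ⟨b, t, hb, ht, e⟩ := clear_sos ψ hψ h
    obtain ⟨m, r, hr⟩ := isSumSq_fin (IsSumSq.sq_add b ht)
    have h0 : b * b + t ∈ p := by
      rw [← hψ0, map_add, ← e]; ring
    obtain ⟨m, r, rfl⟩ := isSumSq_fin ht
    have := preal (m + 1) (Fin.cons b r) (by simpa [Fin.sum_univ_succ] using h0) 0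
    exact hb ((hψ0 b).2 (by simpa using this))
  let W : Submodule K (Fin n → K) :=
    { carrier := {w | ∃ s : R, ∃ h ∈ N, ψ s ≠ 0 ∧ ∀ j, ψ s * w j = ψ (h j)}
      zero_mem' := ⟨1, 0, N.zero_mem, by simp, by simp⟩
      add_mem' := by
        rintro w w' ⟨s, h, hh, hs, e⟩ ⟨s', h', hh', hs', e'⟩
        refine ⟨s * s', s' • h + s • h', N.add_mem (N.smul_mem _ hh) (N.smul_mem _ hh'), ?_, ?_⟩
        · simp [hs, hs']
        · intro j
          simp only [Pi.add_apply, Pi.smul_apply, smul_eq_mul, map_add, map_mul]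
          rw [← e, ← e']; ring
      smul_mem' := by
        rintro c w ⟨s, h, hh, hs, e⟩
        obtain ⟨b, x, hb, hx⟩ := hψ c
        refine ⟨b * s, x • h, N.smul_mem _ hh, by simp [hb, hs], ?_⟩
        intro j
        simp only [Pi.smul_apply, smul_eq_mul, map_mul]
        rw [← e, ← hx]; ring }
  have hfW : (fun j => ψ (f j)) ∉ W := by
    rintro ⟨s, h, hh, hs, e⟩
    have hu : ∀ j, (s • f - h) j ∈ p := by
      intro j
      rw [← hψ0]
      simp only [Pi.sub_apply, Pi.smul_apply, smul_eq_mul, map_sub, map_mul]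
      rw [← e]; ring
    have hu' : s • f - h ∈ N := by
      refine hN 1 (fun _ => s • f - h) (fun j => ?_) 0
      simp only [Finset.univ_unique, Finset.sum_const, Finset.card_singleton, one_smul]
      rw [smul_sub]
      refine N.sub_mem ?_ (N.smul_mem _ hh)
      rw [smul_comm]
      exact N.smul_mem _ (hu j)
    apply hs
    rw [hψ0, hp]
    simpa using N.add_mem hu' hh
  obtain ⟨ℓ, hℓf, hℓW⟩ := Submodule.exists_le_ker_of_notMem hfW
  have hℓ : ∀ w : Fin n → K, ℓ w = ∑ j, w j * ℓ (Pi.single j 1) := by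
    intro w
    rw [LinearMap.pi_apply_eq_sum_univ ℓ w]
    refine Finset.sum_congr rfl fun j _ => ?_
    rw [smul_eq_mul]
    congr 2
    ext i
    simp [Pi.single_apply, eq_comm]
  choose b e hb he using fun j => hψ (ℓ (Pi.single j 1))
  refine ⟨K, inferInstance, ψ, fun j => (∏ i ∈ Finset.univ.erase j, b i) * e j, hK, ?_⟩
  have hsum : ∀ h : Fin n → R, ψ (∑ j, h j * ((∏ i ∈ Finset.univ.erase j, b i) * e j)) =
      ψ (∏ i, b i) * ℓ (fun j => ψ (h j)) := by
    intro h
    rw [hℓ, map_sum, Finset.mul_sum]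
    refine Finset.sum_congr rfl fun j _ => ?_
    rw [← Finset.mul_prod_erase Finset.univ b (Finset.mem_univ j), map_mul, map_mul, map_mul, ← he]
    ring
  have hB : ψ (∏ i, b i) ≠ 0 := by
    rw [map_prod]; exact Finset.prod_ne_zero_iff.2 fun i _ => hb i
  refine ⟨fun h hh => ?_, ?_⟩
  · rw [hsum]
    have : (fun j => ψ (h j)) ∈ W := ⟨1, h, hle hh, by simp, by simp⟩
    rw [LinearMap.mem_ker.1 (hℓW this), mul_zero]
  · rw [hsum]
    exact mul_ne_zero hB hℓf

end partE
end Polynomial.VRN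

/-- **Corollary 2: vector version of the Real Nullstellensatz.** -/
theorem vector_real_nullstellensatz (d n m : ℕ)
    (g : Fin m → (Fin n → MvPolynomial (Fin d) ℝ)) (f : Fin n → MvPolynomial (Fin d) ℝ) :
    (∀ (a : Fin d → ℝ) (v : Fin n → ℝ),
        (∀ i, ∑ j, eval a (g i j) * v j = 0) → ∑ j, eval a (f j) * v j = 0) ↔
      (∀ N : Submodule (MvPolynomial (Fin d) ℝ) (Fin n → MvPolynomial (Fin d) ℝ),
        N.IsRealSubmodule → (∀ i, g i ∈ N) → f ∈ N) := by
  classical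
  constructor
  · intro h1 N hN hg
    by_contra hf
    obtain ⟨K, _, ψ, v, hK, hv, hfv⟩ := Polynomial.VRN.module_part N hN f hf
    obtain ⟨L, _, _, _, i, hL⟩ := Polynomial.VRN.exists_pivt K hK
    let φ : MvPolynomial (Fin d) ℝ →+* L := i.comp ψ
    have hφ : ∀ P, MvPolynomial.eval₂ (φ.comp MvPolynomial.C) (fun j => φ (MvPolynomial.X j)) P
        = φ P := by
      intro P
      have : MvPolynomial.eval₂Hom (φ.comp MvPolynomial.C) (fun j => φ (MvPolynomial.X j)) = φ := by
        apply MvPolynomial.ringHom_ext <;> simp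
      exact congrArg (fun F => F P) this
    obtain ⟨a, ha⟩ := Polynomial.VRN.transfer hL (φ.comp MvPolynomial.C) d
      (insert (∑ j, f j * v j) (Finset.univ.image fun i => ∑ j, g i j * v j))
      (fun j => φ (MvPolynomial.X j))
    have hga : ∀ k, MvPolynomial.eval a (∑ j, g k j * v j) = 0 := by
      intro k
      have := ha (∑ j, g k j * v j) (by simp)
      rw [hφ] at this
      have h0 : φ (∑ j, g k j * v j) = 0 := by
        change i (ψ _) = 0
        rw [hv _ (hg k), map_zero]
      rw [h0, sign_zero] at this
      exact sign_eq_zero_iff.1 this.symm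
    have hfa : MvPolynomial.eval a (∑ j, f j * v j) ≠ 0 := by
      intro h0
      have := ha (∑ j, f j * v j) (by simp)
      rw [hφ, h0, sign_zero, sign_eq_zero_iff] at this
      exact hfv (i.injective (by rw [map_zero]; exact this))
    apply hfa
    simp only [map_sum, map_mul] at hga ⊢
    exact h1 a (fun j => MvPolynomial.eval a (v j)) hga
  · intro h2 a v hgv
    let N : Submodule (MvPolynomial (Fin d) ℝ) (Fin n → MvPolynomial (Fin d) ℝ) :=
      { carrier := {h | ∑ j, MvPolynomial.eval a (h j) * v j = 0}
        zero_mem' := by simp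
        add_mem' := by
          intro x y hx hy
          simp only [Set.mem_setOf_eq, Pi.add_apply, map_add, add_mul, Finset.sum_add_distrib] at *
          rw [hx, hy, add_zero]
        smul_mem' := by
          intro c x hx
          simp only [Set.mem_setOf_eq, Pi.smul_apply, smul_eq_mul, map_mul, mul_assoc,
            ← Finset.mul_sum] at *
          rw [hx, mul_zero] }
    have hNm : ∀ h, h ∈ N ↔ ∑ j, MvPolynomial.eval a (h j) * v j = 0 := fun h => Iff.rfl
    refine (hNm f).1 (h2 N ?_ hgv)
    intro k F hF i
    rw [hNm]
    have key : ∑ i, (∑ j, MvPolynomial.eval a (F i j) * v j) ^ 2 = 0 := by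
      have h3 : ∀ l, v l * ∑ j, MvPolynomial.eval a ((∑ i, F i l • F i) j) * v j = 0 :=
        fun l => by rw [(hNm _).1 (hF l), mul_zero]
      rw [← Finset.sum_eq_zero (s := Finset.univ) (fun l _ => h3 l)]
      simp only [Finset.sum_apply, Pi.smul_apply, smul_eq_mul, map_sum, map_mul, Finset.sum_mul,
        Finset.mul_sum, sq]
      rw [Finset.sum_comm]
      conv_rhs => rw [Finset.sum_comm]
      refine Finset.sum_congr rfl fun j _ => ?_
      rw [Finset.sum_comm]
      refine Finset.sum_congr rfl fun l _ => ?_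
      refine Finset.sum_congr rfl fun i _ => ?_
      ring
    have := (Finset.sum_eq_zero_iff_of_nonneg (fun i _ => sq_nonneg _)).1 key i (Finset.mem_univ i)
    exact pow_eq_zero_iff (two_ne_zero) |>.1 this
end

section
/- (Corollary 3, vector version of the Quaternionic Nullstellensatz) Let A = ℍ_c[x₁, …, x_d]. For any g₁, …, g_m, f ∈ A^n the following are equivalent: (1) for every a ∈ ℝ^d and every v ∈ ℍ^n such that Σ_{j=1}^n g_{i,j}(a) v_j = 0 for all i = 1, …, m, one has Σ_{j=1}^n f_j(a) v_j = 0; (2) f belongs to every real submodule of A^n that contains g₁, …, g_m. -/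
section
open MvPolynomial

/-- Evaluation of a quaternionic polynomial with central (commuting) variables at a real
point, performed componentwise. -/
noncomputable def evalQ {d : ℕ} (a : Fin d → ℝ) (p : Quaternion (MvPolynomial (Fin d) ℝ)) :
    Quaternion ℝ :=
  ⟨eval a p.re, eval a p.imI, eval a p.imJ, eval a p.imK⟩

/-- A submodule `N` of `A^n`, for a ring `A` with involution `star`, is *real* if whenever
`f 0, …, f (m-1) ∈ A^n` satisfy `∑ i, star (f i j) • f i ∈ N` for every coordinate `j`,
each `f i` lies in `N`. -/
def Submodule.IsRealSubmoduleStar {A : Type*} [Ring A] [StarRing A] {n : ℕ}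
    (N : Submodule A (Fin n → A)) : Prop :=
  ∀ (m : ℕ) (f : Fin m → (Fin n → A)),
    (∀ j, (∑ i, star (f i j) • f i) ∈ N) → ∀ i, f i ∈ N

end

namespace VQN
section
open Polynomial
section A
variable {F : Type*} [Field F] [LinearOrder F] [IsStrictOrderedRing F]

def IVP (F : Type*) [Field F] [LinearOrder F] : Prop :=
  ∀ (p : F[X]) (a b : F), a ≤ b → p.eval a * p.eval b < 0 → ∃ c, a < c ∧ c < b ∧ p.eval c = 0

theorem sign_eq_of_mul_pos {x y : F} (h : 0 < x * y) : SignType.sign x = SignType.sign y := by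
  rcases pos_and_pos_or_neg_and_neg_of_mul_pos h with ⟨h1, h2⟩ | ⟨h1, h2⟩
  · rw [sign_pos h1, sign_pos h2]
  · rw [sign_neg h1, sign_neg h2]

theorem IVP.sign_eq (hF : IVP F) {p : F[X]} {a b : F} (hab : a ≤ b)
    (h : ∀ c, a ≤ c → c ≤ b → p.eval c ≠ 0) :
    SignType.sign (p.eval a) = SignType.sign (p.eval b) := by
  apply sign_eq_of_mul_pos
  have ha := h a le_rfl hab
  have hb := h b hab le_rfl
  rcases lt_or_gt_of_ne (mul_ne_zero ha hb) with h1 | h1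
  · obtain ⟨c, h2, h3, h4⟩ := hF p a b hab h1
    exact absurd h4 (h c h2.le h3.le)
  · exact h1

theorem near_right {s : F[X]} {b y : F} (hs : 0 < s.eval b) (hy : b < y) :
    ∃ m, b < m ∧ m < y ∧ 0 < s.eval m := by
  let _ : TopologicalSpace F := Preorder.topology F
  have _ : OrderTopology F := ⟨rfl⟩
  have h1 : ∀ᶠ t in nhdsWithin b (Set.Ioi b), 0 < s.eval t :=
    nhdsWithin_le_nhds ((s.continuous.tendsto b).eventually (lt_mem_nhds hs))
  have h2 : ∀ᶠ t in nhdsWithin b (Set.Ioi b), t ∈ Set.Ioo b y := Ioo_mem_nhdsGT hy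
  obtain ⟨m, hm, hm2⟩ := (h1.and h2).exists
  exact ⟨m, hm2.1, hm2.2, hm⟩

theorem near_left {s : F[X]} {b y : F} (hs : 0 < s.eval b) (hy : y < b) :
    ∃ m, y < m ∧ m < b ∧ 0 < s.eval m := by
  let _ : TopologicalSpace F := Preorder.topology F
  have _ : OrderTopology F := ⟨rfl⟩
  have h1 : ∀ᶠ t in nhdsWithin b (Set.Iio b), 0 < s.eval t :=
    nhdsWithin_le_nhds ((s.continuous.tendsto b).eventually (lt_mem_nhds hs))
  have h2 : ∀ᶠ t in nhdsWithin b (Set.Iio b), t ∈ Set.Ioo y b := Ioo_mem_nhdsLT hy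
  obtain ⟨m, hm, hm2⟩ := (h1.and h2).exists
  exact ⟨m, hm2.1, hm2.2, hm⟩

/-- near a root, `(t-b) r r'` is positive -/
theorem root_factor {r : F[X]} (hr : r ≠ 0) {b : F} (hb : r.eval b = 0) :
    ∃ s : F[X], 0 < s.eval b ∧ ∀ t, t ≠ b → 0 < s.eval t →
      0 < (t - b) * (r.eval t * (derivative r).eval t) := by
  obtain ⟨h, hh, hnd⟩ := Polynomial.exists_eq_pow_rootMultiplicity_mul_and_not_dvd r hr b
  have hm : 0 < r.rootMultiplicity b := (rootMultiplicity_pos hr).2 hb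
  obtain ⟨k, hk⟩ : ∃ k, r.rootMultiplicity b = k + 1 := ⟨_, (Nat.succ_pred_eq_of_pos hm).symm⟩
  rw [hk] at hh
  have hhb : h.eval b ≠ 0 := fun h0 => hnd (dvd_iff_isRoot.2 h0)
  refine ⟨C ((k : F) + 1) * h ^ 2 + (X - C b) * h * derivative h, ?_, ?_⟩
  · simp only [eval_add, eval_mul, eval_C, eval_pow, eval_sub, eval_X, sub_self, zero_mul, add_zero]
    positivity
  · intro t ht hs
    have h1 : (t - b) * (r.eval t * (derivative r).eval t) = ((t - b) ^ (k + 1)) ^ 2 *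
      (C ((k : F) + 1) * h ^ 2 + (X - C b) * h * derivative h).eval t := by
      rw [hh]
      simp [derivative_mul, derivative_pow]
      ring
    rw [h1]
    have : t - b ≠ 0 := sub_ne_zero.2 ht
    positivity

theorem IVP.mono (hF : IVP F) {p : F[X]} {x y : F} (hxy : x < y)
    (hd : ∀ t, x < t → t < y → 0 < (derivative p).eval t) : p.eval x < p.eval y := by
  by_contra hcon
  push Not at hcon
  set r := p - C (p.eval x) with hrdef
  have hdr : derivative r = derivative p := by simp [hrdef]
  have hr0 : r ≠ 0 := by
    intro h0
    obtain ⟨t, h1, h2⟩ := exists_between hxy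
    have := hd t h1 h2
    rw [← hdr, h0] at this
    simp at this
  have hrx : r.eval x = 0 := by simp [hrdef]
  have hry : r.eval y ≤ 0 := by simp [hrdef]; exact hcon
  -- positivity right of x
  have hpos : ∀ z, x < z → ∃ m, x < m ∧ m < z ∧ m < y ∧ 0 < r.eval m := by
    intro z hz
    obtain ⟨s, hs, hs2⟩ := root_factor hr0 hrx
    obtain ⟨m, h1, h2, h3⟩ := near_right hs (lt_min hz hxy)
    refine ⟨m, h1, h2.trans_le (min_le_left _ _), h2.trans_le (min_le_right _ _), ?_⟩
    have := hs2 m h1.ne' h3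
    rw [hdr] at this
    have h4 := (mul_pos_iff_of_pos_left (sub_pos.2 h1)).1 this
    exact (mul_pos_iff_of_pos_right (hd m h1 (h2.trans_le (min_le_right _ _)))).1 h4
  -- a root in (x,y]
  have hroot : ∃ b, x < b ∧ b ≤ y ∧ r.eval b = 0 := by
    obtain ⟨m, h1, h2, -, h3⟩ := hpos y hxy
    rcases hry.eq_or_lt with h | h
    · exact ⟨y, hxy, le_rfl, h⟩
    · obtain ⟨c, h4, h5, h6⟩ := hF r m y h2.le (mul_neg_of_pos_of_neg h3 h)
      exact ⟨c, h1.trans h4, h5.le, h6⟩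
  let Rt := r.roots.toFinset.filter (fun b => x < b ∧ b ≤ y)
  have hRt : Rt.Nonempty := by
    obtain ⟨b, h1, h2, h3⟩ := hroot
    exact ⟨b, by simp [Rt, h1, h2, h3, hr0]⟩
  obtain ⟨b, hbm, hbmin⟩ := Finset.exists_min_image Rt id hRt
  simp [Rt, hr0] at hbm hbmin
  obtain ⟨hb0, hxb, hby⟩ := hbm
  obtain ⟨m, h1, h2, h3, h4⟩ := hpos b hxb
  obtain ⟨s, hs, hs2⟩ := root_factor hr0 hb0
  obtain ⟨m', h1', h2', h3'⟩ := near_left hs h2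
  have h5 := hs2 m' h2'.ne h3'
  rw [hdr] at h5
  have h6 := hd m' (h1.trans h1') (h2'.trans_le hby)
  have h7 : r.eval m' < 0 := by
    by_contra hc
    push Not at hc
    have : (m' - b) * (r.eval m' * (derivative p).eval m') ≤ 0 :=
      mul_nonpos_of_nonpos_of_nonneg (sub_neg.2 h2').le (mul_nonneg hc h6.le)
    linarith
  obtain ⟨c, hc1, hc2, hc3⟩ := hF r m m' h1'.le (mul_neg_of_pos_of_neg h4 h7)
  have := hbmin c hc3 (h1.trans hc1) (hc2.le.trans (h2'.le.trans hby))
  exact absurd (hc2.trans h2') (not_lt.2 this)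

theorem tendsto_top {n : ℕ} : ∀ {p : F[X]}, p.natDegree = n + 1 → 0 < p.leadingCoeff →
    Filter.Tendsto (fun x => p.eval x) Filter.atTop Filter.atTop := by
  induction n with
  | zero =>
    intro p hp hl
    rw [leadingCoeff, hp] at hl
    have : (fun x => p.eval x) = fun x => p.coeff 1 * x + p.coeff 0 := by
      funext x
      conv_lhs => rw [eq_X_add_C_of_natDegree_le_one hp.le]
      simp
    rw [this]
    exact Filter.tendsto_atTop_add_const_right _ _ (Filter.Tendsto.const_mul_atTop hl Filter.tendsto_id)
  | succ n ih =>
    intro p hp hl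
    have h1 : p.divX.natDegree = n + 1 := by rw [natDegree_divX_eq_natDegree_tsub_one, hp]; rfl
    have h2 : p.divX.leadingCoeff = p.leadingCoeff := by
      rw [leadingCoeff, leadingCoeff, h1, hp, coeff_divX]
    have h3 := ih h1 (h2 ▸ hl)
    have : (fun x => p.eval x) = fun x => p.divX.eval x * x + p.coeff 0 := by
      funext x
      conv_lhs => rw [← divX_mul_X_add p]
      simp
    rw [this]
    exact Filter.tendsto_atTop_add_const_right _ _ (h3.atTop_mul_atTop₀ Filter.tendsto_id)

theorem ev_top_pos {p : F[X]} (h : 0 < p.leadingCoeff) : ∀ᶠ x in Filter.atTop, 0 < p.eval x := by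
  rcases hn : p.natDegree with _ | n
  · rw [eq_C_of_natDegree_eq_zero hn] at h ⊢
    simp at h ⊢
    exact ⟨0, fun _ _ => h⟩
  · exact (tendsto_top hn h).eventually_gt_atTop 0

theorem ev_top_of_deriv {p : F[X]} (h : ∃ᶠ x in Filter.atTop, 0 < (derivative p).eval x) :
    ∀ᶠ x in Filter.atTop, 0 < p.eval x := by
  apply ev_top_pos
  have hd : derivative p ≠ 0 := by
    intro h0
    simp [h0] at h
  have hp : p.natDegree ≠ 0 := by
    intro h0
    rw [eq_C_of_natDegree_eq_zero h0] at hd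
    simp at hd
  by_contra hc
  have hl : p.leadingCoeff < 0 := lt_of_le_of_ne (not_lt.1 hc) (by
    intro h0; rw [leadingCoeff_eq_zero] at h0; simp [h0] at hp)
  have h2 : (derivative (-p)).leadingCoeff = (-p).leadingCoeff * p.natDegree := by
    rw [leadingCoeff, natDegree_derivative, natDegree_neg, coeff_derivative,leadingCoeff, natDegree_neg]
    have : p.natDegree - 1 + 1 = p.natDegree := by omega
    rw [this]
    congr 1
    exact_mod_cast this
  have h3 : 0 < (derivative (-p)).leadingCoeff := by
    rw [h2, leadingCoeff_neg]
    exact mul_pos (by linarith) (by positivity)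
  obtain ⟨x, hx1, hx2⟩ := (h.and_eventually (ev_top_pos h3)).exists
  simp at hx2
  linarith

theorem ev_bot_of_deriv {p : F[X]} (h : ∃ M, ∀ x < M, 0 < (derivative p).eval x) :
    ∃ M, ∀ x < M, p.eval x < 0 := by
  obtain ⟨M, hM⟩ := h
  have := ev_top_of_deriv (p := - p.comp (-X)) (by
    apply Filter.Eventually.frequently
    filter_upwards [Filter.eventually_gt_atTop (-M)] with x hx
    simp [derivative_comp]
    exact hM _ (by linarith))
  obtain ⟨M', hM'⟩ := Filter.eventually_atTop.1 this
  refine ⟨-M', fun x hx => ?_⟩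
  have := hM' (-x) (by linarith)
  simpa using this
end A
end
end VQN

namespace VQN
section
open Polynomial
section B
variable {F : Type*} [Field F] [LinearOrder F] [IsStrictOrderedRing F]
variable {F' : Type*} [Field F'] [LinearOrder F'] [IsStrictOrderedRing F']

theorem ptExt (hF : IVP F) (hF' : IVP F') {q : F[X]} {q' : F'[X]} {D : Finset F} {a : F} (ha : a ∉ D)
    {φ : F → F'} (hφ : StrictMonoOn φ D)
    (hs : ∀ d ∈ D, SignType.sign (q.eval d) = SignType.sign (q'.eval (φ d)))
    (hd : ∀ t, (∀ d ∈ D, d < a → d < t) → (∀ d ∈ D, a < d → t < d) → 0 < (derivative q).eval t)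
    (hd' : ∀ t, (∀ d ∈ D, d < a → φ d < t) → (∀ d ∈ D, a < d → t < φ d) →
      0 < (derivative q').eval t) :
    ∃ b, (∀ d ∈ D, d < a → φ d < b) ∧ (∀ d ∈ D, a < d → b < φ d) ∧
      SignType.sign (q.eval a) = SignType.sign (q'.eval b) := by
  classical
  obtain ⟨b0, hb1, hb2⟩ : ∃ b, (∀ d ∈ D, d < a → φ d < b) ∧ (∀ d ∈ D, a < d → b < φ d) := by
    obtain ⟨b, h1, h2⟩ := Order.exists_between_finsets ((D.filter (· < a)).image φ)
      ((D.filter (a < ·)).image φ) (by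
        simp only [Finset.mem_image, Finset.mem_filter]
        rintro _ ⟨x, ⟨hx, hxa⟩, rfl⟩ _ ⟨y, ⟨hy, hya⟩, rfl⟩
        exact hφ hx hy (hxa.trans hya))
    refine ⟨b, fun d hd hda => h1 _ ?_, fun d hd hda => h2 _ ?_⟩
    · exact Finset.mem_image_of_mem _ (by simp [hd, hda])
    · exact Finset.mem_image_of_mem _ (by simp [hd, hda])
  have hneg : q.eval a ≤ 0 → ∃ b, (∀ d ∈ D, d < a → φ d < b) ∧ (∀ d ∈ D, a < d → b < φ d) ∧
      q'.eval b < 0 := by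
    intro hqa
    by_cases hlo : (D.filter (· < a)).Nonempty
    · obtain ⟨x, hx, hxm⟩ := Finset.exists_max_image _ id hlo
      simp only [Finset.mem_filter, id] at hx hxm
      have h1 : q.eval x < q.eval a := hF.mono hx.2 fun t h1 h2 => hd t
        (fun d hdD hda => (hxm d ⟨hdD, hda⟩).trans_lt h1) (fun d hdD hda => h2.trans hda)
      have h2 : q'.eval (φ x) < 0 := by
        have := hs x hx.1
        rw [sign_neg (h1.trans_le hqa)] at this
        exact sign_eq_neg_one_iff.1 this.symm
      obtain ⟨m, h3, h4, h5⟩ := near_right (s := -q') (b := φ x) (y := b0) (by simpa using h2)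
        (hb1 x hx.1 hx.2)
      refine ⟨m, fun d hdD hda => ?_, fun d hdD hda => h4.trans (hb2 d hdD hda), by simpa using h5⟩
      exact (hφ.monotoneOn hdD hx.1 (hxm d ⟨hdD, hda⟩)).trans_lt h3
    · have hlo' : ∀ d ∈ D, ¬ d < a := fun d h1 h2 => hlo ⟨d, by simp [h1, h2]⟩
      obtain ⟨M, hM⟩ := ev_bot_of_deriv (p := q') ⟨b0, fun x hx => hd' x
        (fun d h1 h2 => absurd h2 (hlo' d h1)) (fun d h1 h2 => hx.trans (hb2 d h1 h2))⟩
      refine ⟨min M b0 - 1, fun d h1 h2 => absurd h2 (hlo' d h1), fun d h1 h2 => ?_, hM _ ?_⟩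
      · have := hb2 d h1 h2
        have := min_le_right M b0
        linarith
      · have := min_le_left M b0
        linarith
  have hpos : 0 ≤ q.eval a → ∃ b, (∀ d ∈ D, d < a → φ d < b) ∧ (∀ d ∈ D, a < d → b < φ d) ∧
      0 < q'.eval b := by
    intro hqa
    by_cases hlo : (D.filter (a < ·)).Nonempty
    · obtain ⟨x, hx, hxm⟩ := Finset.exists_min_image _ id hlo
      simp only [Finset.mem_filter, id] at hx hxm
      have h1 : q.eval a < q.eval x := hF.mono hx.2 fun t h1 h2 => hd t
        (fun d hdD hda => hda.trans h1) (fun d hdD hda => h2.trans_le (hxm d ⟨hdD, hda⟩))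
      have h2 : 0 < q'.eval (φ x) := by
        have := hs x hx.1
        rw [sign_pos (hqa.trans_lt h1)] at this
        exact sign_eq_one_iff.1 this.symm
      obtain ⟨m, h3, h4, h5⟩ := near_left (s := q') (b := φ x) (y := b0) h2
        (hb2 x hx.1 hx.2)
      refine ⟨m, fun d hdD hda => (hb1 d hdD hda).trans h3, fun d hdD hda => ?_, h5⟩
      exact h4.trans_le (hφ.monotoneOn hx.1 hdD (hxm d ⟨hdD, hda⟩))
    · have hlo' : ∀ d ∈ D, ¬ a < d := fun d h1 h2 => hlo ⟨d, by simp [h1, h2]⟩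
      have := ev_top_of_deriv (p := q') (by
        apply Filter.Eventually.frequently
        filter_upwards [Filter.eventually_gt_atTop b0] with x hx
        exact hd' x (fun d h1 h2 => (hb1 d h1 h2).trans hx) (fun d h1 h2 => absurd h2 (hlo' d h1)))
      obtain ⟨m, h1, h2⟩ := (this.and (Filter.eventually_gt_atTop b0)).exists
      exact ⟨m, fun d h3 h4 => (hb1 d h3 h4).trans h2, fun d h1 h2 => absurd h2 (hlo' d h1), h1⟩
  rcases lt_trichotomy (q.eval a) 0 with h | h | h
  · obtain ⟨b, h1, h2, h3⟩ := hneg h.le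
    exact ⟨b, h1, h2, by rw [sign_neg h, sign_neg h3]⟩
  · obtain ⟨b, h1, h2, h3⟩ := hneg h.le
    obtain ⟨c, h1', h2', h3'⟩ := hpos h.ge
    obtain ⟨e, he1, he2, he3⟩ : ∃ e, (∀ d ∈ D, d < a → φ d < e) ∧ (∀ d ∈ D, a < d → e < φ d) ∧
        q'.eval e = 0 := by
      rcases le_total b c with hbc | hbc
      · obtain ⟨e, he1, he2, he3⟩ := hF' q' b c hbc (mul_neg_of_neg_of_pos h3 h3')
        exact ⟨e, fun d h4 h5 => (h1 d h4 h5).trans he1, fun d h4 h5 => he2.trans (h2' d h4 h5), he3⟩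
      · obtain ⟨e, he1, he2, he3⟩ := hF' q' c b hbc (mul_neg_of_pos_of_neg h3' h3)
        exact ⟨e, fun d h4 h5 => (h1' d h4 h5).trans he1, fun d h4 h5 => he2.trans (h2 d h4 h5), he3⟩
    exact ⟨e, he1, he2, by rw [h, he3]; simp⟩
  · obtain ⟨b, h1, h2, h3⟩ := hpos h.le
    exact ⟨b, h1, h2, by rw [sign_pos h, sign_pos h3]⟩

variable {Q : Type*}

def Sim (P : Q → F[X]) (P' : Q → F'[X]) (W : Finset Q) : Prop :=
  ∀ A : Finset F, ∃ φ : F → F', StrictMonoOn φ A ∧ ∀ a ∈ A, ∀ s ∈ W,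
    SignType.sign ((P s).eval a) = SignType.sign ((P' s).eval (φ a))

open Classical in
noncomputable def zeros (P : Q → F[X]) (W : Finset Q) : Finset F :=
  W.biUnion fun s => (P s).roots.toFinset

theorem mem_zeros {P : Q → F[X]} {W : Finset Q} {z : F} :
    z ∈ zeros P W ↔ ∃ s ∈ W, P s ≠ 0 ∧ (P s).eval z = 0 := by
  simp [zeros]

theorem eval_zero_of_sign {x : F} {y : F'} (h : SignType.sign x = SignType.sign y) :
    x = 0 ↔ y = 0 := by
  rw [← sign_eq_zero_iff, h, sign_eq_zero_iff]

theorem sim_maps {P : Q → F[X]} {P' : Q → F'[X]} {W : Finset Q}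
    (hz : ∀ s ∈ W, P s = 0 ↔ P' s = 0) {A : Finset F} {φ : F → F'} (hZ : zeros P W ⊆ A)
    (hs : ∀ a ∈ A, ∀ s ∈ W,
      SignType.sign ((P s).eval a) = SignType.sign ((P' s).eval (φ a))) :
    ∀ z ∈ zeros P W, φ z ∈ zeros P' W := by
  intro z hzz
  obtain ⟨s, h1, h2, h3⟩ := mem_zeros.1 hzz
  exact mem_zeros.2 ⟨s, h1, fun h => h2 ((hz s h1).2 h),
    (eval_zero_of_sign (hs z (hZ hzz) s h1)).1 h3⟩

theorem card_le {P : Q → F[X]} {P' : Q → F'[X]} {W : Finset Q}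
    (hz : ∀ s ∈ W, P s = 0 ↔ P' s = 0) (h : Sim P P' W) :
    (zeros P W).card ≤ (zeros P' W).card := by
  obtain ⟨φ, h1, h2⟩ := h (zeros P W)
  exact Finset.card_le_card_of_injOn φ (sim_maps hz subset_rfl h2) h1.injOn

/-- signs are constant on gaps of `zeros` -/
theorem gap_sign (hF : IVP F) {P : Q → F[X]} {W : Finset Q} {a b : F}
    (hlt : ∀ z ∈ zeros P W, z < a ↔ z < b) (hgt : ∀ z ∈ zeros P W, a < z ↔ b < z)
    (ha : a ∉ zeros P W) {s : Q} (hs : s ∈ W) :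
    SignType.sign ((P s).eval a) = SignType.sign ((P s).eval b) := by
  by_cases h0 : P s = 0
  · simp [h0]
  have key : ∀ c, ¬ (min a b ≤ c ∧ c ≤ max a b ∧ (P s).eval c = 0) := by
    rintro c ⟨h1, h2, h3⟩
    have hc : c ∈ zeros P W := mem_zeros.2 ⟨s, hs, h0, h3⟩
    have hca : c ≠ a := fun h => ha (h ▸ hc)
    rcases lt_or_gt_of_ne hca with h | h
    · have := (hlt c hc).1 h
      exact absurd h1 (not_le.2 (lt_min h this))
    · have := (hgt c hc).1 h
      exact absurd h2 (not_le.2 (max_lt h this))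
  rcases le_total a b with hab | hab
  · exact hF.sign_eq hab fun c h1 h2 h3 => key c ⟨(min_le_left _ _).trans h1, h2.trans (le_max_right _ _), h3⟩
  · exact (hF.sign_eq hab fun c h1 h2 h3 => key c ⟨(min_le_right _ _).trans h1, h2.trans (le_max_left _ _), h3⟩).symm

theorem samples (Z : Finset F) : ∃ S : Finset F, ∀ a, a ∉ Z → ∃ c ∈ S, c ∉ Z ∧
    ∀ z ∈ Z, z < a ↔ z < c := by
  classical
  let f : Finset F → F := fun L => if h : ∃ c, c ∉ Z ∧ Z.filter (· < c) = L then h.choose else 0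
  refine ⟨Z.powerset.image f, fun a ha => ?_⟩
  have h : ∃ c, c ∉ Z ∧ Z.filter (· < c) = Z.filter (· < a) := ⟨a, ha, rfl⟩
  refine ⟨f (Z.filter (· < a)), Finset.mem_image_of_mem _ (by simp), ?_⟩
  have : f (Z.filter (· < a)) = h.choose := by simp only [f]; rw [dif_pos h]
  rw [this]
  refine ⟨h.choose_spec.1, fun z hz => ?_⟩
  have := Finset.ext_iff.1 h.choose_spec.2 z
  simp [hz] at this
  exact this.symm

theorem gt_of_lt {Z : Finset F} {a c : F} (ha : a ∉ Z) (hc : c ∉ Z)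
    (h : ∀ z ∈ Z, z < a ↔ z < c) : ∀ z ∈ Z, a < z ↔ c < z := by
  intro z hz
  have h1 : z ≠ a := fun h => ha (h ▸ hz)
  have h2 : z ≠ c := fun h => hc (h ▸ hz)
  have := h z hz
  constructor
  · intro h3
    exact lt_of_le_of_ne (not_lt.1 fun h4 => absurd (this.2 h4) h3.not_gt) h2.symm
  · intro h3
    exact lt_of_le_of_ne (not_lt.1 fun h4 => absurd (this.1 h4) h3.not_gt) h1.symm

theorem sim_step [DecidableEq Q] (hF : IVP F) (hF' : IVP F') {P : Q → F[X]} {P' : Q → F'[X]} {W : Finset Q}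
    (h1 : Sim P P' W) (h2 : Sim P' P W) (hz : ∀ s ∈ W, P s = 0 ↔ P' s = 0)
    {p dp : Q} (hdp : dp ∈ W) (hdP : P dp = derivative (P p)) (hdP' : P' dp = derivative (P' p))
    (hd0 : P dp ≠ 0)
    (hrem : ∀ s ∈ W, P s ≠ 0 → ∃ r ∈ W,
      (∀ z, (P s).eval z = 0 → SignType.sign ((P p).eval z) = SignType.sign ((P r).eval z)) ∧
      (∀ z, (P' s).eval z = 0 → SignType.sign ((P' p).eval z) = SignType.sign ((P' r).eval z))) :
    Sim P P' (insert p W) := by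
  classical
  set Z := zeros P W with hZ
  set Z' := zeros P' W with hZ'
  obtain ⟨S, hS⟩ := samples Z
  obtain ⟨φ₀, hm0, hs0⟩ := h1 (Z ∪ S)
  have hmaps : ∀ z ∈ Z, φ₀ z ∈ Z' := sim_maps hz Finset.subset_union_left hs0
  have hcard : Z.card = Z'.card :=
    le_antisymm (card_le hz h1) (card_le (fun s hs => (hz s hs).symm) h2)
  have himg : Z.image φ₀ = Z' := by
    apply Finset.eq_of_subset_of_card_le
    · intro y hy
      obtain ⟨z, h, rfl⟩ := Finset.mem_image.1 hy
      exact hmaps z h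
    · rw [Finset.card_image_of_injOn (hm0.injOn.mono (by simp)), hcard]
  -- gap property
  have hgap : ∀ a, a ∉ Z → ∀ b, (∀ z ∈ Z, z < a → φ₀ z < b) → (∀ z ∈ Z, a < z → b < φ₀ z) →
      ∀ s ∈ W, SignType.sign ((P s).eval a) = SignType.sign ((P' s).eval b) := by
    intro a ha b hb1 hb2 s hs
    obtain ⟨c, hcS, hcZ, hc⟩ := hS a ha
    have hc' := gt_of_lt ha hcZ hc
    rw [gap_sign hF hc hc' ha hs, hs0 c (by simp [hcS]) s hs]
    have hbZ : b ∉ Z' := by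
      rw [← himg]
      intro h
      obtain ⟨z, hz1, hz2⟩ := Finset.mem_image.1 h
      have hza : z ≠ a := fun h => ha (h ▸ hz1)
      rcases lt_or_gt_of_ne hza with h | h
      · exact absurd hz2 (hb1 z hz1 h).ne
      · exact absurd hz2 (hb2 z hz1 h).ne'
    have hlt : ∀ z ∈ Z', z < b ↔ z < φ₀ c := by
      rw [← himg]
      intro y hy
      obtain ⟨z, hz1, rfl⟩ := Finset.mem_image.1 hy
      have hza : z ≠ a := fun h => ha (h ▸ hz1)
      rw [hm0.lt_iff_lt (by simp [hz1]) (by simp [hcS]), ← hc z hz1]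
      refine ⟨fun h => ?_, fun h => hb1 z hz1 h⟩
      by_contra h3
      exact absurd (hb2 z hz1 (lt_of_le_of_ne (not_lt.1 h3) hza.symm)) h.not_gt
    have hcZ' : φ₀ c ∉ Z' := by
      rw [← himg]
      intro h
      obtain ⟨z, hz1, hz2⟩ := Finset.mem_image.1 h
      have := hm0.injOn (by simp [hz1]) (by simp [hcS]) hz2
      exact hcZ (this ▸ hz1)
    exact (gap_sign hF' hlt (gt_of_lt hbZ hcZ' hlt) hbZ hs).symm
  -- main extension
  have main : ∀ A : Finset F, ∃ φ : F → F', StrictMonoOn φ (Z ∪ A : Finset F) ∧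
      (∀ z ∈ Z, φ z = φ₀ z) ∧ ∀ a ∈ Z ∪ A, ∀ s ∈ insert p W,
        SignType.sign ((P s).eval a) = SignType.sign ((P' s).eval (φ a)) := by
    intro A
    induction A using Finset.induction_on with
    | empty =>
      refine ⟨φ₀, hm0.mono (by simp), fun _ _ => rfl, ?_⟩
      intro a ha s hs
      have haZ : a ∈ Z := by simpa using ha
      rcases Finset.mem_insert.1 hs with rfl | hs
      · obtain ⟨t, ht1, ht2, ht3⟩ := mem_zeros.1 haZ
        obtain ⟨r, hr1, hr2, hr3⟩ := hrem t ht1 ht2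
        have hs0a := hs0 a (by simp [haZ])
        rw [hr2 a ht3, hr3 (φ₀ a) ((eval_zero_of_sign (hs0a t ht1)).1 ht3), hs0a r hr1]
      · exact hs0 a (by simp [haZ]) s hs
    | insert a A haA ih =>
      obtain ⟨φ, hφ, hφ0, hφs⟩ := ih
      by_cases haD : a ∈ Z ∪ A
      · have : Z ∪ insert a A = Z ∪ A := by
          ext x; simp only [Finset.mem_union, Finset.mem_insert] at haD ⊢
          constructor
          · rintro (h | rfl | h)
            · exact Or.inl h
            · exact haD
            · exact Or.inr h
          · tauto
        rw [this]
        exact ⟨φ, hφ, hφ0, hφs⟩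
      · have haZ : a ∉ Z := fun h => haD (by simp [h])
        have hgapφ : ∀ t, t ∉ Z → ∀ b, (∀ z ∈ Z, z < t → φ z < b) → (∀ z ∈ Z, t < z → b < φ z) →
            ∀ s ∈ W, SignType.sign ((P s).eval t) = SignType.sign ((P' s).eval b) := by
          intro t ht b h3 h4
          exact hgap t ht b (fun z hz hzt => hφ0 z hz ▸ h3 z hz hzt)
            (fun z hz hzt => hφ0 z hz ▸ h4 z hz hzt)
        obtain ⟨b, hb1, hb2, hb3⟩ : ∃ b, (∀ d ∈ Z ∪ A, d < a → φ d < b) ∧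
            (∀ d ∈ Z ∪ A, a < d → b < φ d) ∧
            SignType.sign ((P p).eval a) = SignType.sign ((P' p).eval b) := by
          have hda : (P dp).eval a ≠ 0 := fun h => haZ (mem_zeros.2 ⟨dp, hdp, hd0, h⟩)
          have hconst : ∀ t, (∀ d ∈ Z ∪ A, d < a → d < t) → (∀ d ∈ Z ∪ A, a < d → t < d) →
              SignType.sign ((P dp).eval a) = SignType.sign ((P dp).eval t) := by
            intro t h3 h4
            have hne : ∀ z ∈ Z, z ≠ a := fun z hz h => haZ (h ▸ hz)
            refine gap_sign hF (W := W) ?_ ?_ haZ hdp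
            · intro z hz
              refine ⟨h3 z (by simp [← hZ] at hz; simp [hz]), fun h => ?_⟩
              by_contra h5
              exact absurd (h4 z (Finset.mem_union_left _ hz) (lt_of_le_of_ne (not_lt.1 h5) (hne z hz).symm)) h.not_gt
            · intro z hz
              refine ⟨h4 z (Finset.mem_union_left _ hz), fun h => ?_⟩
              by_contra h5
              exact absurd (h3 z (Finset.mem_union_left _ hz) (lt_of_le_of_ne (not_lt.1 h5) (hne z hz))) h.not_gt
          have hconst' : ∀ t, (∀ d ∈ Z ∪ A, d < a → φ d < t) → (∀ d ∈ Z ∪ A, a < d → t < φ d) →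
              SignType.sign ((P dp).eval a) = SignType.sign ((P' dp).eval t) := by
            intro t h3 h4
            exact hgapφ a haZ t (fun z hz => h3 z (Finset.mem_union_left _ hz))
              (fun z hz => h4 z (Finset.mem_union_left _ hz)) dp hdp
          rcases lt_or_gt_of_ne hda with hneg | hpos
          · obtain ⟨b, hb1, hb2, hb3⟩ := ptExt hF hF' (q := -P p) (q' := -P' p) haD hφ
              (by
                intro d hd
                have := hφs d hd p (by simp)
                simp [Left.sign_neg, this])
              (by
                intro t h3 h4
                have := hconst t h3 h4
                rw [sign_neg hneg, eq_comm, sign_eq_neg_one_iff, hdP] at this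
                simpa using this)
              (by
                intro t h3 h4
                have := hconst' t h3 h4
                rw [sign_neg hneg, eq_comm, sign_eq_neg_one_iff, hdP'] at this
                simpa using this)
            refine ⟨b, hb1, hb2, ?_⟩
            simpa [Left.sign_neg] using hb3
          · exact ptExt hF hF' (q := P p) (q' := P' p) haD hφ
              (fun d hd => hφs d hd p (by simp))
              (by
                intro t h3 h4
                have := hconst t h3 h4
                rw [sign_pos hpos, eq_comm, sign_eq_one_iff, hdP] at this
                simpa using this)
              (by
                intro t h3 h4
                have := hconst' t h3 h4
                rw [sign_pos hpos, eq_comm, sign_eq_one_iff, hdP'] at this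
                simpa using this)
        have hu : ∀ d ∈ Z ∪ A, Function.update φ a b d = φ d := fun d hd =>
          Function.update_of_ne (fun h : d = a => haD (h ▸ hd)) _ _
        have hmem : ∀ d ∈ Z ∪ insert a A, d = a ∨ d ∈ Z ∪ A := by
          intro d hd; simp only [Finset.mem_union, Finset.mem_insert] at hd ⊢; tauto
        refine ⟨Function.update φ a b, ?_, ?_, ?_⟩
        · intro x hx y hy hxy
          rcases hmem x hx with rfl | hx' <;> rcases hmem y hy with rfl | hy'
          · exact absurd hxy (lt_irrefl _)
          · rw [Function.update_self, hu y hy']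
            exact hb2 y hy' hxy
          · rw [Function.update_self, hu x hx']
            exact hb1 x hx' hxy
          · rw [hu x hx', hu y hy']
            exact hφ hx' hy' hxy
        · intro z hz
          rw [hu z (Finset.mem_union_left _ hz), hφ0 z hz]
        · intro d hd s hs
          rcases hmem d hd with rfl | hd'
          · rw [Function.update_self]
            rcases Finset.mem_insert.1 hs with rfl | hs
            · exact hb3
            · exact hgapφ d haZ b (fun z hz => hb1 z (Finset.mem_union_left _ hz))
                (fun z hz => hb2 z (Finset.mem_union_left _ hz)) s hs
          · rw [hu d hd']
            exact hφs d hd' s hs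
  intro A
  obtain ⟨φ, hφ, -, hφs⟩ := main A
  exact ⟨φ, hφ.mono (by simp), fun a ha => hφs a (by simp [ha])⟩
end B
end
end VQN

namespace VQN
section
open Polynomial
section C
variable {F : Type*} [Field F] [LinearOrder F] [IsStrictOrderedRing F]
variable {F' : Type*} [Field F'] [LinearOrder F'] [IsStrictOrderedRing F']
variable {R : Type*} [CommRing R]

theorem prem_aux {s : R[X]} (hs : 0 < s.natDegree) : ∀ (n : ℕ) (p : R[X]), p.natDegree ≤ n →
    ∃ (k : ℕ) (q r : R[X]), C s.leadingCoeff ^ k * p = s * q + r ∧ r.natDegree < s.natDegree := by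
  intro n
  induction n with
  | zero => 
    intro p hp
    exact ⟨0, 0, p, by simp, by omega⟩
  | succ n ih =>
    intro p hp
    by_cases hlt : p.natDegree < s.natDegree
    · exact ⟨0, 0, p, by simp, hlt⟩
    · push Not at hlt
      set m := p.natDegree with hm
      set p1 := C s.leadingCoeff * p - s * (C p.leadingCoeff * X ^ (m - s.natDegree)) with hp1
      have h1 : p1.natDegree ≤ m := by
        refine (natDegree_sub_le _ _).trans (max_le ?_ ?_)
        · exact natDegree_C_mul_le _ _
        · refine natDegree_mul_le.trans ?_
          have := natDegree_C_mul_X_pow_le p.leadingCoeff (m - s.natDegree)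
          omega
      have h2 : p1.coeff m = 0 := by
        rw [hp1, coeff_sub, coeff_C_mul, ← mul_assoc, coeff_mul_X_pow', if_pos (by omega),
          coeff_mul_C]
        have : m - (m - s.natDegree) = s.natDegree := by omega
        rw [this, coeff_natDegree, coeff_natDegree]
        ring
      have h3 : p1.natDegree ≤ n := by
        by_contra h
        have h4 : p1.natDegree = m := by omega
        rw [← h4, coeff_natDegree, leadingCoeff_eq_zero] at h2
        rw [h2] at h
        simp at h
      obtain ⟨k, q, r, hk, hr⟩ := ih p1 h3
      refine ⟨k + 1, C s.leadingCoeff ^ k * (C p.leadingCoeff * X ^ (m - s.natDegree)) + q, r, ?_, hr⟩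
      have : C s.leadingCoeff * p = p1 + s * (C p.leadingCoeff * X ^ (m - s.natDegree)) := by
        rw [hp1]; ring
      rw [pow_succ, mul_assoc, this, mul_add, hk]
      ring

theorem prem_exists (p s : R[X]) : ∃ r : R[X], 0 < s.natDegree → r.natDegree < s.natDegree ∧
    ∃ (k : ℕ) (q : R[X]), C s.leadingCoeff ^ (2 * k) * p = s * q + r := by
  by_cases hs : 0 < s.natDegree
  · obtain ⟨k, q, r, h1, h2⟩ := prem_aux hs _ p le_rfl
    refine ⟨C s.leadingCoeff ^ k * r, fun _ => ⟨?_, k, C s.leadingCoeff ^ k * q, ?_⟩⟩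
    · rw [← C_pow]
      exact (natDegree_C_mul_le _ _).trans_lt h2
    · rw [two_mul, pow_add, mul_assoc, h1]; ring
  · exact ⟨0, fun h => absurd h hs⟩

noncomputable def prem (p s : R[X]) : R[X] := (prem_exists p s).choose

def Cl (V : Finset R[X]) (D : ℕ) : Prop :=
  (∀ p ∈ V, D < p.natDegree → derivative p ∈ V ∧ p.eraseLead ∈ V) ∧
  ∀ p ∈ V, ∀ s ∈ V, D < s.natDegree → s.natDegree ≤ p.natDegree → prem p s ∈ V

theorem exists_closure (S : Finset R[X]) : ∃ V : Finset R[X], S ⊆ V ∧ Cl V 0 := by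
  classical
  set B := S.sup natDegree with hB
  have key : ∀ k, ∃ V : Finset R[X], S ⊆ V ∧ Cl V (B - k) := by
    intro k
    induction k with
    | zero =>
      have hle : ∀ p ∈ S, p.natDegree ≤ B := fun p hp => Finset.le_sup (f := natDegree) hp
      refine ⟨S, subset_rfl, fun p hp h => ?_, fun p _ s hs h => ?_⟩
      · have := hle p hp; omega
      · have := hle s hs; omega
    | succ k ih =>
      obtain ⟨V, hSV, hV1, hV2⟩ := ih
      by_cases h0 : B - k = 0
      · have : B - (k + 1) = B - k := by omega
        rw [this]
        exact ⟨V, hSV, hV1, hV2⟩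
      obtain ⟨D, hD⟩ : ∃ D, B - k = D + 1 := ⟨B - k - 1, by omega⟩
      have hD' : B - (k + 1) = D := by omega
      rw [hD'] 
      rw [hD] at hV1 hV2
      set T := V.filter (fun p => p.natDegree = D + 1) with hT
      have hTm : ∀ p, p ∈ T ↔ p ∈ V ∧ p.natDegree = D + 1 := by simp [hT]
      set V' := V ∪ (T.image (fun p => derivative p) ∪ (T.image eraseLead ∪
        Finset.image₂ prem V T)) with hV'
      have hnew : ∀ p ∈ V', D < p.natDegree → p ∈ V := by
        intro p hp hdeg
        simp only [hV', Finset.mem_union, Finset.mem_image, Finset.mem_image₂, hTm] at hp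
        rcases hp with h | ⟨t, ⟨ht, ht2⟩, rfl⟩ | ⟨t, ⟨ht, ht2⟩, rfl⟩ | ⟨a, ha, t, ⟨ht, ht2⟩, rfl⟩
        · exact h
        · have := natDegree_derivative_le t; omega
        · have := eraseLead_natDegree_le t; omega
        · have := ((prem_exists a t).choose_spec (by omega)).1
          change D < (prem_exists a t).choose.natDegree at hdeg
          omega
      refine ⟨V', hSV.trans Finset.subset_union_left, ?_, ?_⟩
      · intro p hp hdeg
        have hpV := hnew p hp hdeg
        by_cases h : p.natDegree = D + 1
        · have hpT := (hTm p).2 ⟨hpV, h⟩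
          refine ⟨Finset.mem_union_right _ (Finset.mem_union_left _ (Finset.mem_image_of_mem _ hpT)),
            Finset.mem_union_right _ (Finset.mem_union_right _ (Finset.mem_union_left _ 
              (Finset.mem_image_of_mem _ hpT)))⟩
        · have := hV1 p hpV (by omega)
          exact ⟨Finset.mem_union_left _ this.1, Finset.mem_union_left _ this.2⟩
      · intro p hp s hs hdeg hle
        have hpV := hnew p hp (by omega)
        have hsV := hnew s hs hdeg
        by_cases h : s.natDegree = D + 1
        · have hsT := (hTm s).2 ⟨hsV, h⟩
          exact Finset.mem_union_right _ (Finset.mem_union_right _ (Finset.mem_union_right _ 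
              (Finset.mem_image₂_of_mem hpV hsT)))
        · exact Finset.mem_union_left _ (hV2 p hpV s hsV (by omega) hle)
  obtain ⟨V, h1, h2⟩ := key B
  rw [Nat.sub_self] at h2
  exact ⟨V, h1, h2⟩

theorem Sim.empty {Q : Type*} (P : Q → F[X]) (P' : Q → F'[X]) : Sim P P' ∅ := by
  intro A
  refine ⟨fun a => ((A.filter (· < a)).card : F'), ?_, by simp⟩
  intro a ha b hb hab
  have : (A.filter (· < a)).card < (A.filter (· < b)).card := by
    apply Finset.card_lt_card
    refine ⟨fun x hx => ?_, fun h => ?_⟩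
    · simp at hx ⊢; exact ⟨hx.1, hx.2.trans hab⟩
    · have := h (show a ∈ _ by simp; exact ⟨ha, hab⟩)
      simp at this
  exact Nat.cast_lt.2 this

theorem Sim.insert_eq {Q : Type*} [DecidableEq Q] {P : Q → F[X]} {P' : Q → F'[X]} {W : Finset Q}
    (h : Sim P P' W) {p t : Q} (ht : t ∈ W) (h1 : P p = P t) (h2 : P' p = P' t) :
    Sim P P' (insert p W) := by
  intro A
  obtain ⟨φ, h3, h4⟩ := h A
  refine ⟨φ, h3, fun a ha s hs => ?_⟩
  rcases Finset.mem_insert.1 hs with rfl | hs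
  · rw [h1, h2]; exact h4 a ha t ht
  · exact h4 a ha s hs

theorem Sim.insert_const {Q : Type*} [DecidableEq Q] {P : Q → F[X]} {P' : Q → F'[X]} {W : Finset Q}
    (h : Sim P P' W) {p : Q} 
    (hc : ∀ a b, SignType.sign ((P p).eval a) = SignType.sign ((P' p).eval b)) :
    Sim P P' (insert p W) := by
  intro A
  obtain ⟨φ, h3, h4⟩ := h A
  refine ⟨φ, h3, fun a ha s hs => ?_⟩
  rcases Finset.mem_insert.1 hs with rfl | hs
  · exact hc _ _
  · exact h4 a ha s hs

theorem map_eraseLead (ψ : R →+* F) {p : R[X]} (h : ψ p.leadingCoeff = 0) :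
    p.map ψ = p.eraseLead.map ψ := by
  conv_lhs => rw [← eraseLead_add_C_mul_X_pow p]
  rw [Polynomial.map_add, Polynomial.map_mul, map_C, h, C_0, zero_mul, add_zero]

theorem sim_norm {V : Finset R[X]} (hV : Cl V 0) (ψ : R →+* F) (ψ' : R →+* F')
    (hψ : ∀ s ∈ V, SignType.sign (ψ s.leadingCoeff) = SignType.sign (ψ' s.leadingCoeff)) :
    ∀ (n : ℕ), ∀ s ∈ V, s.natDegree ≤ n → (s.map ψ = 0 ∧ s.map ψ' = 0) ∨
      ∃ t ∈ V, t.natDegree ≤ s.natDegree ∧ s.map ψ = t.map ψ ∧ s.map ψ' = t.map ψ' ∧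
        ψ t.leadingCoeff ≠ 0 ∧ ψ' t.leadingCoeff ≠ 0 := by
  intro n
  induction n with
  | zero =>
    intro s hs hn
    by_cases h : ψ s.leadingCoeff = 0
    · have h' := (eval_zero_of_sign (hψ s hs)).1 h
      left
      rw [map_eraseLead ψ h, map_eraseLead ψ' h']
      have : s.eraseLead = 0 := by
        rw [eq_C_of_natDegree_eq_zero (Nat.le_zero.1 hn)]
        simp
      simp [this]
    · exact Or.inr ⟨s, hs, le_rfl, rfl, rfl, h, fun h' => h ((eval_zero_of_sign (hψ s hs)).2 h')⟩
  | succ n ih =>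
    intro s hs hn
    by_cases hn' : s.natDegree ≤ n
    · exact ih s hs hn'
    by_cases h : ψ s.leadingCoeff = 0
    · have h' := (eval_zero_of_sign (hψ s hs)).1 h
      rw [map_eraseLead ψ h, map_eraseLead ψ' h']
      have hd := eraseLead_natDegree_le s
      rcases ih s.eraseLead (hV.1 s hs (by omega)).2 (by omega) with h1 | ⟨t, h1, h2, h3⟩
      · exact Or.inl h1
      · exact Or.inr ⟨t, h1, by omega, h3⟩
    · exact Or.inr ⟨s, hs, le_rfl, rfl, rfl, h, fun h' => h ((eval_zero_of_sign (hψ s hs)).2 h')⟩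

theorem sign_prem {p s : R[X]} (hs : 0 < s.natDegree) (ψ : R →+* F) (h : ψ s.leadingCoeff ≠ 0)
    (z : F) (hz : (s.map ψ).eval z = 0) :
    SignType.sign ((p.map ψ).eval z) = SignType.sign (((prem p s).map ψ).eval z) := by
  obtain ⟨-, k, q, hk⟩ := (prem_exists p s).choose_spec hs
  change _ = s * q + prem p s at hk
  have h1 := congrArg (fun f => (f.map ψ).eval z) hk
  simp only [Polynomial.map_mul, Polynomial.map_add, Polynomial.map_pow, eval_mul, eval_add,
    eval_pow, hz, zero_mul, zero_add, map_C, eval_C] at h1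
  have hp : 0 < ψ s.leadingCoeff ^ (2*k) := by rw [pow_mul]; positivity
  rw [← h1, sign_mul, sign_pos hp, one_mul]

theorem sim_all {V : Finset R[X]} (hV : Cl V 0) (hF : IVP F) (hF' : IVP F')
    (ψ : R →+* F) (ψ' : R →+* F')
    (hψ : ∀ s ∈ V, SignType.sign (ψ s.leadingCoeff) = SignType.sign (ψ' s.leadingCoeff)) :
    Sim (fun s : R[X] => s.map ψ) (fun s => s.map ψ') V := by
  classical
  set P := (fun s : R[X] => s.map ψ) with hP
  set P' := (fun s : R[X] => s.map ψ') with hP'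
  have hz : ∀ s ∈ V, P s = 0 ↔ P' s = 0 := by
    intro s hs
    rcases sim_norm hV ψ ψ' hψ _ s hs le_rfl with h | ⟨t, h1, h2, h3, h4, h5, h6⟩
    · simp [hP, hP', h]
    · have e1 : t.map ψ ≠ 0 := fun h => h5 (by rw [← coeff_natDegree, ← coeff_map, h]; simp)
      have e2 : t.map ψ' ≠ 0 := fun h => h6 (by rw [← coeff_natDegree, ← coeff_map, h]; simp)
      simp [hP, hP', h3, h4, e1, e2]
  have outer : ∀ D, Sim P P' (V.filter (fun s => s.natDegree < D)) ∧
      Sim P' P (V.filter (fun s => s.natDegree < D)) := by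
    intro D
    induction D with
    | zero => simpa using ⟨Sim.empty P P', Sim.empty P' P⟩
    | succ D ih =>
      have inner : ∀ Y : Finset R[X], Y ⊆ V.filter (fun s => s.natDegree = D) → 
          Sim P P' (V.filter (fun s => s.natDegree < D) ∪ Y) ∧
          Sim P' P (V.filter (fun s => s.natDegree < D) ∪ Y) := by
        intro Y
        induction Y using Finset.induction_on with
        | empty => intro _; simpa using ih
        | insert p Y hpY ihY =>
          intro hY
          obtain ⟨h1, h2⟩ := ihY ((Finset.subset_insert _ _).trans hY)
          set W := V.filter (fun s => s.natDegree < D) ∪ Y with hW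
          obtain ⟨hpV, hpD⟩ := Finset.mem_filter.1 (hY (Finset.mem_insert_self p Y))
          have hWV : ∀ s ∈ W, s ∈ V ∧ s.natDegree ≤ D := by
            intro s hs
            rcases Finset.mem_union.1 hs with h | h
            · have := Finset.mem_filter.1 h
              exact ⟨this.1, this.2.le⟩
            · have := Finset.mem_filter.1 (hY (Finset.mem_insert_of_mem h))
              exact ⟨this.1, this.2.le⟩
          have hlow : ∀ s ∈ V, s.natDegree < D → s ∈ W := fun s h3 h4 =>
            Finset.mem_union_left _ (Finset.mem_filter.2 ⟨h3, h4⟩)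
          rw [Finset.union_insert]
          rcases Nat.eq_zero_or_pos D with hD0 | hD0
          · have hpc : p = C p.leadingCoeff := by
              have h0 : p.natDegree = 0 := by omega
              rw [leadingCoeff, h0]; exact eq_C_of_natDegree_eq_zero h0
            have hc : ∀ a b, SignType.sign ((P p).eval a) = SignType.sign ((P' p).eval b) := by
              intro a b
              simp only [hP, hP']
              rw [hpc, map_C, map_C, eval_C, eval_C]
              exact hψ p hpV
            exact ⟨h1.insert_const hc, h2.insert_const fun a b => (hc b a).symm⟩
          by_cases hl : ψ p.leadingCoeff = 0
          · have hl' := (eval_zero_of_sign (hψ p hpV)).1 hl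
            have hd := eraseLead_natDegree_le p
            have ht := hlow _ (hV.1 p hpV (by omega)).2 (by omega)
            exact ⟨h1.insert_eq ht (map_eraseLead ψ hl) (map_eraseLead ψ' hl'),
              h2.insert_eq ht (map_eraseLead ψ' hl') (map_eraseLead ψ hl)⟩
          · have hl' : ψ' p.leadingCoeff ≠ 0 := fun h => hl ((eval_zero_of_sign (hψ p hpV)).2 h)
            have hd := natDegree_derivative_le p
            have hdp := hlow _ (hV.1 p hpV (by omega)).1 (by omega)
            have hdP : P (derivative p) = derivative (P p) := (derivative_map p ψ).symm
            have hdP' : P' (derivative p) = derivative (P' p) := (derivative_map p ψ').symm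
            have hzW : ∀ s ∈ W, P s = 0 ↔ P' s = 0 := fun s hs => hz s (hWV s hs).1
            have hd0 : P (derivative p) ≠ 0 := by
              rw [hdP]
              intro h
              have := natDegree_eq_zero_of_derivative_eq_zero h
              rw [hP, natDegree_map_of_leadingCoeff_ne_zero ψ hl] at this
              omega
            have hd0' : P' (derivative p) ≠ 0 := fun h => hd0 ((hzW _ hdp).2 h)
            have hrem : ∀ s ∈ W, P s ≠ 0 → ∃ r ∈ W,
              (∀ z, (P s).eval z = 0 → SignType.sign ((P p).eval z) = SignType.sign ((P r).eval z)) ∧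
              (∀ z, (P' s).eval z = 0 → SignType.sign ((P' p).eval z) = SignType.sign ((P' r).eval z)) := by
              intro s hs hs0
              obtain ⟨hsV, hsD⟩ := hWV s hs
              rcases sim_norm hV ψ ψ' hψ _ s hsV le_rfl with h | ⟨t, ht1, ht2, ht3, ht4, ht5, ht6⟩
              · exact absurd h.1 hs0
              · rcases Nat.eq_zero_or_pos t.natDegree with ht0 | ht0
                · have htc : t = C t.leadingCoeff := by
                    rw [leadingCoeff, ht0]; exact eq_C_of_natDegree_eq_zero ht0
                  refine ⟨s, hs, fun z hz => ?_, fun z hz => ?_⟩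
                  · simp only [hP] at hz
                    rw [ht3, htc, map_C, eval_C] at hz
                    exact absurd hz ht5
                  · simp only [hP'] at hz
                    rw [ht4, htc, map_C, eval_C] at hz
                    exact absurd hz ht6
                · have hr := hV.2 p hpV t ht1 ht0 (by omega)
                  have hrd : (prem p t).natDegree < t.natDegree :=
                    ((prem_exists p t).choose_spec ht0).1
                  refine ⟨prem p t, hlow _ hr (by omega), fun z hz => ?_, fun z hz => ?_⟩
                  · exact sign_prem ht0 ψ ht5 z (by rw [← ht3]; exact hz)
                  · exact sign_prem ht0 ψ' ht6 z (by rw [← ht4]; exact hz)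
            refine ⟨sim_step hF hF' h1 h2 hzW hdp hdP hdP' hd0 hrem,
              sim_step hF' hF h2 h1 (fun s hs => (hzW s hs).symm) hdp hdP' hdP hd0' ?_⟩
            intro s hs hs0
            obtain ⟨r, h3, h4, h5⟩ := hrem s hs (fun h => hs0 ((hzW s hs).1 h))
            exact ⟨r, h3, h5, h4⟩
      have := inner _ subset_rfl
      have he : V.filter (fun s => s.natDegree < D) ∪ V.filter (fun s => s.natDegree = D) =
          V.filter (fun s => s.natDegree < D + 1) := by
        ext s
        simp only [Finset.mem_union, Finset.mem_filter]
        constructor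
        · rintro (⟨h, h'⟩ | ⟨h, h'⟩)
          · exact ⟨h, by omega⟩
          · exact ⟨h, by omega⟩
        · rintro ⟨h, h'⟩
          rcases Nat.lt_succ_iff_lt_or_eq.1 h' with h'' | h''
          · exact Or.inl ⟨h, h''⟩
          · exact Or.inr ⟨h, h''⟩
      rw [he] at this
      exact this
  have := (outer (V.sup natDegree + 1)).1
  rw [Finset.filter_true_of_mem (fun s hs => Nat.lt_succ_of_le (Finset.le_sup (f := natDegree) hs))] at this
  exact this

theorem ivp_real : IVP ℝ := by
  intro p a b hab h
  have hc : ContinuousOn (fun x => p.eval x) (Set.Icc a b) := p.continuous.continuousOn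
  rcases mul_neg_iff.1 h with ⟨h1, h2⟩ | ⟨h1, h2⟩
  · obtain ⟨c, hc1, hc2⟩ := intermediate_value_Ioo' hab hc ⟨h2, h1⟩
    exact ⟨c, hc1.1, hc1.2, hc2⟩
  · obtain ⟨c, hc1, hc2⟩ := intermediate_value_Ioo hab hc ⟨h1, h2⟩
    exact ⟨c, hc1.1, hc1.2, hc2⟩

theorem transfer_fin (hF : IVP F) [Algebra ℝ F] : ∀ (k : ℕ) (S : Finset (MvPolynomial (Fin k) ℝ))
    (u : Fin k → F), ∃ w : Fin k → ℝ, ∀ s ∈ S,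
      SignType.sign (MvPolynomial.aeval u s) = SignType.sign (MvPolynomial.eval w s) := by
  classical
  intro k
  induction k with
  | zero =>
    intro S u
    refine ⟨0, fun s _ => ?_⟩
    rw [MvPolynomial.eq_C_of_isEmpty s]
    simp only [MvPolynomial.aeval_C, MvPolynomial.eval_C]
    generalize MvPolynomial.coeff 0 s = c
    have hpos : ∀ c : ℝ, 0 < c → 0 < algebraMap ℝ F c := by
      intro c hc
      have h1 : algebraMap ℝ F c = algebraMap ℝ F (Real.sqrt c) ^ 2 := by
        rw [← map_pow, Real.sq_sqrt hc.le]
      have h2 : algebraMap ℝ F (Real.sqrt c) ≠ 0 := by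
        simpa using (Real.sqrt_pos.2 hc).ne'
      rw [h1]; positivity
    rcases lt_trichotomy c 0 with h | h | h
    · have := hpos (-c) (by linarith)
      rw [map_neg] at this
      rw [sign_neg h, sign_neg (by linarith)]
    · simp [h]
    · rw [sign_pos h, sign_pos (hpos c h)]
  | succ k ih =>
    intro S u
    obtain ⟨V, hSV, hV⟩ := exists_closure (S.image (MvPolynomial.finSuccEquiv ℝ k))
    obtain ⟨w, hw⟩ := ih (V.image leadingCoeff) (fun i => u i.succ)
    obtain ⟨ψ, hψ⟩ : ∃ ψ : MvPolynomial (Fin k) ℝ →+* F, ∀ s, ψ s =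
        MvPolynomial.aeval (fun i => u i.succ) s :=
      ⟨(MvPolynomial.aeval (R := ℝ) (fun i : Fin k => u i.succ) : _ →ₐ[ℝ] F), fun s => rfl⟩
    have hsim := sim_all hV hF ivp_real ψ
      (MvPolynomial.eval w) (fun s hs => by
        rw [hψ]; exact hw _ (Finset.mem_image_of_mem _ hs))
    obtain ⟨φ, -, hφ⟩ := hsim {u 0}
    refine ⟨Fin.cons (φ (u 0)) w, fun s hs => ?_⟩
    have h1 := hφ (u 0) (by simp) _ (hSV (Finset.mem_image_of_mem _ hs))
    have this : ∀ q : MvPolynomial (Fin (k+1)) ℝ, MvPolynomial.aeval u q =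
      ((MvPolynomial.finSuccEquiv ℝ k q).map ψ).eval (u 0) := by
      intro q
      induction q using MvPolynomial.induction_on with
      | C a => simp [MvPolynomial.finSuccEquiv_apply, hψ]
      | add p q hp hq => simp only [map_add, Polynomial.map_add, eval_add, hp, hq]
      | mul_X p i hp =>
        simp only [map_mul, Polynomial.map_mul, eval_mul, hp]
        congr 1
        refine Fin.cases ?_ (fun j => ?_) i
        · simp [MvPolynomial.finSuccEquiv_X_zero]
        · simp [MvPolynomial.finSuccEquiv_X_succ, hψ]
    rw [MvPolynomial.eval_eq_eval_mv_eval', this]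
    exact h1

theorem transfer (hF : IVP F) [Algebra ℝ F] {σ : Type*} [Fintype σ] (S : Finset (MvPolynomial σ ℝ))
    (u : σ → F) : ∃ w : σ → ℝ, ∀ s ∈ S,
      SignType.sign (MvPolynomial.aeval u s) = SignType.sign (MvPolynomial.eval w s) := by
  classical
  let e := Fintype.equivFin σ
  obtain ⟨w, hw⟩ := transfer_fin hF _ (S.image (MvPolynomial.rename e)) (u ∘ e.symm)
  refine ⟨w ∘ e, fun s hs => ?_⟩
  have := hw _ (Finset.mem_image_of_mem _ hs)
  rw [MvPolynomial.aeval_rename, MvPolynomial.eval_rename] at this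
  rw [← this]
  congr 3
  funext x; simp
end C
end
end VQN

namespace VQN
section
open Polynomial
section D
universe u

theorem ss_list {R : Type*} [Semiring R] {x : R} : IsSumSq x ↔
    ∃ l : List R, x = (l.map (fun y => y * y)).sum := by
  constructor
  · intro h
    induction h with
    | zero => exact ⟨[], rfl⟩
    | sq_add a hs ih => obtain ⟨l, hl⟩ := ih; exact ⟨a :: l, by simp [hl]⟩
  · rintro ⟨l, rfl⟩
    induction l with
    | nil => exact IsSumSq.zero
    | cons a l ih => simpa using IsSumSq.sq_add a ih

theorem ss_map {R S : Type*} [Semiring R] [Semiring S] (φ : R →+* S) {x : R} (h : IsSumSq x) :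
    IsSumSq (φ x) := by
  induction h with
  | zero => simp
  | sq_add a hs ih => rw [map_add, map_mul]; exact IsSumSq.sq_add _ ih

theorem chain_list {K L : Type*} [Field K] [Field L] [Algebra K L]
    {c : Set (IntermediateField K L)} (hc : IsChain (· ≤ ·) c) (hne : c.Nonempty)
    {x : ↥(⨆ E : c, E.1)} (h : IsSumSq x) : ∃ E ∈ c, ∃ y : E, IsSumSq y ∧ (y : L) = x := by
  have hd : Directed (· ≤ ·) (fun E : c => E.1) := (IsChain.directedOn hc).directed_val
  have : Nonempty c := hne.to_subtype
  induction h with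
  | zero => exact ⟨hne.choose, hne.choose_spec, 0, IsSumSq.zero, rfl⟩
  | @sq_add a s hs ih =>
    obtain ⟨E, hE, y, hy, hyx⟩ := ih
    have ha : (a : L) ∈ ((⨆ E : c, E.1 : IntermediateField K L) : Set L) := a.2
    rw [IntermediateField.coe_iSup_of_directed hd, Set.mem_iUnion] at ha
    obtain ⟨E', hE'⟩ := ha
    obtain ⟨E'', h1, h2⟩ := hd ⟨E, hE⟩ E'
    refine ⟨E''.1, E''.2, ⟨a, h2 hE'⟩ * ⟨a, h2 hE'⟩ + IntermediateField.inclusion h1 y,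
      IsSumSq.sq_add _ (ss_map (IntermediateField.inclusion h1).toRingHom hy), ?_⟩
    simp [hyx]

theorem exists_maxreal (K : Type u) [Field K] (hK : ¬ IsSumSq (-1 : K)) :
    ∃ (F : Type u) (_ : Field F) (_ : Algebra K F), ¬ IsSumSq (-1 : F) ∧
      ∀ f : F[X], Irreducible f → 2 ≤ f.natDegree →
        ∃ l : List F[X], (∀ g ∈ l, g.natDegree < f.natDegree) ∧
          f ∣ 1 + (l.map (fun y => y * y)).sum := by
  let Ω := AlgebraicClosure K
  obtain ⟨F, hF⟩ := zorn_le₀ {E : IntermediateField K Ω | ¬ IsSumSq (-1 : E)} (by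
    intro c hc hch
    rcases c.eq_empty_or_nonempty with rfl | hne
    · refine ⟨⊥, fun h => hK ?_, by simp⟩
      have := ss_map (IntermediateField.botEquiv K Ω : _ →+* K) h
      simpa using this
    · refine ⟨⨆ E : c, E.1, fun h => ?_, fun z hz => le_iSup (fun E : c => E.1) ⟨z, hz⟩⟩
      obtain ⟨E, hE, y, hy, hyx⟩ := chain_list hch hne h
      have : y = -1 := Subtype.ext (by simpa using hyx)
      exact hc hE (this ▸ hy))
  refine ⟨F, inferInstance, inferInstance, hF.1, fun f hf hd => ?_⟩
  obtain ⟨α, hα⟩ := IsAlgClosed.exists_aeval_eq_zero Ω f (by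
    intro h; have : f.natDegree = 0 := natDegree_eq_of_degree_eq_some h
    omega)
  have halg : IsAlgebraic F α := ⟨f, hf.ne_zero, hα⟩
  let E := (IntermediateField.adjoin F {α}).restrictScalars K
  have hFE : F ≤ E := by
    intro x hx
    exact (IntermediateField.adjoin F {α}).algebraMap_mem ⟨x, hx⟩
  have hαE : α ∈ E := IntermediateField.mem_adjoin_simple_self F α
  have hαF : α ∉ F := by
    intro h
    have hr : f.IsRoot ⟨α, h⟩ := by
      have : aeval (algebraMap F Ω ⟨α, h⟩) f = 0 := hα
      rw [aeval_algebraMap_apply] at this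
      simpa using this
    have : f.natDegree = 1 := natDegree_eq_of_degree_eq_some (degree_eq_one_of_irreducible_of_root hf hr)
    omega
  have hE : IsSumSq (-1 : E) := by
    by_contra h
    exact hαF (hF.2 h hFE hαE)
  obtain ⟨l, hl⟩ := ss_list.1 hE
  have hg : ∀ y : E, ∃ g : F[X], g.natDegree < f.natDegree ∧ aeval α g = (y : Ω) := by
    intro y
    have h1 : (y : Ω) ∈ (IntermediateField.adjoin F {α}).toSubalgebra := y.2
    rw [IntermediateField.adjoin_simple_toSubalgebra_of_isAlgebraic halg,
      Algebra.adjoin_singleton_eq_range_aeval] at h1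
    obtain ⟨g, hg⟩ := h1
    refine ⟨g % f, natDegree_mod_lt _ (by omega), ?_⟩
    have := congrArg (aeval α) (EuclideanDomain.div_add_mod g f)
    rw [map_add, map_mul, hα, zero_mul, zero_add] at this
    rw [this]; exact hg
  choose G hG1 hG2 using hg
  refine ⟨l.map G, by
    intro g hg
    obtain ⟨a, -, rfl⟩ := List.mem_map.1 hg
    exact hG1 a, ?_⟩
  have h0 : aeval α (1 + ((l.map G).map (fun y => y * y)).sum) = 0 := by
    have h2 := congrArg (algebraMap E Ω) hl
    rw [map_list_sum, List.map_map] at h2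
    rw [map_add, map_list_sum, List.map_map, List.map_map]
    have : ((aeval α ∘ (fun y => y * y)) ∘ G : E → Ω) = (algebraMap E Ω ∘ fun y => y * y) := by
      funext y
      simp [hG2]
    rw [this, ← h2]
    simp
  have := minpoly.dvd F α h0
  rw [← minpoly.eq_of_irreducible hf hα] at this
  exact (Dvd.intro _ rfl).trans this


theorem red_list {F : Type*} [Field F] (a : F) (l : List F[X])
    (hl : ∀ g ∈ l, g.natDegree < 2) : ∃ B C' D : F, IsSumSq B ∧ IsSumSq C' ∧
      (X ^ 2 - C a) ∣ (l.map (fun y => y * y)).sum - (C (B + a * C') + C D * X) := by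
  induction l with
  | nil => exact ⟨0, 0, 0, .zero, .zero, by simp⟩
  | cons g l ih =>
    obtain ⟨B, C', D, hB, hC, h⟩ := ih (fun g hg => hl g (List.mem_cons_of_mem _ hg))
    have hg : g.natDegree ≤ 1 := by have := hl g List.mem_cons_self; omega
    obtain ⟨c, b, rfl⟩ := exists_eq_X_add_C_of_natDegree_le_one hg
    refine ⟨b * b + B, c * c + C', 2 * b * c + D, .sq_add _ hB, .sq_add _ hC, ?_⟩
    obtain ⟨q, hq⟩ := h
    refine ⟨q + C c * C c, ?_⟩
    rw [List.map_cons, List.sum_cons]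
    have : (l.map (fun y => y * y)).sum = (X ^ 2 - C a) * q + (C (B + a * C') + C D * X) := by
      rw [← hq]; ring
    rw [this]
    simp only [C_add, C_mul, show (C (2 : F) : F[X]) = 2 from rfl]
    ring

theorem ss_inv_neg {F : Type*} [Field F] (h1 : ¬ IsSumSq (-1 : F)) {x : F} (hx : IsSumSq x)
    (hx' : IsSumSq (-x)) : x = 0 := by
  by_contra h
  apply h1
  have : (-1 : F) = x * (-x) * (x⁻¹ * x⁻¹) := by field_simp
  rw [this]
  exact (hx.mul hx').mul (.mul_self _)

theorem ss_total {F : Type*} [Field F] (h1 : ¬ IsSumSq (-1 : F))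
    (h2 : ∀ f : F[X], Irreducible f → 2 ≤ f.natDegree →
        ∃ l : List F[X], (∀ g ∈ l, g.natDegree < f.natDegree) ∧
          f ∣ 1 + (l.map (fun y => y * y)).sum) (a : F) : IsSumSq a ∨ IsSumSq (-a) := by
  by_cases ha : IsSquare a
  · exact Or.inl ha.isSumSq
  right
  have hd : (X ^ 2 - C a).natDegree = 2 := natDegree_X_pow_sub_C
  have hi : Irreducible (X ^ 2 - C a) := by
    apply irreducible_of_degree_le_three_of_not_isRoot
    · rw [hd]; simp
    · intro x hx
      apply ha
      refine ⟨x, ?_⟩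
      simp at hx
      linear_combination -hx
  obtain ⟨l, hl, hdvd⟩ := h2 _ hi hd.ge
  rw [hd] at hl
  obtain ⟨B, C', D, hB, hC, h⟩ := red_list a l hl
  have h3 := dvd_sub hdvd h
  have h4 : (1 + (l.map (fun y => y * y)).sum) - ((l.map (fun y => y * y)).sum
      - (C (B + a * C') + C D * X)) = C D * X + C (1 + B + a * C') := by
    simp only [C_add, C_1]; ring
  rw [h4] at h3
  have h5 : C D * X + C (1 + B + a * C') = 0 := by
    apply eq_zero_of_dvd_of_natDegree_lt h3
    rw [hd]
    exact natDegree_linear_le.trans_lt (by norm_num)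
  have h6 : 1 + B + a * C' = 0 := by
    have := congrArg (fun p => coeff p 0) h5
    simpa using this
  have hC0 : C' ≠ 0 := by
    rintro rfl
    apply h1
    have : (-1 : F) = B := by linear_combination -h6
    rwa [this]
  have : -a = (1 + B) * C' * (C'⁻¹ * C'⁻¹) := by
    field_simp
    linear_combination -h6
  rw [this]
  exact ((IsSumSq.one.add hB).mul hC).mul (.mul_self _)

theorem exists_order {F : Type*} [Field F] (h1 : ¬ IsSumSq (-1 : F))
    (h2 : ∀ f : F[X], Irreducible f → 2 ≤ f.natDegree →
        ∃ l : List F[X], (∀ g ∈ l, g.natDegree < f.natDegree) ∧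
          f ∣ 1 + (l.map (fun y => y * y)).sum) :
    ∃ (_ : LinearOrder F), IsStrictOrderedRing F := by
  classical
  let Cn : RingCone F := 
    { Subsemiring.sumSq F with
      eq_zero_of_mem_of_neg_mem' := by
        intro a ha hb
        exact ss_inv_neg h1 (Subsemiring.mem_sumSq.1 ha) (Subsemiring.mem_sumSq.1 hb) }
  have : HasMemOrNegMem Cn := ⟨fun a => by
    rcases ss_total h1 h2 a with h | h
    · exact Or.inl (Subsemiring.mem_sumSq.2 h)
    · exact Or.inr (Subsemiring.mem_sumSq.2 h)⟩
  letI : LinearOrder F := LinearOrder.mkOfAddGroupCone Cn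
  have h3 : IsOrderedRing F := IsOrderedRing.mkOfCone Cn
  exact ⟨this, IsOrderedRing.toIsStrictOrderedRing F⟩

theorem ivp_of_max {F : Type*} [Field F] [LinearOrder F] [IsStrictOrderedRing F]
    (h2 : ∀ f : F[X], Irreducible f → 2 ≤ f.natDegree →
        ∃ l : List F[X], (∀ g ∈ l, g.natDegree < f.natDegree) ∧
          f ∣ 1 + (l.map (fun y => y * y)).sum) : IVP F := by
  have key : ∀ n : ℕ, ∀ f : F[X], f.natDegree ≤ n → ∀ a b : F, a ≤ b → f.eval a * f.eval b < 0 →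
      ∃ c, a < c ∧ c < b ∧ f.eval c = 0 := by
    intro n
    induction n with
    | zero =>
      intro f hf a b hab h
      rw [eq_C_of_natDegree_eq_zero (Nat.le_zero.1 hf)] at h
      simp only [eval_C] at h
      exact absurd h (not_lt.2 (mul_self_nonneg _))
    | succ n ih =>
      intro f hf a b hab h
      by_cases hn : f.natDegree ≤ n
      · exact ih f hn a b hab h
      have hfd : f.natDegree = n + 1 := by omega
      have hf0 : f ≠ 0 := by rintro rfl; simp at hfd
      have hu : ¬ IsUnit f := fun h => by
        have := natDegree_eq_zero_of_isUnit h; omega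
      by_cases hirr : Irreducible f
      · rcases Nat.eq_zero_or_pos n with rfl | hpos
        · obtain ⟨c, e, rfl⟩ := exists_eq_X_add_C_of_natDegree_le_one hf
          simp only [eval_add, eval_mul, eval_C, eval_X] at h ⊢
          have hc : c ≠ 0 := by
            rintro rfl
            simp at h
            exact absurd h (not_lt.2 (mul_self_nonneg _))
          refine ⟨-e / c, ?_, ?_, by field_simp; ring⟩
          · by_contra h'
            push Not at h'
            rcases lt_or_gt_of_ne hc with hc | hc
            · rw [div_le_iff_of_neg hc] at h'
              have h9 := mul_le_mul_of_nonpos_left hab hc.le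
              have h8 := mul_nonneg_of_nonpos_of_nonpos (show c*a+e ≤ 0 by linarith) (show c*b+e ≤ 0 by linarith)
              linarith
            · rw [div_le_iff₀ hc] at h'
              have h9 := mul_le_mul_of_nonneg_left hab hc.le
              have h8 := mul_nonneg (show 0 ≤ c*a+e by linarith) (show 0 ≤ c*b+e by linarith)
              linarith
          · by_contra h'
            push Not at h'
            rcases lt_or_gt_of_ne hc with hc | hc
            · rw [le_div_iff_of_neg hc] at h'
              have h9 := mul_le_mul_of_nonpos_left hab hc.le
              have h8 := mul_nonneg (show 0 ≤ c*a+e by linarith) (show 0 ≤ c*b+e by linarith)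
              linarith
            · rw [le_div_iff₀ hc] at h'
              have h9 := mul_le_mul_of_nonneg_left hab hc.le
              have h8 := mul_nonneg_of_nonpos_of_nonpos (show c*a+e ≤ 0 by linarith) (show c*b+e ≤ 0 by linarith)
              linarith
        · exfalso
          obtain ⟨l, hl, q, hq⟩ := h2 f hirr (by omega)
          have hpos : ∀ x : F, 0 < (1 + (l.map (fun y => y * y)).sum).eval x := by
            intro x
            have : 0 ≤ ((l.map (fun y => y * y)).sum).eval x := by
              clear hq hl
              induction l with
              | nil => simp
              | cons g l ih =>
                rw [List.map_cons, List.sum_cons, eval_add, eval_mul]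
                have := mul_self_nonneg (eval x g)
                linarith
            rw [eval_add, eval_one]; linarith
          have hdeg : (1 + (l.map (fun y => y * y)).sum).natDegree ≤ 2 * n := by
            refine (natDegree_add_le _ _).trans (max_le (by simp) ?_)
            clear hq hpos
            induction l with
            | nil => simp
            | cons g l ih' =>
              rw [List.map_cons, List.sum_cons]
              have := hl g List.mem_cons_self
              refine (natDegree_add_le _ _).trans (max_le (natDegree_mul_le.trans (by omega)) ?_)
              exact ih' (fun g hg => hl g (List.mem_cons_of_mem _ hg))
          have hq0 : q ≠ 0 := by
            rintro rfl
            have := hpos 0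
            rw [hq] at this; simp at this
          rw [hq, natDegree_mul hf0 hq0] at hdeg
          have hqab : q.eval a * q.eval b < 0 := by
            have ha := hpos a
            have hb := hpos b
            rw [hq, eval_mul] at ha hb
            have := mul_pos ha hb
            by_contra hcon
            push Not at hcon
            nlinarith [mul_nonneg hcon (neg_pos.2 h).le]
          obtain ⟨c, -, -, hc⟩ := ih q (by omega) a b hab hqab
          have := hpos c
          rw [hq, eval_mul, hc] at this
          simp at this
      · rw [irreducible_iff] at hirr
        push Not at hirr
        obtain ⟨p, q, rfl, hp, hq⟩ := hirr hu
        have hp0 : p ≠ 0 := left_ne_zero_of_mul hf0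
        have hq0 : q ≠ 0 := right_ne_zero_of_mul hf0
        have hpd : 0 < p.natDegree := by
          by_contra h0
          exact hp ((isUnit_iff_degree_eq_zero).2 ((degree_eq_iff_natDegree_eq hp0).2 (Nat.eq_zero_of_not_pos h0)))
        have hqd : 0 < q.natDegree := by
          by_contra h0
          exact hq ((isUnit_iff_degree_eq_zero).2 ((degree_eq_iff_natDegree_eq hq0).2 (Nat.eq_zero_of_not_pos h0)))
        rw [natDegree_mul hp0 hq0] at hfd
        simp only [eval_mul] at h ⊢
        have h' : (p.eval a * p.eval b) * (q.eval a * q.eval b) < 0 := by linarith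
        rcases mul_neg_iff.1 h' with ⟨-, h3⟩ | ⟨h3, -⟩
        · obtain ⟨c, h4, h5, h6⟩ := ih q (by omega) a b hab h3
          exact ⟨c, h4, h5, by simp [h6]⟩
        · obtain ⟨c, h4, h5, h6⟩ := ih p (by omega) a b hab h3
          exact ⟨c, h4, h5, by simp [h6]⟩
  intro p a b hab h
  exact key _ p le_rfl a b hab h

theorem exists_rcf (K : Type u) [Field K] (hK : ¬ IsSumSq (-1 : K)) :
    ∃ (F : Type u) (_ : Field F) (_ : Algebra K F) (_ : LinearOrder F),
      IsStrictOrderedRing F ∧ IVP F := by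
  obtain ⟨F, iF, iA, h1, h2⟩ := exists_maxreal K hK
  obtain ⟨iL, iS⟩ := exists_order h1 h2
  exact ⟨F, iF, iA, iL, iS, ivp_of_max h2⟩
end D
end
end VQN

namespace VQN
section E
open Quaternion

/-- quaternion with given components -/
def mkQ {R : Type*} [CommRing R] (a b c d : R) : Quaternion R := ⟨a, b, c, d⟩
section
variable {R : Type*} [CommRing R] (a b c d : R)
@[simp] theorem mkQ_re : (mkQ a b c d).re = a := rfl
@[simp] theorem mkQ_imI : (mkQ a b c d).imI = b := rfl
@[simp] theorem mkQ_imJ : (mkQ a b c d).imJ = c := rfl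
@[simp] theorem mkQ_imK : (mkQ a b c d).imK = d := rfl
end

/-- componentwise ring hom on quaternions -/
noncomputable def qmap {R S : Type*} [CommRing R] [CommRing S] (φ : R →+* S) :
    Quaternion R →+* Quaternion S where
  toFun q := mkQ (φ q.re) (φ q.imI) (φ q.imJ) (φ q.imK)
  map_one' := by ext <;> simp
  map_zero' := by ext <;> simp
  map_add' a b := by ext <;> simp
  map_mul' a b := by ext <;> simp

section
variable {R S : Type*} [CommRing R] [CommRing S] (φ : R →+* S) (q : Quaternion R)
@[simp] theorem qmap_re : (qmap φ q).re = φ q.re := rfl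
@[simp] theorem qmap_imI : (qmap φ q).imI = φ q.imI := rfl
@[simp] theorem qmap_imJ : (qmap φ q).imJ = φ q.imJ := rfl
@[simp] theorem qmap_imK : (qmap φ q).imK = φ q.imK := rfl
theorem qmap_smul (r : R) : qmap φ (r • q) = φ r • qmap φ q := by ext <;> simp
theorem qmap_comp {T : Type*} [CommRing T] (ψ : S →+* T) :
    qmap ψ (qmap φ q) = qmap (ψ.comp φ) q := rfl
theorem qmap_inj (h : Function.Injective φ) : Function.Injective (qmap φ) := by
  intro a b hab
  have h1 := congrArg QuaternionAlgebra.re hab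
  have h2 := congrArg QuaternionAlgebra.imI hab
  have h3 := congrArg QuaternionAlgebra.imJ hab
  have h4 := congrArg QuaternionAlgebra.imK hab
  ext
  · exact h h1
  · exact h h2
  · exact h h3
  · exact h h4
end

/-- local copy -/
def RS {A : Type*} [Ring A] [StarRing A] {n : ℕ}
    (N : Submodule A (Fin n → A)) : Prop :=
  ∀ (m : ℕ) (f : Fin m → (Fin n → A)),
    (∀ j, (∑ i, star (f i j) • f i) ∈ N) → ∀ i, f i ∈ N

variable {R : Type*} [CommRing R] {n : ℕ} {N : Submodule (Quaternion R) (Fin n → Quaternion R)}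

theorem smul_coe (r : R) (f : Fin n → Quaternion R) : r • f = (r : Quaternion R) • f := by
  funext j
  simp only [Pi.smul_apply, smul_eq_mul, Quaternion.coe_mul_eq_smul]

theorem rmem (r : R) {f : Fin n → Quaternion R} (hf : f ∈ N) : r • f ∈ N := by
  rw [smul_coe]; exact N.smul_mem _ hf

theorem exists_prime [IsNoetherianRing R] {f : Fin n → Quaternion R} (hf : f ∉ N) :
    ∃ (p : Ideal R) (r : R), p.IsPrime ∧ ∀ s, s ∈ p ↔ s • (r • f) ∈ N := by
  let J : R → Ideal R := fun r =>
    { carrier := {s | s • (r • f) ∈ N}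
      zero_mem' := by simp
      add_mem' := by intro a b ha hb; simp only [Set.mem_ofPred_eq, add_smul] at *; exact N.add_mem ha hb
      smul_mem' := by
        intro c x hx
        simp only [Set.mem_ofPred_eq, smul_eq_mul, mul_smul c x] at *
        exact rmem _ hx }
  have hJ : ∀ r s, s ∈ J r ↔ s • (r • f) ∈ N := fun r s => Iff.rfl
  obtain ⟨p, ⟨r, hr, rfl⟩, hmax⟩ := set_has_maximal_iff_noetherian.2 (inferInstance : IsNoetherian R R)
    {p | ∃ r, r • f ∉ N ∧ J r = p} ⟨J 1, 1, by simpa using hf, rfl⟩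
  refine ⟨J r, r, ?_, fun s => Iff.rfl⟩
  rw [Ideal.isPrime_iff]
  refine ⟨fun h => hr ?_, fun {a b} hab => ?_⟩
  · have : (1 : R) ∈ J r := by rw [h]; trivial
    simpa [hJ] using this
  · by_contra hcon
    push Not at hcon
    obtain ⟨ha, hb⟩ := hcon
    refine hmax (J (b * r)) ⟨b * r, ?_, rfl⟩ ?_
    · rw [mul_smul]; exact hb
    · refine lt_of_le_of_ne ?_ ?_
      · intro s hs
        rw [hJ] at hs ⊢
        rw [mul_smul, smul_comm]
        exact rmem _ hs
      · intro he
        apply ha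
        rw [he, hJ, smul_smul, ← mul_assoc, mul_smul]
        exact hab

theorem real_prime (hN : RS N) {p : Ideal R} {f : Fin n → Quaternion R}
    (hp : ∀ s, s ∈ p ↔ s • f ∈ N) (l : List R) (hl : (l.map (fun y => y * y)).sum ∈ p) :
    ∀ x ∈ l, x ∈ p := by
  intro x hx
  obtain ⟨i, rfl⟩ := List.get_of_mem hx
  rw [hp]
  refine hN l.length (fun i => l.get i • f) (fun j => ?_) i
  have h1 : ∑ i, star ((l.get i • f) j) • (l.get i • f) = star (f j) • ((l.map (fun y => y * y)).sum • f) := by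
    have h2 : (l.map (fun y => y * y)).sum = ∑ i, l.get i * l.get i := by
      rw [← List.sum_ofFn]
      congr 1
      apply List.ext_get <;> simp
    rw [h2, Finset.sum_smul, Finset.smul_sum]
    refine Finset.sum_congr rfl (fun i _ => ?_)
    funext k
    simp only [Pi.smul_apply, Quaternion.star_smul, smul_eq_mul, smul_mul_assoc, mul_smul_comm, smul_smul]
  rw [h1]
  exact N.smul_mem _ ((hp _).1 hl)

theorem frac_ss {K : Type*} [Field K] (φ : R →+* K)
    (hφ : ∀ x : K, ∃ a s, φ s ≠ 0 ∧ x * φ s = φ a) {x : K} (hx : IsSumSq x) :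
    ∃ s y, φ s ≠ 0 ∧ IsSumSq y ∧ φ s * φ s * x = φ y := by
  induction hx with
  | zero => exact ⟨1, 0, by simp, .zero, by simp⟩
  | sq_add a hs ih =>
    obtain ⟨s, y, h1, h2, h3⟩ := ih
    obtain ⟨u, t, h4, h5⟩ := hφ a
    refine ⟨s * t, (s * u) * (s * u) + t * t * y, by simp [h1, h4], .sq_add _ ((IsSumSq.mul_self t).mul h2), ?_⟩
    simp only [map_mul, map_add, ← h5, ← h3]
    ring

theorem K_real (hN : RS N) {p : Ideal R} {f : Fin n → Quaternion R}
    (hp : ∀ s, s ∈ p ↔ s • f ∈ N) {K : Type*} [Field K] (φ : R →+* K)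
    (hker : ∀ s, φ s = 0 ↔ s ∈ p)
    (hφ : ∀ x : K, ∃ a s, φ s ≠ 0 ∧ x * φ s = φ a) : ¬ IsSumSq (-1 : K) := by
  intro h
  obtain ⟨s, y, h1, h2, h3⟩ := frac_ss φ hφ h
  obtain ⟨l, rfl⟩ := ss_list.1 h2
  apply h1
  rw [hker]
  refine real_prime hN hp (s :: l) ?_ s List.mem_cons_self
  rw [← hker, List.map_cons, List.sum_cons, map_add, ← h3, map_mul]
  ring

theorem e_mem (hN : RS N) {p : Ideal R} {f ν : Fin n → Quaternion R}
    (hp : ∀ s, s ∈ p ↔ s • f ∈ N) (hν : ν ∈ N) (s : R)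
    (he : ∀ j, ((s • f - ν) j).re ∈ p ∧ ((s • f - ν) j).imI ∈ p ∧
      ((s • f - ν) j).imJ ∈ p ∧ ((s • f - ν) j).imK ∈ p) : s ∈ p := by
  set e := s • f - ν with hedef
  have h1 : ∀ r ∈ p, r • e ∈ N := by
    intro r hr
    rw [hedef, smul_sub, smul_comm]
    exact N.sub_mem (rmem _ ((hp r).1 hr)) (rmem _ hν)
  have h2 : ∀ c : Quaternion R, c.re ∈ p → c.imI ∈ p → c.imJ ∈ p → c.imK ∈ p → c • e ∈ N := by
    intro c hc1 hc2 hc3 hc4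
    have : c • e = c.re • e + (mkQ 0 1 0 0 : Quaternion R) • (c.imI • e)
        + (mkQ 0 0 1 0 : Quaternion R) • (c.imJ • e) + (mkQ 0 0 0 1 : Quaternion R) • (c.imK • e) := by
      funext k
      simp only [Pi.smul_apply, Pi.add_apply, smul_eq_mul]
      ext <;> simp <;> ring
    rw [this]
    exact N.add_mem (N.add_mem (N.add_mem (h1 _ hc1) (N.smul_mem _ (h1 _ hc2)))
      (N.smul_mem _ (h1 _ hc3))) (N.smul_mem _ (h1 _ hc4))
  have h3 : e ∈ N := by
    refine hN 1 (fun _ => e) (fun j => ?_) 0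
    simp only [Finset.univ_unique, Finset.sum_const, Finset.card_singleton, one_smul]
    obtain ⟨a, b, c, d⟩ := he j
    refine h2 _ ?_ ?_ ?_ ?_
    · simpa using a
    · simpa using b
    · simpa using c
    · simpa using d
  rw [hp]
  have : s • f = e + ν := by rw [hedef]; abel
  rw [this]
  exact N.add_mem h3 hν

theorem generic_point (hN : RS N) {p : Ideal R} {f : Fin n → Quaternion R}
    (hp : ∀ s, s ∈ p ↔ s • f ∈ N) {K : Type*} [Field K] [LinearOrder K] [IsStrictOrderedRing K]
    (φ : R →+* K) (hker : ∀ s, φ s = 0 ↔ s ∈ p)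
    (hφ : ∀ x : K, ∃ a s, φ s ≠ 0 ∧ x * φ s = φ a) :
    ∃ v : Fin n → Quaternion K, (∀ h ∈ N, ∑ j, qmap φ (h j) * v j = 0) ∧
      ∑ j, qmap φ (f j) * v j ≠ 0 := by
  have hden : ∀ c : Quaternion K, ∃ t c', φ t ≠ 0 ∧ qmap φ c' = φ t • c := by
    intro c
    obtain ⟨a1, s1, h1, e1⟩ := hφ c.re
    obtain ⟨a2, s2, h2, e2⟩ := hφ c.imI
    obtain ⟨a3, s3, h3, e3⟩ := hφ c.imJ
    obtain ⟨a4, s4, h4, e4⟩ := hφ c.imK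
    refine ⟨s1 * s2 * s3 * s4, mkQ (a1 * s2 * s3 * s4) (a2 * s1 * s3 * s4) (a3 * s1 * s2 * s4)
      (a4 * s1 * s2 * s3), by simp [h1, h2, h3, h4], ?_⟩
    ext
    · simp [← e1]; ring
    · simp [← e2]; ring
    · simp [← e3]; ring
    · simp [← e4]; ring
  let NK : Submodule (Quaternion K) (Fin n → Quaternion K) :=
    { carrier := {h | ∃ s, φ s ≠ 0 ∧ ∃ ν ∈ N, ∀ j, qmap φ (ν j) = φ s • h j}
      zero_mem' := ⟨1, by simp, 0, N.zero_mem, by simp⟩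
      add_mem' := by
        rintro a b ⟨s, hs, ν, hν, h1⟩ ⟨t, ht, μ, hμ, h2⟩
        refine ⟨s * t, by simp [hs, ht], t • ν + s • μ, N.add_mem (rmem _ hν) (rmem _ hμ), fun j => ?_⟩
        simp only [Pi.add_apply, Pi.smul_apply, map_add, qmap_smul, h1, h2, map_mul, smul_add, smul_smul]
        rw [mul_comm (φ t)]
      smul_mem' := by
        rintro c a ⟨s, hs, ν, hν, h1⟩
        obtain ⟨t, c', ht, h2⟩ := hden c
        refine ⟨t * s, by simp [hs, ht], c' • ν, N.smul_mem _ hν, fun j => ?_⟩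
        simp only [Pi.smul_apply, smul_eq_mul, map_mul, h1, h2, smul_mul_assoc, mul_smul_comm, smul_smul]
        rw [mul_comm (φ t)] }
  have hf : (fun j => qmap φ (f j)) ∉ NK := by
    rintro ⟨s, hs, ν, hν, h⟩
    apply hs
    rw [hker]
    refine e_mem hN hp hν s (fun j => ?_)
    have h0 : qmap φ ((s • f - ν) j) = 0 := by
      simp only [Pi.sub_apply, Pi.smul_apply, map_sub, qmap_smul, h, sub_self]
    simp only [← hker]
    refine ⟨?_, ?_, ?_, ?_⟩
    · exact congrArg QuaternionAlgebra.re h0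
    · exact congrArg QuaternionAlgebra.imI h0
    · exact congrArg QuaternionAlgebra.imJ h0
    · exact congrArg QuaternionAlgebra.imK h0
  obtain ⟨lam, h1, h2⟩ := Submodule.exists_le_ker_of_notMem hf
  have hl : ∀ h : Fin n → Quaternion K, lam h = ∑ j, h j * lam (fun i => if j = i then 1 else 0) := by
    intro h
    rw [LinearMap.pi_apply_eq_sum_univ lam h]
    rfl
  refine ⟨fun j => lam (fun i => if j = i then 1 else 0), fun h hh => ?_, ?_⟩
  · rw [← hl (fun j => qmap φ (h j))]
    exact h2 ⟨1, by simp, h, hh, by simp⟩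
  · rw [← hl (fun j => qmap φ (f j))]
    exact h1
end E
end VQN

namespace VQN
section G

theorem evalQ_eq {d : ℕ} (a : Fin d → ℝ) (p : Quaternion (MvPolynomial (Fin d) ℝ)) :
    evalQ a p = qmap (MvPolynomial.eval a) p := rfl

theorem quat_zero {R : Type*} [CommRing R] (q : Quaternion R) : q = 0 ↔
    q.re = 0 ∧ q.imI = 0 ∧ q.imJ = 0 ∧ q.imK = 0 := by
  constructor
  · rintro rfl; exact ⟨rfl, rfl, rfl, rfl⟩
  · rintro ⟨h1, h2, h3, h4⟩; ext <;> simpa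

/-- the generic linear form -/
noncomputable def qf {d n : ℕ} (h : Fin n → Quaternion (MvPolynomial (Fin d) ℝ)) :
    Quaternion (MvPolynomial (Fin d ⊕ (Fin n × Fin 4)) ℝ) :=
  ∑ j, qmap (MvPolynomial.rename (R := ℝ) (Sum.inl : Fin d → Fin d ⊕ (Fin n × Fin 4))).toRingHom (h j) *
    mkQ (MvPolynomial.X (Sum.inr (j, 0))) (MvPolynomial.X (Sum.inr (j, 1)))
      (MvPolynomial.X (Sum.inr (j, 2))) (MvPolynomial.X (Sum.inr (j, 3)))

theorem qmap_mkQ {R S : Type*} [CommRing R] [CommRing S] (φ : R →+* S) (a b c d : R) :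
    qmap φ (mkQ a b c d) = mkQ (φ a) (φ b) (φ c) (φ d) := rfl

theorem qmap_qf {d n : ℕ} (h : Fin n → Quaternion (MvPolynomial (Fin d) ℝ)) {S : Type*} [CommRing S]
    (φ : MvPolynomial (Fin d ⊕ (Fin n × Fin 4)) ℝ →+* S) (ψ : MvPolynomial (Fin d) ℝ →+* S)
    (hφ : ∀ p, φ (MvPolynomial.rename Sum.inl p) = ψ p) :
    qmap φ (qf h) = ∑ j, qmap ψ (h j) * mkQ (φ (MvPolynomial.X (Sum.inr (j, 0))))
      (φ (MvPolynomial.X (Sum.inr (j, 1)))) (φ (MvPolynomial.X (Sum.inr (j, 2))))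
      (φ (MvPolynomial.X (Sum.inr (j, 3)))) := by
  rw [qf, map_sum]
  refine Finset.sum_congr rfl fun j _ => ?_
  rw [map_mul, qmap_mkQ, qmap_comp]
  have : φ.comp (MvPolynomial.rename (R := ℝ)
      (Sum.inl : Fin d → Fin d ⊕ (Fin n × Fin 4))).toRingHom = ψ := RingHom.ext hφ
  rw [this]

theorem transfer_qf {F : Type*} [Field F] [LinearOrder F] [IsStrictOrderedRing F] (hF : IVP F)
    {d n m : ℕ} (Θ : MvPolynomial (Fin d) ℝ →+* F) (v : Fin n → Quaternion F)
    (g : Fin m → (Fin n → Quaternion (MvPolynomial (Fin d) ℝ))) :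
    ∃ (a : Fin d → ℝ) (w : Fin n → Quaternion ℝ), ∀ i,
      (∑ j, qmap Θ (g i j) * v j = 0 ↔ ∑ j, evalQ a (g i j) * w j = 0) := by
  classical
  let _ : Algebra ℝ F := (Θ.comp MvPolynomial.C).toAlgebra
  let u : Fin d ⊕ (Fin n × Fin 4) → F := Sum.elim (fun i => Θ (MvPolynomial.X i))
    (fun jc => ![(v jc.1).re, (v jc.1).imI, (v jc.1).imJ, (v jc.1).imK] jc.2)
  let S : Finset (MvPolynomial (Fin d ⊕ (Fin n × Fin 4)) ℝ) :=
    Finset.univ.biUnion (fun i => {(qf (g i)).re, (qf (g i)).imI, (qf (g i)).imJ, (qf (g i)).imK})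
  obtain ⟨w, hw⟩ := transfer hF S u
  refine ⟨fun i => w (Sum.inl i), fun j => mkQ (w (Sum.inr (j, 0))) (w (Sum.inr (j, 1)))
    (w (Sum.inr (j, 2))) (w (Sum.inr (j, 3))), fun i => ?_⟩
  have hz : ∀ s ∈ S, (MvPolynomial.aeval u s = 0 ↔ MvPolynomial.eval w s = 0) := by
    intro s hs
    rw [← sign_eq_zero_iff, hw s hs, sign_eq_zero_iff]
  have hmem : ∀ s ∈ ({(qf (g i)).re, (qf (g i)).imI, (qf (g i)).imJ, (qf (g i)).imK} :
      Finset (MvPolynomial (Fin d ⊕ (Fin n × Fin 4)) ℝ)), s ∈ S := fun s hs =>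
    Finset.mem_biUnion.2 ⟨i, Finset.mem_univ _, hs⟩
  have e1 : ∑ j, qmap Θ (g i j) * v j = qmap (MvPolynomial.aeval (R := ℝ) u).toRingHom (qf (g i)) := by
    rw [qmap_qf (g i) (MvPolynomial.aeval (R := ℝ) u).toRingHom Θ]
    · refine Finset.sum_congr rfl fun j _ => ?_
      congr 1
      ext <;> simp [u]
    · intro p
      show MvPolynomial.aeval u (MvPolynomial.rename Sum.inl p) = Θ p
      rw [MvPolynomial.aeval_rename]
      induction p using MvPolynomial.induction_on with
      | C a => rw [MvPolynomial.aeval_C]; rfl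
      | add p q hp hq => rw [map_add, map_add, hp, hq]
      | mul_X p i hp => rw [map_mul, map_mul, hp, MvPolynomial.aeval_X]; rfl
  have e2 : ∑ j, evalQ (fun i => w (Sum.inl i)) (g i j) * mkQ (w (Sum.inr (j, 0))) (w (Sum.inr (j, 1)))
      (w (Sum.inr (j, 2))) (w (Sum.inr (j, 3))) = qmap (MvPolynomial.eval w) (qf (g i)) := by
    rw [qmap_qf (g i) (MvPolynomial.eval w) (MvPolynomial.eval fun i => w (Sum.inl i))]
    · simp only [evalQ_eq, MvPolynomial.eval_X]
    · intro p
      rw [MvPolynomial.eval_rename]; rfl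
  rw [e1, e2, quat_zero, quat_zero]
  exact and_congr (hz _ (hmem _ (by simp))) (and_congr (hz _ (hmem _ (by simp)))
    (and_congr (hz _ (hmem _ (by simp))) (hz _ (hmem _ (by simp)))))

theorem hard {d n m : ℕ} (g : Fin m → (Fin n → Quaternion (MvPolynomial (Fin d) ℝ)))
    (f : Fin n → Quaternion (MvPolynomial (Fin d) ℝ))
    (h : ∀ (a : Fin d → ℝ) (v : Fin n → Quaternion ℝ),
        (∀ i, ∑ j, evalQ a (g i j) * v j = 0) → ∑ j, evalQ a (f j) * v j = 0)
    (N : Submodule (Quaternion (MvPolynomial (Fin d) ℝ))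
          (Fin n → Quaternion (MvPolynomial (Fin d) ℝ))) (hN : RS N) (hg : ∀ i, g i ∈ N) :
    f ∈ N := by
  by_contra hf
  obtain ⟨p, r, hpp, hp⟩ := exists_prime hf
  let K := FractionRing (MvPolynomial (Fin d) ℝ ⧸ p)
  let φ : MvPolynomial (Fin d) ℝ →+* K := (algebraMap (MvPolynomial (Fin d) ℝ ⧸ p) K).comp
    (Ideal.Quotient.mk p)
  have hinj : Function.Injective (algebraMap (MvPolynomial (Fin d) ℝ ⧸ p) K) :=
    IsFractionRing.injective _ _
  have hker : ∀ s, φ s = 0 ↔ s ∈ p := by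
    intro s
    show algebraMap _ K (Ideal.Quotient.mk p s) = 0 ↔ _
    rw [map_eq_zero_iff _ hinj, Ideal.Quotient.eq_zero_iff_mem]
  have hφ : ∀ x : K, ∃ a s, φ s ≠ 0 ∧ x * φ s = φ a := by
    intro x
    obtain ⟨a, s, hs, rfl⟩ := IsFractionRing.div_surjective (A := MvPolynomial (Fin d) ℝ ⧸ p) x
    obtain ⟨a, rfl⟩ := Ideal.Quotient.mk_surjective a
    obtain ⟨s, rfl⟩ := Ideal.Quotient.mk_surjective s
    have hs0 : φ s ≠ 0 := by
      intro h0
      exact nonZeroDivisors.ne_zero hs ((map_eq_zero_iff _ hinj).1 h0)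
    exact ⟨a, s, hs0, div_mul_cancel₀ _ hs0⟩
  obtain ⟨F, iF, iA, iL, iS, hF⟩ := exists_rcf K (K_real hN hp φ hker hφ)
  have hKF : Function.Injective (algebraMap K F) := (algebraMap K F).injective
  let iLK : LinearOrder K := LinearOrder.lift' (algebraMap K F) hKF
  have iSK : IsStrictOrderedRing K := 
    Function.Injective.isStrictOrderedRing (algebraMap K F) (map_zero _) (map_one _) (map_add _)
      (map_mul _) Iff.rfl Iff.rfl
  obtain ⟨v, hv1, hv2⟩ := generic_point hN hp φ hker hφ
  have hsum : ∀ k : Fin n → Quaternion (MvPolynomial (Fin d) ℝ),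
      ∑ j, qmap ((algebraMap K F).comp φ) (k j) * qmap (algebraMap K F) (v j) =
        qmap (algebraMap K F) (∑ j, qmap φ (k j) * v j) := by
    intro k
    rw [map_sum]
    refine Finset.sum_congr rfl fun j _ => ?_
    rw [map_mul, qmap_comp]
  obtain ⟨a, w, hw⟩ := transfer_qf hF ((algebraMap K F).comp φ)
    (fun j => qmap (algebraMap K F) (v j)) (Fin.cons f g : Fin (m + 1) → _)
  have h1 := h a w (fun i => by
    have := (hw i.succ).1
    simp only [Fin.cons_succ] at this
    apply this
    rw [hsum, hv1 _ (hg i), map_zero])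
  have h2 := (hw 0).2
  simp only [Fin.cons_zero] at h2
  have h3 := h2 h1
  rw [hsum, map_eq_zero_iff _ (qmap_inj _ hKF)] at h3
  apply hv2
  have : ∑ j, qmap φ ((r • f) j) * v j = φ r • ∑ j, qmap φ (f j) * v j := by
    rw [Finset.smul_sum]
    refine Finset.sum_congr rfl fun j _ => ?_
    rw [Pi.smul_apply, qmap_smul, smul_mul_assoc]
  rw [this, h3, smul_zero]

theorem easy {d n : ℕ} (a : Fin d → ℝ) (v : Fin n → Quaternion ℝ) :
    ∃ N : Submodule (Quaternion (MvPolynomial (Fin d) ℝ))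
          (Fin n → Quaternion (MvPolynomial (Fin d) ℝ)), RS N ∧
      ∀ h, h ∈ N ↔ ∑ j, evalQ a (h j) * v j = 0 := by
  let N : Submodule (Quaternion (MvPolynomial (Fin d) ℝ))
          (Fin n → Quaternion (MvPolynomial (Fin d) ℝ)) :=
    { carrier := {h | ∑ j, evalQ a (h j) * v j = 0}
      zero_mem' := by simp [evalQ_eq]
      add_mem' := by
        intro x y hx hy
        simp only [Set.mem_ofPred_eq, evalQ_eq, Pi.add_apply, map_add, add_mul,
          Finset.sum_add_distrib] at *
        rw [hx, hy, add_zero]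
      smul_mem' := by
        intro c x hx
        simp only [Set.mem_ofPred_eq, evalQ_eq, Pi.smul_apply, smul_eq_mul, map_mul, mul_assoc,
          ← Finset.mul_sum] at *
        rw [hx, mul_zero] }
  have hN : ∀ h, h ∈ N ↔ ∑ j, evalQ a (h j) * v j = 0 := fun h => Iff.rfl
  refine ⟨N, ?_, hN⟩
  intro m f hf
  simp only [hN, evalQ_eq] at hf ⊢
  set y : Fin m → Quaternion ℝ := fun i => ∑ j, qmap (MvPolynomial.eval a) (f i j) * v j with hy
  have hstar : ∀ q : Quaternion (MvPolynomial (Fin d) ℝ),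
      qmap (MvPolynomial.eval a) (star q) = star (qmap (MvPolynomial.eval a) q) := by
    intro q; ext <;> simp
  have h1 : ∀ j, ∑ i, star (qmap (MvPolynomial.eval a) (f i j)) * y i = 0 := by
    intro j
    rw [← hf j]
    simp only [Finset.sum_apply, Pi.smul_apply, smul_eq_mul, map_sum, map_mul, hstar, hy,
      Finset.mul_sum, Finset.sum_mul, mul_assoc]
    rw [Finset.sum_comm]
  have h2 : ∑ i, star (y i) * y i = 0 := by
    have : ∑ i, star (y i) * y i = ∑ j, star (v j) *
        ∑ i, star (qmap (MvPolynomial.eval a) (f i j)) * y i := by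
      simp only [Finset.mul_sum]
      rw [Finset.sum_comm]
      refine Finset.sum_congr rfl fun i _ => ?_
      conv_lhs => rw [hy]
      simp only [star_sum, star_mul, Finset.sum_mul, mul_assoc]
      rfl
    rw [this]
    simp [h1]
  have h3 : ∑ i, Quaternion.normSq (y i) = 0 := by
    have hinj : Function.Injective (algebraMap ℝ (Quaternion ℝ)) := (algebraMap ℝ (Quaternion ℝ)).injective
    rw [← map_eq_zero_iff _ hinj, map_sum, ← h2]
    refine Finset.sum_congr rfl fun i _ => ?_
    rw [Quaternion.star_mul_self]
    rfl
  intro i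
  have h4 := (Finset.sum_eq_zero_iff_of_nonneg (fun i _ => Quaternion.normSq_nonneg)).1 h3 i
    (Finset.mem_univ _)
  exact Quaternion.normSq_eq_zero.1 h4
end G
end VQN

/-- **Corollary 3: vector version of the First Quaternionic Nullstellensatz.** -/
theorem vector_quaternionic_nullstellensatz (d n m : ℕ)
    (g : Fin m → (Fin n → Quaternion (MvPolynomial (Fin d) ℝ)))
    (f : Fin n → Quaternion (MvPolynomial (Fin d) ℝ)) :
    (∀ (a : Fin d → ℝ) (v : Fin n → Quaternion ℝ),
        (∀ i, ∑ j, evalQ a (g i j) * v j = 0) → ∑ j, evalQ a (f j) * v j = 0) ↔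
      (∀ N : Submodule (Quaternion (MvPolynomial (Fin d) ℝ))
          (Fin n → Quaternion (MvPolynomial (Fin d) ℝ)),
        N.IsRealSubmoduleStar → (∀ i, g i ∈ N) → f ∈ N) := by
  constructor
  · intro h N hN hg
    exact VQN.hard g f h N hN hg
  · intro h a v hv
    obtain ⟨N, h1, h2⟩ := VQN.easy a v
    exact (h2 f).1 (h N h1 (fun i => (h2 _).2 (hv i)))
end

section
/- (Theorem 1, commutative case) Let R be a commutative ring and N a submodule of R^n. The following are equivalent: (1) N is semiprime; (2) N equals the intersection of all prime submodules of R^n containing N; (3) N equals the intersection of all submodules of the form C_{p,u}, where p ranges over prime ideals of R and u over elements of R^n ∖ p^n, that contain N. (In (2) and (3) an empty intersection is taken to be all of R^n.) -/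
/-- A submodule `N` of `A^n` is *semiprime* if for every `f ∈ A^n` such that
`(f j * a) • f ∈ N` for every `a ∈ A` and every coordinate `j`, one has `f ∈ N`. -/
def Submodule.IsSemiprimeSubmodule {A : Type*} [Ring A] {n : ℕ}
    (N : Submodule A (Fin n → A)) : Prop :=
  ∀ f : Fin n → A, (∀ (j : Fin n) (a : A), (f j * a) • f ∈ N) → f ∈ N

/-- A submodule `N` of a module `M` is *prime* if for every scalar `a` and `m ∈ M` with
`(a * x) • m ∈ N` for all `x`, either `a • M ⊆ N` or `m ∈ N`. -/
def Submodule.IsPrimeSubmodule {A : Type*} [Ring A] {M : Type*} [AddCommGroup M] [Module A M]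
    (N : Submodule A M) : Prop :=
  ∀ (a : A) (m : M), (∀ x : A, (a * x) • m ∈ N) → (∀ m' : M, a • m' ∈ N) ∨ m ∈ N

/-- For an ideal `p` of a commutative ring `R` and `u ∈ R^n`, the submodule
`C_{p,u} = {m ∈ R^n | m 0 * u 0 + ⋯ + m (n-1) * u (n-1) ∈ p}`. -/
def Cpu {R : Type*} [CommRing R] {n : ℕ} (p : Ideal R) (u : Fin n → R) :
    Submodule R (Fin n → R) where
  carrier := {m | (∑ j, m j * u j) ∈ p}
  add_mem' := by
    intro a b ha hb
    simp only [Set.mem_setOf_eq, Pi.add_apply, add_mul, Finset.sum_add_distrib] at *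
    exact add_mem ha hb
  zero_mem' := by simp
  smul_mem' := by
    intro c m hm
    simp only [Set.mem_setOf_eq, Pi.smul_apply, smul_eq_mul, mul_assoc, ← Finset.mul_sum] at *
    exact Ideal.mul_mem_left _ _ hm

theorem aux_cpu_prime {R : Type*} [CommRing R] {n : ℕ} (p : Ideal R) (u : Fin n → R)
    (hp : p.IsPrime) : (Cpu p u).IsPrimeSubmodule := by
  intro a m h
  have key : ∀ (b : R) (v : Fin n → R), b • v ∈ Cpu p u ↔ b * (∑ j, v j * u j) ∈ p := by
    intro b v
    change (∑ j, (b • v) j * u j) ∈ p ↔ _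
    simp only [Pi.smul_apply, smul_eq_mul, mul_assoc, ← Finset.mul_sum]
  have h1 := (key _ _).1 (h 1)
  rw [mul_one] at h1
  rcases hp.mem_or_mem h1 with h2 | h2
  · exact Or.inl fun m' => (key _ _).2 (Ideal.mul_mem_right _ _ h2)
  · exact Or.inr h2

theorem aux_prime_semiprime {R : Type*} [CommRing R] {n : ℕ} (P : Submodule R (Fin n → R))
    (hP : P.IsPrimeSubmodule) : P.IsSemiprimeSubmodule := by
  intro f hf
  by_contra hn
  apply hn
  have h : ∀ j, f j • (Pi.single j 1 : Fin n → R) ∈ P := fun j =>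
    (hP (f j) f (hf j)).resolve_right hn _
  rw [pi_eq_sum_univ' f]
  refine sum_mem fun j _ => ?_
  exact h j

theorem aux_sInf_semiprime {R : Type*} [CommRing R] {n : ℕ} (S : Set (Submodule R (Fin n → R)))
    (hS : ∀ P ∈ S, P.IsPrimeSubmodule) : (sInf S).IsSemiprimeSubmodule := by
  intro f hf
  rw [Submodule.mem_sInf]
  intro P hP
  exact aux_prime_semiprime P (hS P hP) f fun j a => (Submodule.mem_sInf.1 (hf j a)) P hP

theorem aux_min {R : Type*} [CommRing R] (I p : Ideal R) (hI : I.IsRadical)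
    (hp : p ∈ I.minimalPrimes) (x : R) (hx : x ∈ p) : ∃ t, t ∉ p ∧ t * x ∈ I := by
  have := hp.1.1
  by_contra! hcon
  obtain ⟨q, hq, hIq, hd⟩ := Ideal.exists_le_prime_disjoint I (p.primeCompl ⊔ Submonoid.powers x)
    (by
      rw [Set.disjoint_left]
      intro y hy hy2
      obtain ⟨t, ht, z, ⟨k, rfl⟩, rfl⟩ := Submonoid.mem_sup.1 hy2
      refine hcon t ht (hI ⟨k + 1, ?_⟩)
      have : (t * x) ^ (k + 1) = (t ^ k * x) * (t * x ^ k) := by ring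
      rw [this]
      exact I.mul_mem_left _ hy)
  rw [Set.disjoint_left] at hd
  have hqp : q ≤ p := by
    intro y hy
    by_contra hyp
    exact hd hy (Submonoid.mem_sup_left hyp)
  exact hd (hp.2 ⟨hq, hIq⟩ hqp hx) (Submonoid.mem_sup_right (Submonoid.mem_powers x))

theorem aux_key {R : Type*} [CommRing R] {n : ℕ} (N : Submodule R (Fin n → R))
    (hN : N.IsSemiprimeSubmodule) (f : Fin n → R) (hf : f ∉ N) :
    ∃ p : Ideal R, p.IsPrime ∧ ∀ s ∉ p, ∀ ν ∈ N, ¬ ∀ i, s * f i - ν i ∈ p := by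
  let I : Ideal R := N.comap (LinearMap.toSpanSingleton R _ f)
  have memI : ∀ a, a ∈ I ↔ a • f ∈ N := fun a => Iff.rfl
  have hrad : I.IsRadical := by
    rw [Ideal.isRadical_iff_pow_one_lt 2 (by norm_num)]
    intro a ha
    rw [memI] at ha ⊢
    apply hN
    intro j b
    have : ((a • f) j * b) • a • f = (f j * b) • (a ^ 2) • f := by
      simp only [smul_smul, Pi.smul_apply, smul_eq_mul]; congr 1; ring
    rw [this]
    exact N.smul_mem _ ha
  have hne : I ≠ ⊤ := by
    intro h
    have := (Ideal.eq_top_iff_one I).1 h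
    rw [memI, one_smul] at this
    exact hf this
  obtain ⟨p, hp⟩ := Ideal.nonempty_minimalPrimes hne
  have hpp := hp.1.1
  refine ⟨p, hpp, ?_⟩
  intro s hs ν hν hg
  choose t ht htI using fun i => aux_min I p hrad hp _ (hg i)
  let T := ∏ i, t i
  have hT : T ∉ p := fun h => by
    obtain ⟨i, -, hi⟩ := (hpp.prod_mem_iff).1 h
    exact ht i hi
  have hTI : ∀ i, T * (s * f i - ν i) ∈ I := by
    intro i
    obtain ⟨c, hc⟩ := Finset.dvd_prod_of_mem t (Finset.mem_univ i)
    have : T * (s * f i - ν i) = c * (t i * (s * f i - ν i)) := by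
      change (∏ i, t i) * _ = _
      rw [hc]; ring
    rw [this]
    exact I.mul_mem_left _ (htI i)
  have hgN : T • (s • f - ν) ∈ N := by
    apply hN
    intro j b
    have e : ((T • (s • f - ν)) j * b) • (T • (s • f - ν)) =
      (b * T * s) • (T * (s * f j - ν j)) • f - (T * (s * f j - ν j) * b * T) • ν := by
      ext i
      simp; ring
    rw [e]
    exact N.sub_mem (N.smul_mem _ (hTI j)) (N.smul_mem _ hν)
  have : (T * s) • f ∈ N := by
    have e : (T * s) • f = T • (s • f - ν) + T • ν := by
      ext i; simp; ring
    rw [e]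
    exact N.add_mem hgN (N.smul_mem _ hν)
  rcases hpp.mem_or_mem (hp.1.2 this) with h | h
  · exact hT h
  · exact hs h

theorem aux_frac {R : Type*} [CommRing R] (p : Ideal R) [p.IsPrime] (c : p.ResidueField) :
    ∃ a b : R, b ∉ p ∧ algebraMap R p.ResidueField b * c = algebraMap R p.ResidueField a := by
  obtain ⟨x, y, hy, h⟩ := IsFractionRing.div_surjective (A := R ⧸ p) c
  obtain ⟨a, rfl⟩ := Ideal.Quotient.mk_surjective x
  obtain ⟨b, rfl⟩ := Ideal.Quotient.mk_surjective y
  have hb : b ∉ p := fun hb => nonZeroDivisors.ne_zero hy (Ideal.Quotient.eq_zero_iff_mem.2 hb)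
  refine ⟨a, b, hb, ?_⟩
  have hb' : algebraMap R p.ResidueField b ≠ 0 := fun h0 =>
    hb (Ideal.algebraMap_residueField_eq_zero.1 h0)
  rw [← h]
  change algebraMap R p.ResidueField b *
    (algebraMap R p.ResidueField a / algebraMap R p.ResidueField b) = _
  field_simp

theorem aux_sep {R : Type*} [CommRing R] {n : ℕ} (N : Submodule R (Fin n → R))
    (hN : N.IsSemiprimeSubmodule) (f : Fin n → R) (hf : f ∉ N) :
    ∃ (p : Ideal R) (u : Fin n → R), p.IsPrime ∧ (∃ j, u j ∉ p) ∧ N ≤ Cpu p u ∧ f ∉ Cpu p u := by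
  obtain ⟨p, hp, H⟩ := aux_key N hN f hf
  let K := p.ResidueField
  let π : R →+* K := algebraMap R p.ResidueField
  have hπ : ∀ x, π x = 0 ↔ x ∈ p := fun x => Ideal.algebraMap_residueField_eq_zero
  let W : Submodule K (Fin n → K) := Submodule.span K ((fun m : Fin n → R => fun i => π (m i)) '' N)
  have hW : ∀ x ∈ W, ∃ s ∉ p, ∃ ν ∈ N, ∀ i, π s * x i = π (ν i) := by
    intro x hx
    induction hx using Submodule.span_induction with
    | mem x hx =>
      obtain ⟨m, hm, rfl⟩ := hx
      exact ⟨1, fun h => hp.ne_top ((Ideal.eq_top_iff_one p).2 h), m, hm, fun i => by simp⟩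
    | zero => exact ⟨1, fun h => hp.ne_top ((Ideal.eq_top_iff_one p).2 h), 0, N.zero_mem,
        fun i => by simp⟩
    | add x y _ _ hx hy =>
      obtain ⟨s, hs, ν, hν, h1⟩ := hx
      obtain ⟨t, ht, μ, hμ, h2⟩ := hy
      refine ⟨s * t, fun h => (hp.mem_or_mem h).elim hs ht, t • ν + s • μ,
        N.add_mem (N.smul_mem _ hν) (N.smul_mem _ hμ), fun i => ?_⟩
      simp only [Pi.add_apply, Pi.smul_apply, smul_eq_mul, map_add, map_mul, ← h1, ← h2]
      ring
    | smul c x _ hx =>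
      obtain ⟨s, hs, ν, hν, h1⟩ := hx
      obtain ⟨a, b, hb, hab⟩ := aux_frac p c
      change π b * c = π a at hab
      refine ⟨s * b, fun h => (hp.mem_or_mem h).elim hs hb, a • ν, N.smul_mem _ hν, fun i => ?_⟩
      simp only [Pi.smul_apply, smul_eq_mul, map_mul, ← h1, ← hab]
      ring
  have hfW : (fun i => π (f i)) ∉ W := by
    intro h
    obtain ⟨s, hs, ν, hν, h1⟩ := hW _ h
    refine H s hs ν hν fun i => ?_
    rw [← hπ, map_sub, map_mul, h1, sub_self]
  obtain ⟨φ, hφf, hφW⟩ := Submodule.exists_dual_map_eq_bot_of_notMem hfW inferInstance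
  choose a b hb hab using fun i => aux_frac p (φ (Pi.single i 1))
  let D := ∏ i, b i
  have hD : D ∉ p := fun h => by
    obtain ⟨i, -, hi⟩ := (hp.prod_mem_iff).1 h
    exact hb i hi
  have hu : ∀ i, ∃ u : R, π u = π D * φ (Pi.single i 1) := by
    intro i
    obtain ⟨c, hc⟩ := Finset.dvd_prod_of_mem b (Finset.mem_univ i)
    refine ⟨c * a i, ?_⟩
    have h1 : π (b i) * φ (Pi.single i 1) = π (a i) := hab i
    change _ = π (∏ i, b i) * _
    rw [hc, map_mul, map_mul, ← h1]
    ring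
  choose u hu using hu
  have hmem : ∀ m : Fin n → R, m ∈ Cpu p u ↔ φ (fun i => π (m i)) = 0 := by
    intro m
    change (∑ j, m j * u j) ∈ p ↔ _
    have e : φ (fun i => π (m i)) = ∑ i, π (m i) * φ (Pi.single i 1) := by
      conv_lhs => rw [LinearMap.pi_apply_eq_sum_univ φ]
      refine Finset.sum_congr rfl fun i _ => ?_
      rw [smul_eq_mul]
      congr 2
      ext j
      simp [Pi.single_apply, eq_comm]
    have e2 : π (∑ j, m j * u j) = π D * φ (fun i => π (m i)) := by
      rw [e, map_sum, Finset.mul_sum]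
      refine Finset.sum_congr rfl fun i _ => ?_
      rw [map_mul, hu]; ring
    rw [← hπ, e2, mul_eq_zero, hπ]
    exact or_iff_right hD
  have hfC : f ∉ Cpu p u := fun h => hφf ((hmem f).1 h)
  refine ⟨p, u, hp, ?_, ?_, hfC⟩
  · by_contra! hall
    exact hfC (Ideal.sum_mem p fun j _ => p.mul_mem_left _ (hall j))
  · intro m hm
    rw [hmem]
    have : φ (fun i => π (m i)) ∈ W.map φ :=
      Submodule.mem_map_of_mem (Submodule.subset_span ⟨m, hm, rfl⟩)
    rwa [hφW, Submodule.mem_bot] at this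

/-- **Theorem 1 (commutative case).** For a submodule `N` of `R^n` over a commutative ring,
the following are equivalent: (1) `N` is semiprime; (2) `N` is the intersection of all
prime submodules containing it; (3) `N` is the intersection of all submodules of the form
`C_{p,u}` (with `p` prime and `u ∉ p^n`) containing it. -/
theorem semiprime_tfae {R : Type*} [CommRing R] {n : ℕ} (N : Submodule R (Fin n → R)) :
    (N.IsSemiprimeSubmodule ↔
        N = sInf {P : Submodule R (Fin n → R) | P.IsPrimeSubmodule ∧ N ≤ P}) ∧
      (N.IsSemiprimeSubmodule ↔
        N = sInf {P : Submodule R (Fin n → R) |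
          (∃ (p : Ideal R) (u : Fin n → R), p.IsPrime ∧ (∃ j, u j ∉ p) ∧ P = Cpu p u) ∧
            N ≤ P}) := by
  have hsep : N.IsSemiprimeSubmodule → ∀ f ∉ N, ∃ P : Submodule R (Fin n → R),
      (∃ (p : Ideal R) (u : Fin n → R), p.IsPrime ∧ (∃ j, u j ∉ p) ∧ P = Cpu p u) ∧
        N ≤ P ∧ f ∉ P := by
    intro hN f hf
    obtain ⟨p, u, hp, hu, hle, hfp⟩ := aux_sep N hN f hf
    exact ⟨Cpu p u, ⟨p, u, hp, hu, rfl⟩, hle, hfp⟩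
  refine ⟨⟨fun hN => ?_, fun h => ?_⟩, ⟨fun hN => ?_, fun h => ?_⟩⟩
  · refine le_antisymm (le_sInf fun P hP => hP.2) fun f hf => ?_
    by_contra hfN
    obtain ⟨P, ⟨p, u, hp, -, rfl⟩, hle, hfP⟩ := hsep hN f hfN
    exact hfP (Submodule.mem_sInf.1 hf _ ⟨aux_cpu_prime p u hp, hle⟩)
  · rw [h]
    exact aux_sInf_semiprime _ fun P hP => hP.1
  · refine le_antisymm (le_sInf fun P hP => hP.2) fun f hf => ?_
    by_contra hfN
    obtain ⟨P, hP, hle, hfP⟩ := hsep hN f hfN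
    exact hfP (Submodule.mem_sInf.1 hf _ ⟨hP, hle⟩)
  · rw [h]
    refine aux_sInf_semiprime _ ?_
    rintro P ⟨⟨p, u, hp, -, rfl⟩, -⟩
    exact aux_cpu_prime p u hp
end

section
/- (Theorem 2, general implication (1) ⇒ (2)) Let A be a ring with involution * and let N be a real submodule of the left A-module A^n. Then N is semiprime, and the two-sided ideal (N : A^n) = {a ∈ A | a·A^n ⊆ N} is real, i.e., whenever a₁*a₁ + ⋯ + a_k*a_k ∈ (N : A^n) for a₁, …, a_k ∈ A, then a₁, …, a_k ∈ (N : A^n). -/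
/-- **Theorem 2, implication (1) ⇒ (2), for a general ring with involution.**
If `N` is a real submodule of `A^n` then `N` is semiprime and the two-sided ideal
`(N : A^n) = {a | a • A^n ⊆ N}` is real:  whenever
`star (a 0) * a 0 + ⋯ + star (a (k-1)) * a (k-1) ∈ (N : A^n)`, each `a i ∈ (N : A^n)`. -/
theorem real_submodule_semiprime_and_colon_real {A : Type*} [Ring A] [StarRing A] {n : ℕ}
    (N : Submodule A (Fin n → A)) (hN : N.IsRealSubmoduleStar) :
    N.IsSemiprimeSubmodule ∧
      (∀ (k : ℕ) (a : Fin k → A),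
        (∀ m : Fin n → A, (∑ i, star (a i) * a i) • m ∈ N) →
          ∀ i, ∀ m : Fin n → A, a i • m ∈ N) := by
  have one : ∀ g : Fin n → A, (∀ j, star (g j) • g ∈ N) → g ∈ N := fun g hg =>
    hN 1 (fun _ => g) (fun j => by simpa using hg j) 0
  refine ⟨fun f hf => ?_, fun k a ha i m => ?_⟩
  · refine one f fun j => one _ fun l => ?_
    have h := N.smul_mem (star (f l)) (hf j (star (f j)))
    have e : star ((star (f j) • f) l) • star (f j) • f
        = star (f l) • (f j * star (f j)) • f := by
      simp [smul_smul, mul_assoc]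
    rw [e]
    exact h
  · refine hN k (fun i => a i • m) (fun j => ?_) i
    have h := N.smul_mem (star (m j)) (ha m)
    have e : (∑ i, star ((a i • m) j) • a i • m)
        = star (m j) • (∑ i, star (a i) * a i) • m := by
      rw [Finset.sum_smul, Finset.smul_sum]
      refine Finset.sum_congr rfl fun i _ => ?_
      simp [smul_smul, mul_assoc]
    exact e ▸ h
end
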